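/- arXiv:2407.15183 — 5 statements merged into one kernel-verified Lean document; each statement's English description precedes it below -/
import Mathlib

section
/- Let m, n, s, k be four integers such that 3 ≤ s ≤ n, 3 ≤ k ≤ m, m·s = n·k and n·k ≡ 0 or 3 (mod 4). If k is odd, k ≥ 7·gcd(s,k), and s ∉ {3, 5, 6, 10}, then there exists an integer Heffter array H(m, n; s, k). -/
/-- An integer Heffter array `H(m, n; s, k)`: an `m × n` partially filled array
(empty cells encoded by `0`) with entries in `{±1, …, ±(n·k)}`, such that each row
has exactly `s` filled cells, each column has exactly `k` filled cells, no two
entries agree in absolute value, and every row and column sums to `0`. -/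
def IsIntegerHeffterArray (m n s k : ℕ) (A : Matrix (Fin m) (Fin n) ℤ) : Prop :=
  (∀ i, (Finset.univ.filter (fun j => A i j ≠ 0)).card = s) ∧
  (∀ j, (Finset.univ.filter (fun i => A i j ≠ 0)).card = k) ∧
  (∀ i j, A i j ≠ 0 → 1 ≤ |A i j| ∧ |A i j| ≤ (n : ℤ) * (k : ℤ)) ∧
  (∀ i j i' j', A i j ≠ 0 → A i' j' ≠ 0 → |A i j| = |A i' j'| → (i, j) = (i', j')) ∧
  (∀ i, ∑ j, A i j = 0) ∧
  (∀ j, ∑ i, A i j = 0)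

namespace HeffterAux

/-! ### Encoded arrays -/

/-- `I x n` is the multiset `{x+1, …, x+n}`. -/
def I (x n : ℕ) : Multiset ℕ := (Multiset.range n).map (fun i => x + 1 + i)

/-- `Arr a b V`: there is an `a × b` integer array with zero row and column sums whose
absolute values form the multiset `V`. -/
def Arr (a b : ℕ) (V : Multiset ℕ) : Prop :=
  ∃ A : Fin a → Fin b → ℤ, (∀ i, ∑ j, A i j = 0) ∧ (∀ j, ∑ i, A i j = 0) ∧
    ∑ i, ∑ j, ({(A i j).natAbs} : Multiset ℕ) = V

/-- Value of a code: `±(100 t + o)` stands for `±(base t + o)`. -/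
def cval (base : ℕ → ℕ) (z : ℤ) : ℤ := z.sign * ((base (z.natAbs / 100) + z.natAbs % 100 : ℕ) : ℤ)

/-- Signed number of codes of type `t` in a line. -/
def coef {n : ℕ} (x : Fin n → ℤ) (t : ℕ) : ℤ := ∑ j, if (x j).natAbs / 100 = t then (x j).sign else 0

/-- Zero-sum criterion on a line of codes. -/
def LineOK {n : ℕ} (δ : ℤ) (x : Fin n → ℤ) : Prop :=
  (∀ j, (x j).natAbs / 100 < 6) ∧ coef x 5 = 0 ∧ coef x 1 + coef x 2 = 0 ∧ coef x 3 + coef x 4 = 0 ∧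
  coef x 0 + coef x 2 + coef x 4 = 0 ∧
  (∑ j, (x j).sign * (((x j).natAbs % 100 : ℕ) : ℤ)) + (coef x 2 + coef x 4) * δ = 0

instance {n : ℕ} (δ : ℤ) (x : Fin n → ℤ) : Decidable (LineOK δ x) := by
  unfold LineOK; infer_instance

def mkBase (s u1 u2 w δ : ℕ) (t : ℕ) : ℕ :=
  match t with
  | 0 => s
  | 1 => u1
  | 2 => u1 + s + δ
  | 3 => u2
  | 4 => u2 + s + δ
  | _ => w

lemma line_sum {n : ℕ} (s u1 u2 w δ : ℕ) (x : Fin n → ℤ) (h : LineOK δ x) :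
    ∑ j, cval (mkBase s u1 u2 w δ) (x j) = 0 := by
  obtain ⟨h6, h5, h12, h34, h0, hK⟩ := h
  have key : ∀ j, cval (mkBase s u1 u2 w δ) (x j) =
      (∑ t ∈ Finset.range 6, (if (x j).natAbs / 100 = t then (x j).sign else 0) *
        (mkBase s u1 u2 w δ t : ℤ)) + (x j).sign * (((x j).natAbs % 100 : ℕ) : ℤ) := by
    intro j
    have hj := h6 j
    unfold cval
    have : ∀ t ∈ Finset.range 6, (if (x j).natAbs / 100 = t then (x j).sign else 0) *
        (mkBase s u1 u2 w δ t : ℤ) = if (x j).natAbs / 100 = t then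
          (x j).sign * (mkBase s u1 u2 w δ t : ℤ) else 0 := by
      intro t _; split_ifs <;> simp
    rw [Finset.sum_congr rfl this, Finset.sum_ite_eq, if_pos (Finset.mem_range.2 hj)]
    push_cast; ring
  have hc : ∀ t, ∑ j, (if (x j).natAbs / 100 = t then (x j).sign else 0) *
        (mkBase s u1 u2 w δ t : ℤ) = coef x t * (mkBase s u1 u2 w δ t : ℤ) := by
    intro t; rw [coef, Finset.sum_mul]
  rw [Finset.sum_congr rfl (fun j _ => key j), Finset.sum_add_distrib, Finset.sum_comm,
    Finset.sum_congr rfl (fun t _ => hc t)]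
  simp only [Finset.sum_range_succ, Finset.sum_range_zero, mkBase, Nat.cast_add]
  linear_combination (w : ℤ) * h5 + (u1 : ℤ) * h12 + (u2 : ℤ) * h34 + (s : ℤ) * h0 + hK

/-- Decoding of absolute values of codes. -/
def dec (base : ℕ → ℕ) (e : ℕ) : ℕ := base (e / 100) + e % 100

lemma arr_of_code {a b : ℕ} (Z : Matrix (Fin a) (Fin b) ℤ) (s u1 u2 w δ : ℕ) (E : Multiset ℕ)
    (hr : ∀ i, LineOK δ (fun j => Z i j)) (hc : ∀ j, LineOK δ (fun i => Z i j))
    (hz : ∀ i, ∀ j, 0 < (Z i j).natAbs)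
    (hE : ∑ i, ∑ j, ({(Z i j).natAbs} : Multiset ℕ) = E) :
    Arr a b (E.map (dec (mkBase s u1 u2 w δ))) := by
  refine ⟨fun i j => cval (mkBase s u1 u2 w δ) (Z i j), fun i => line_sum s u1 u2 w δ _ (hr i),
    fun j => line_sum s u1 u2 w δ _ (hc j), ?_⟩
  rw [← hE, ← Multiset.coe_mapAddMonoidHom, map_sum]
  refine Finset.sum_congr rfl fun i _ => ?_
  rw [map_sum]
  refine Finset.sum_congr rfl fun j _ => ?_
  have := Int.natAbs_pos.1 (hz i j)
  rw [Multiset.coe_mapAddMonoidHom, Multiset.map_singleton]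
  unfold cval dec
  rw [Int.natAbs_mul, Int.natAbs_sign_of_ne_zero this, one_mul, Int.natAbs_natCast]

lemma code_I (base : ℕ → ℕ) (t o n : ℕ) (h : o + n < 100) :
    (((List.range' (100 * t + o + 1) n : List ℕ) : Multiset ℕ)).map (dec base) = I (base t + o) n := by
  unfold I
  rw [List.range'_eq_map_range, ← Multiset.coe_range, Multiset.map_coe, Multiset.map_coe, List.map_map]
  congr 1
  apply List.map_congr_left
  intro i hi
  have hi := List.mem_range.1 hi
  have h1 : (100 * t + o + 1 + i) / 100 = t := by omega
  have h2 : (100 * t + o + 1 + i) % 100 = o + 1 + i := by omega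
  simp [dec, h1, h2]; omega

/-- Codes `100 t + o + 1, …, 100 t + o + n`. -/
def cod (t o n : ℕ) : Multiset ℕ := (List.range' (100 * t + o + 1) n : List ℕ)

lemma code_I' (base : ℕ → ℕ) (t o n : ℕ) (h : o + n < 100) :
    (cod t o n).map (dec base) = I (base t + o) n := code_I base t o n h

def block4 : Matrix (Fin 4) (Fin 4) ℤ := !![
  -514, 507, -502, 509;
  511, -508, 501, -504;
  -503, 513, -515, 505;
  506, -512, 516, -510]

def strip7 : Matrix (Fin 7) (Fin 4) ℤ := !![
  3, -4, -1, 2;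
  101, -301, -102, 302;
  -202, 402, 201, -401;
  512, -508, 505, -509;
  -511, 515, -506, 502;
  513, -516, 504, -501;
  -514, 510, -503, 507]

def strip9 : Matrix (Fin 9) (Fin 4) ℤ := !![
  2, -1, -4, 3;
  101, -301, -102, 302;
  -202, 402, 201, -401;
  507, -516, 513, -504;
  -510, 517, -522, 515;
  511, -521, 518, -508;
  -514, 503, -501, 512;
  509, -505, 519, -523;
  -502, 520, -524, 506]

def g77 : Matrix (Fin 7) (Fin 7) ℤ := !![
  5, 105, 525, -504, 502, -527, -206;
  -207, 4, 103, 509, -521, 524, -512;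
  -505, -204, 3, 107, 518, -522, 503;
  514, -523, -203, 1, 101, 520, -510;
  -528, 517, -513, -202, 6, 104, 516;
  515, -506, 511, -519, -205, 2, 102;
  106, 507, -526, 508, -501, -201, 7]

def a77 : Matrix (Fin 7) (Fin 7) ℤ := !![
  2, 105, 510, -512, 524, -515, -207;
  -201, 7, 106, 529, -518, 509, -525;
  -506, -204, 1, 103, 504, -517, 526;
  505, -520, -202, 3, 101, 523, -503;
  -516, 527, -519, -206, 6, 107, 508;
  521, -522, 513, -511, -203, 5, 104;
  102, 514, -502, 501, -507, -205, 4]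

def b77 : Matrix (Fin 7) (Fin 7) ℤ := !![
  2, 101, 503, -508, 526, -513, -204;
  -203, 6, 105, 524, -519, 515, -521;
  -509, -207, 1, 102, 512, -514, 522;
  507, -516, -201, 4, 107, 517, -511;
  -523, 525, -506, -205, 3, 103, 510;
  527, -504, 505, -528, -202, 5, 104;
  106, 502, -500, 518, -520, -206, 7]

def g79 : Matrix (Fin 7) (Fin 9) ℤ := !![
  1, 108, 518, -528, 535, -516, -207, 7, -9;
  -206, 6, 104, 503, -510, 523, -506, 102, -107;
  -533, -204, 5, 105, 507, -509, 532, -203, 209;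
  527, -530, -202, 4, 103, 505, -526, 529, -501;
  -520, 536, -525, -201, 3, 106, 513, -517, 514;
  531, -522, 511, -508, -205, 8, 101, 512, -519;
  109, 515, -502, 534, -524, -208, 2, -521, 504]

def a79 : Matrix (Fin 7) (Fin 9) ℤ := !![
  4, 109, 533, -529, 520, -532, -203, 5, -7;
  -209, 3, 104, 505, -512, 531, -525, 106, -103;
  -524, -206, 2, 107, 513, -507, 514, -207, 208;
  508, -519, -201, 9, 102, 502, -517, 526, -510;
  -515, 501, -537, -202, 8, 105, 522, -516, 534;
  535, -518, 503, -511, -204, 6, 108, 509, -528;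
  101, 530, -504, 521, -527, -205, 1, -523, 506]

def b79 : Matrix (Fin 7) (Fin 9) ℤ := !![
  3, 107, 510, -533, 529, -502, -209, 1, -6;
  -203, 2, 104, 514, -524, 515, -511, 106, -103;
  -522, -202, 8, 105, 517, -534, 527, -205, 206;
  508, -504, -204, 4, 102, 519, -536, 516, -505;
  -500, 525, -523, -207, 5, 101, 513, -532, 518;
  506, -531, 512, -509, -201, 9, 109, 535, -530;
  108, 503, -507, 526, -528, -208, 7, -521, 520]

def g99 : Matrix (Fin 9) (Fin 9) ℤ := !![
  4, 105, 521, -536, 553, -546, 531, -527, -205;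
  -204, 2, 101, 503, -525, 551, -542, 515, -501;
  -514, -208, 9, 109, 507, -549, 544, -537, 539;
  554, -541, -209, 1, 106, 530, -529, 538, -550;
  -508, 528, -552, -202, 8, 102, 510, -504, 518;
  502, -517, 532, -513, -207, 7, 104, 512, -520;
  -547, 548, -534, 545, -526, -203, 5, 103, 509;
  505, -523, 543, -540, 519, -516, -201, 6, 107;
  108, 506, -511, 533, -535, 524, -522, -206, 3]

def a99 : Matrix (Fin 9) (Fin 9) ℤ := !![
  6, 107, 542, -524, 547, -527, 506, -541, -207;
  -206, 5, 101, 512, -513, 520, -507, 532, -535;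
  -517, -202, 9, 108, 537, -528, 514, -533, 521;
  515, -553, -204, 3, 104, 529, -501, 550, -534;
  -509, 508, -530, -209, 1, 102, 538, -543, 551;
  526, -522, 516, -511, -203, 4, 103, 536, -540;
  -518, 549, -552, 510, -539, -201, 8, 106, 546;
  503, -502, 531, -505, 523, -545, -208, 7, 105;
  109, 519, -504, 525, -548, 555, -544, -205, 2]

def b99 : Matrix (Fin 9) (Fin 9) ℤ := !![
  8, 106, 505, -516, 537, -508, 509, -528, -204;
  -206, 4, 107, 529, -545, 534, -512, 547, -549;
  -511, -201, 3, 101, 532, -551, 541, -531, 526;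
  502, -503, -202, 2, 109, 536, -514, 527, -548;
  -533, 540, -523, -209, 1, 104, 510, -520, 539;
  543, -521, 550, -554, -205, 5, 102, 507, -518;
  -546, 519, -504, 517, -538, -203, 6, 105, 553;
  544, -535, 515, -513, 524, -530, -208, 9, 103;
  108, 500, -542, 552, -506, 522, -525, -207, 7]

lemma arr_block4 (w : ℕ) : Arr 4 4 (I w 16) := by
  have := arr_of_code block4 0 0 0 w 0 (cod 5 0 16) (by decide +kernel) (by decide +kernel)
    (by decide +kernel) (by decide +kernel)
  simpa [code_I', mkBase] using this

lemma arr_strip7 (s u1 u2 w : ℕ) : Arr 7 4 (I s 4 + I u1 2 + I (u1 + s + 2) 2 + I u2 2 +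
    I (u2 + s + 2) 2 + I w 16) := by
  have := arr_of_code strip7 s u1 u2 w 2
    (cod 0 0 4 + cod 1 0 2 + cod 2 0 2 + cod 3 0 2 + cod 4 0 2 + cod 5 0 16)
    (by decide +kernel) (by decide +kernel) (by decide +kernel) (by decide +kernel)
  simpa [code_I', mkBase] using this

lemma arr_strip9 (s u1 u2 w : ℕ) : Arr 9 4 (I s 4 + I u1 2 + I (u1 + s + 2) 2 + I u2 2 +
    I (u2 + s + 2) 2 + I w 24) := by
  have := arr_of_code strip9 s u1 u2 w 2
    (cod 0 0 4 + cod 1 0 2 + cod 2 0 2 + cod 3 0 2 + cod 4 0 2 + cod 5 0 24)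
    (by decide +kernel) (by decide +kernel) (by decide +kernel) (by decide +kernel)
  simpa [code_I', mkBase] using this

lemma arr_g77 (s u w : ℕ) : Arr 7 7 (I s 7 + I u 7 + I (u + s) 7 +
    (I w 28)) := by
  have := arr_of_code g77 s u 0 w 0 (cod 0 0 7 + cod 1 0 7 + cod 2 0 7 + (cod 5 0 28))
    (by decide +kernel) (by decide +kernel) (by decide +kernel) (by decide +kernel)
  simpa [code_I', mkBase] using this

lemma arr_a77 (s u w : ℕ) : Arr 7 7 (I s 7 + I u 7 + I (u + s + 7) 7 +
    (I w 27 + I (w + 28) 1)) := by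
  have := arr_of_code a77 s u 0 w 7 (cod 0 0 7 + cod 1 0 7 + cod 2 0 7 + (cod 5 0 27 + cod 5 28 1))
    (by decide +kernel) (by decide +kernel) (by decide +kernel) (by decide +kernel)
  simpa [code_I', mkBase] using this

lemma arr_b77 (s u w : ℕ) : Arr 7 7 (I s 7 + I u 7 + I (u + s + 7) 7 +
    (I (w + 29) 27 + I (w + 27) 1)) := by
  have := arr_of_code b77 s u 0 (w + 28) 7 (cod 0 0 7 + cod 1 0 7 + cod 2 0 7 + (cod 5 1 27 + ({500} : Multiset ℕ)))
    (by decide +kernel) (by decide +kernel) (by decide +kernel) (by decide +kernel)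
  have h1 : ({500} : Multiset ℕ).map (dec (mkBase s u 0 (w + 28) 7)) = I (w + 27) 1 := by
    simp [dec, mkBase, I]
  rw [Multiset.map_add, Multiset.map_add, Multiset.map_add, Multiset.map_add, h1] at this
  simpa [code_I', mkBase, Nat.add_assoc] using this

lemma arr_g79 (s u w : ℕ) : Arr 7 9 (I s 9 + I u 9 + I (u + s + 9) 9 +
    (I w 36)) := by
  have := arr_of_code g79 s u 0 w 9 (cod 0 0 9 + cod 1 0 9 + cod 2 0 9 + (cod 5 0 36))
    (by decide +kernel) (by decide +kernel) (by decide +kernel) (by decide +kernel)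
  simpa [code_I', mkBase] using this

lemma arr_a79 (s u w : ℕ) : Arr 7 9 (I s 9 + I u 9 + I (u + s) 9 +
    (I w 35 + I (w + 36) 1)) := by
  have := arr_of_code a79 s u 0 w 0 (cod 0 0 9 + cod 1 0 9 + cod 2 0 9 + (cod 5 0 35 + cod 5 36 1))
    (by decide +kernel) (by decide +kernel) (by decide +kernel) (by decide +kernel)
  simpa [code_I', mkBase] using this

lemma arr_b79 (s u w : ℕ) : Arr 7 9 (I s 9 + I u 9 + I (u + s) 9 +
    (I (w + 37) 35 + I (w + 35) 1)) := by
  have := arr_of_code b79 s u 0 (w + 36) 0 (cod 0 0 9 + cod 1 0 9 + cod 2 0 9 + (cod 5 1 35 + ({500} : Multiset ℕ)))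
    (by decide +kernel) (by decide +kernel) (by decide +kernel) (by decide +kernel)
  have h1 : ({500} : Multiset ℕ).map (dec (mkBase s u 0 (w + 36) 0)) = I (w + 35) 1 := by
    simp [dec, mkBase, I]
  rw [Multiset.map_add, Multiset.map_add, Multiset.map_add, Multiset.map_add, h1] at this
  simpa [code_I', mkBase, Nat.add_assoc] using this

lemma arr_g99 (s u w : ℕ) : Arr 9 9 (I s 9 + I u 9 + I (u + s) 9 +
    (I w 54)) := by
  have := arr_of_code g99 s u 0 w 0 (cod 0 0 9 + cod 1 0 9 + cod 2 0 9 + (cod 5 0 54))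
    (by decide +kernel) (by decide +kernel) (by decide +kernel) (by decide +kernel)
  simpa [code_I', mkBase] using this

lemma arr_a99 (s u w : ℕ) : Arr 9 9 (I s 9 + I u 9 + I (u + s + 9) 9 +
    (I w 53 + I (w + 54) 1)) := by
  have := arr_of_code a99 s u 0 w 9 (cod 0 0 9 + cod 1 0 9 + cod 2 0 9 + (cod 5 0 53 + cod 5 54 1))
    (by decide +kernel) (by decide +kernel) (by decide +kernel) (by decide +kernel)
  simpa [code_I', mkBase] using this

lemma arr_b99 (s u w : ℕ) : Arr 9 9 (I s 9 + I u 9 + I (u + s + 9) 9 +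
    (I (w + 55) 53 + I (w + 53) 1)) := by
  have := arr_of_code b99 s u 0 (w + 54) 9 (cod 0 0 9 + cod 1 0 9 + cod 2 0 9 + (cod 5 1 53 + ({500} : Multiset ℕ)))
    (by decide +kernel) (by decide +kernel) (by decide +kernel) (by decide +kernel)
  have h1 : ({500} : Multiset ℕ).map (dec (mkBase s u 0 (w + 54) 9)) = I (w + 53) 1 := by
    simp [dec, mkBase, I]
  rw [Multiset.map_add, Multiset.map_add, Multiset.map_add, Multiset.map_add, h1] at this
  simpa [code_I', mkBase, Nat.add_assoc] using this


/-! ### Combining arrays -/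

lemma I_add (x m n : ℕ) : I x m + I (x + m) n = I x (m + n) := by
  unfold I
  rw [Multiset.range_add, Multiset.map_add, Multiset.map_map]
  congr 1
  apply Multiset.map_congr rfl
  intro i _
  simp only [Function.comp]; omega

lemma I_zero (x : ℕ) : I x 0 = 0 := rfl

lemma Arr.transpose {a b : ℕ} {V : Multiset ℕ} (h : Arr a b V) : Arr b a V := by
  obtain ⟨A, h1, h2, h3⟩ := h
  exact ⟨fun j i => A i j, h2, h1, by rw [Finset.sum_comm, h3]⟩

lemma Arr.hcat {a b b' : ℕ} {V W : Multiset ℕ} (h : Arr a b V) (h' : Arr a b' W) :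
    Arr a (b + b') (V + W) := by
  obtain ⟨A, h1, h2, h3⟩ := h
  obtain ⟨B, k1, k2, k3⟩ := h'
  refine ⟨fun i => Fin.append (A i) (B i), fun i => ?_, fun j => ?_, ?_⟩
  · simp [Fin.sum_univ_add, h1, k1]
  · induction j using Fin.addCases with
    | left j => simpa using h2 j
    | right j => simpa using k2 j
  · simp only [Fin.sum_univ_add, Fin.append_left, Fin.append_right]
    rw [Finset.sum_add_distrib, h3, k3]

/-- A family of `n` zero-sum `a × b` arrays using jointly the values `V`. -/
def Fam (a b : ℕ) : ℕ → Multiset ℕ → Prop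
  | 0, V => V = 0
  | n + 1, V => ∃ U W, Arr a b U ∧ Fam a b n W ∧ V = U + W

lemma Fam.one {a b : ℕ} {V : Multiset ℕ} (h : Arr a b V) : Fam a b 1 V :=
  ⟨V, 0, h, rfl, by simp⟩

lemma Fam.add {a b : ℕ} {n m : ℕ} {V W : Multiset ℕ} (h : Fam a b n V) (h' : Fam a b m W) :
    Fam a b (n + m) (V + W) := by
  induction n generalizing V with
  | zero => cases h; simpa using h'
  | succ n ih =>
    obtain ⟨U, V', hU, hV, rfl⟩ := h
    rw [Nat.add_right_comm]
    exact ⟨U, V' + W, hU, ih hV, by rw [add_assoc]⟩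

lemma Fam.split {a b : ℕ} (n m : ℕ) {V : Multiset ℕ} (h : Fam a b (n + m) V) :
    ∃ V1 V2, Fam a b n V1 ∧ Fam a b m V2 ∧ V = V1 + V2 := by
  induction n generalizing V with
  | zero => exact ⟨0, V, rfl, by simpa using h, by simp⟩
  | succ n ih =>
    rw [Nat.add_right_comm] at h
    obtain ⟨U, V', hU, hV, rfl⟩ := h
    obtain ⟨V1, V2, h1, h2, rfl⟩ := ih hV
    exact ⟨U + V1, V2, ⟨U, V1, hU, h1, rfl⟩, h2, by rw [add_assoc]⟩

lemma Fam.hcat {a b b' : ℕ} {n : ℕ} {V W : Multiset ℕ} (h : Fam a b n V) (h' : Fam a b' n W) :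
    Fam a (b + b') n (V + W) := by
  induction n generalizing V W with
  | zero => cases h; cases h'; simp [Fam]
  | succ n ih =>
    obtain ⟨U, V', hU, hV, rfl⟩ := h
    obtain ⟨U', W', hU', hW, rfl⟩ := h'
    exact ⟨U + U', V' + W', hU.hcat hU', ih hV hW, by abel⟩

lemma Fam.transpose {a b : ℕ} {n : ℕ} {V : Multiset ℕ} (h : Fam a b n V) : Fam b a n V := by
  induction n generalizing V with
  | zero => exact h
  | succ n ih =>
    obtain ⟨U, V', hU, hV, rfl⟩ := h
    exact ⟨U, V', hU.transpose, ih hV, rfl⟩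

lemma Fam.vcat {a a' b : ℕ} {n : ℕ} {V W : Multiset ℕ} (h : Fam a b n V) (h' : Fam a' b n W) :
    Fam (a + a') b n (V + W) := (h.transpose.hcat h'.transpose).transpose

lemma Fam.empty (a n : ℕ) : Fam a 0 n 0 := by
  induction n with
  | zero => rfl
  | succ n ih => exact ⟨0, 0, ⟨fun _ _ => 0, by simp, by simp, by simp⟩, ih, by simp⟩

lemma Fam.hmul {a b : ℕ} (t n : ℕ) {V : Multiset ℕ} (h : Fam a b (t * n) V) :
    Fam a (t * b) n V := by
  induction t generalizing V with
  | zero =>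
    rw [Nat.zero_mul] at h ⊢
    cases h; exact Fam.empty a n
  | succ t ih =>
    rw [Nat.succ_mul] at h ⊢
    obtain ⟨V1, V2, h1, h2, rfl⟩ := h.split
    exact (ih h1).hcat h2

lemma Fam.vmul {a b : ℕ} (t n : ℕ) {V : Multiset ℕ} (h : Fam a b (t * n) V) :
    Fam (t * a) b n V := (h.transpose.hmul t n).transpose

/-! ### Value patterns -/

/-- The value pattern used by all pieces. -/
def Mset (s u1 u2 w S c1 c2 W : ℕ) : Multiset ℕ :=
  I s S + I u1 c1 + I (u1 + s + c1) c1 + I u2 c2 + I (u2 + s + c2) c2 + I w W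

lemma I_add' {x m y n z k : ℕ} (h : x + m = y) (hz : x = z) (hk : m + n = k) :
    I x m + I y n = I z k := by subst h hz hk; exact I_add x m n

lemma mset_add (s u1 u2 w S c1 c2 W S' c1' c2' W' : ℕ) (h1 : S = 2 * c1) (h2 : S = 2 * c2) :
    Mset s (u1 + c1') (u2 + c2') w S c1 c2 W + Mset (s + S) u1 u2 (w + W) S' c1' c2' W' =
      Mset s u1 u2 w (S + S') (c1 + c1') (c2 + c2') (W + W') := by
  unfold Mset
  rw [← I_add' (x := s) (m := S) (y := s + S) (n := S') rfl rfl rfl,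
    ← I_add' (x := u1) (m := c1') (y := u1 + c1') (n := c1) rfl rfl (Nat.add_comm _ _),
    ← I_add' (x := u1 + c1' + s + c1) (m := c1) (y := u1 + (s + S) + c1') (n := c1')
      (z := u1 + s + (c1 + c1')) (by omega) (by omega) rfl,
    ← I_add' (x := u2) (m := c2') (y := u2 + c2') (n := c2) rfl rfl (Nat.add_comm _ _),
    ← I_add' (x := u2 + c2' + s + c2) (m := c2) (y := u2 + (s + S) + c2') (n := c2')
      (z := u2 + s + (c2 + c2')) (by omega) (by omega) rfl,
    ← I_add' (x := w) (m := W) (y := w + W) (n := W') rfl rfl rfl]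
  abel

lemma mset_final (S c1 c2 W : ℕ) :
    Mset 0 S (S + 2 * c1) (S + 2 * c1 + 2 * c2) S c1 c2 W = I 0 (S + 2 * c1 + 2 * c2 + W) := by
  unfold Mset
  rw [I_add' (y := S) (k := S + c1) (by omega) rfl rfl,
    I_add' (k := S + c1 + c1) (by omega) rfl rfl,
    I_add' (k := S + c1 + c1 + c2) (by omega) rfl rfl,
    I_add' (k := S + c1 + c1 + c2 + c2) (by omega) rfl rfl,
    I_add' (by omega) rfl rfl]
  congr 1; omega

/-- Families available at every position. -/
def Pk (a b n S c1 c2 W : ℕ) : Prop := ∀ s u1 u2 w, Fam a b n (Mset s u1 u2 w S c1 c2 W)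

lemma Pk.add {a b n S c1 c2 W n' S' c1' c2' W' : ℕ} (h : Pk a b n S c1 c2 W)
    (h' : Pk a b n' S' c1' c2' W') (h1 : S = 2 * c1) (h2 : S = 2 * c2) :
    Pk a b (n + n') (S + S') (c1 + c1') (c2 + c2') (W + W') := by
  intro s u1 u2 w
  rw [← mset_add s u1 u2 w S c1 c2 W S' c1' c2' W' h1 h2]
  exact (h _ _ _ _).add (h' _ _ _ _)

lemma Pk.zero (a b : ℕ) : Pk a b 0 0 0 0 0 := by
  intro s u1 u2 w
  simp [Fam, Mset, I_zero]

lemma Pk.mul {a b n S c1 c2 W : ℕ} (h : Pk a b n S c1 c2 W)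
    (h1 : S = 2 * c1) (h2 : S = 2 * c2) (e : ℕ) :
    Pk a b (e * n) (e * S) (e * c1) (e * c2) (e * W) := by
  induction e with
  | zero => simpa using Pk.zero a b
  | succ e ih =>
    simp only [Nat.succ_mul]
    exact ih.add h (by rw [h1]; ring) (by rw [h2]; ring)

lemma Pk.transpose {a b n S c1 c2 W : ℕ} (h : Pk a b n S c1 c2 W) : Pk b a n S c1 c2 W :=
  fun s u1 u2 w => (h s u1 u2 w).transpose

/-- Strips of height `α`. -/
def Strip (α : ℕ) : Prop := ∃ W, 12 + W = 4 * α ∧ Pk α 4 1 4 2 2 W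

/-- Existence of a pattern of `C` cores. -/
def Core (α β C : ℕ) : Prop :=
  ∃ S c1 c2 W, S + 2 * c1 + 2 * c2 + W = C * α * β ∧ Pk α β C S c1 c2 W

lemma Core.transpose {α β C : ℕ} (h : Core α β C) : Core β α C := by
  obtain ⟨S, c1, c2, W, h1, h2⟩ := h
  exact ⟨S, c1, c2, W, by rw [h1]; ring, h2.transpose⟩

lemma Core.zero (α β : ℕ) : Core α β 0 := ⟨0, 0, 0, 0, by simp, Pk.zero α β⟩

lemma strip7_ok : Strip 7 := ⟨16, rfl, fun s u1 u2 w => Fam.one (arr_strip7 s u1 u2 w)⟩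

lemma strip9_ok : Strip 9 := ⟨24, rfl, fun s u1 u2 w => Fam.one (arr_strip9 s u1 u2 w)⟩

lemma blocks (w z : ℕ) : Fam 4 4 z (I w (z * 16)) := by
  induction z with
  | zero => simp [Fam, I_zero]
  | succ z ih =>
    rw [Nat.succ_mul, ← I_add]
    exact ih.add (Fam.one (arr_block4 _))

lemma pool {α β C : ℕ} (hα : Strip α) (hβ : Strip β) (hC : Core α β C) (Y1 Y2 Z : ℕ) :
    ∃ V1 V2 V3 V4, Fam α 4 Y1 V1 ∧ Fam 4 β Y2 V2 ∧ Fam α β C V3 ∧ Fam 4 4 Z V4 ∧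
      V1 + V2 + V3 + V4 = I 0 (Y1 * (4 * α) + Y2 * (4 * β) + C * α * β + Z * 16) := by
  obtain ⟨W1, e1, h1⟩ := hα
  obtain ⟨W2, e2, h2⟩ := hβ
  obtain ⟨S, c1, c2, W, e3, h3⟩ := hC
  have k1 := h1.mul rfl rfl Y1
  have k2 := (h2.mul rfl rfl Y2).transpose
  rw [Nat.mul_one] at k1 k2
  set S' := Y1 * 4 + (Y2 * 4 + S) with hS'
  set d1 := Y1 * 2 + (Y2 * 2 + c1) with hd1
  set d2 := Y1 * 2 + (Y2 * 2 + c2) with hd2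
  set W' := Y1 * W1 + (Y2 * W2 + W) with hW'
  refine ⟨_, _, _, _, k1 0 (S' + (Y2 * 2 + c1)) (S' + 2 * d1 + (Y2 * 2 + c2)) (S' + 2 * d1 + 2 * d2),
    k2 (0 + Y1 * 4) (S' + c1) (S' + 2 * d1 + c2) (S' + 2 * d1 + 2 * d2 + Y1 * W1),
    h3 (0 + Y1 * 4 + Y2 * 4) S' (S' + 2 * d1) (S' + 2 * d1 + 2 * d2 + Y1 * W1 + Y2 * W2),
    blocks (S' + 2 * d1 + 2 * d2 + W') Z, ?_⟩
  rw [add_assoc (Mset _ _ _ _ _ _ _ _) (Mset _ _ _ _ _ _ _ _), mset_add, mset_add, mset_final,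
    I_add' (by omega) rfl rfl]
  · congr 1
    rw [← e1, ← e2, ← e3, hS', hd1, hd2]
    ring
  all_goals omega

lemma fam_main {α β C : ℕ} (hα : Strip α) (hβ : Strip β) (hC : Core α β C) (t y : ℕ) :
    ∃ V W, Fam (α + t * 4) β C V ∧ Fam (α + t * 4) 4 y W ∧
      V + W = I 0 (C * (α + t * 4) * β + y * (α + t * 4) * 4) := by
  obtain ⟨V1, V2, V3, V4, h1, h2, h3, h4, e⟩ := pool hα hβ hC y (t * C) (t * y)
  refine ⟨V3 + V2, V1 + V4, h3.vcat (h2.vmul t C), h1.vcat (h4.vmul t y), ?_⟩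
  rw [show V3 + V2 + (V1 + V4) = V1 + V2 + V3 + V4 by abel, e]
  congr 1; ring

lemma fam_ab {α β c r : ℕ} (hα : Strip α) (hβ : Strip β) (hC : Core α β (r * c)) (t y : ℕ) :
    Fam (α + t * 4) (r * β + y * 4) c (I 0 (c * (α + t * 4) * (r * β + y * 4))) := by
  obtain ⟨V, W, h1, h2, e⟩ := fam_main hα hβ hC t (y * c)
  have := (h1.hmul r c).hcat (h2.hmul y c)
  rw [e] at this
  convert this using 2
  ring

/-! ### Cores -/

lemma pair_w (w W : ℕ) : (I w W + I (w + (W + 1)) 1) + (I (w + (W + 1) + 1) W + I (w + W) 1) =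
    I w (2 * (W + 1)) := by
  have : I w (2 * (W + 1)) = I w W + I (w + W) 1 + I (w + (W + 1)) 1 + I (w + (W + 1) + 1) W := by
    rw [I_add' rfl rfl rfl, I_add' (by omega) rfl rfl, I_add' (by omega) rfl rfl]
    congr 1; omega
  rw [this]; abel

/-- Four (or three) cores, first kind. -/
lemma core4 {α β L W : ℕ}
    (hg : ∀ s u w, Arr α β (I s L + I u L + I (u + s) L + I w (W + 1)))
    (ha : ∀ s u w, Arr α β (I s L + I u L + I (u + s + L) L + (I w W + I (w + (W + 1)) 1)))
    (hb : ∀ s u w, Arr α β (I s L + I u L + I (u + s + L) L + (I (w + (W + 1) + 1) W + I (w + W) 1))) :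
    Pk α β 4 (4 * L) (2 * L) (2 * L) (4 * (W + 1)) := by
  intro s u1 u2 w
  have := ((Fam.one (ha s (u1 + L) w)).add (Fam.one (hb (s + 2 * L) u1 w))).add
    ((Fam.one (hg (s + L) (u2 + L) (w + 2 * (W + 1)))).add
      (Fam.one (hg (s + 3 * L) u2 (w + 3 * (W + 1)))))
  convert this using 1
  unfold Mset
  rw [← I_add' (x := s) (m := 2 * L) (y := s + 2 * L) (n := 2 * L) rfl rfl (by omega),
    ← I_add' (x := s) (m := L) (y := s + L) (n := L) rfl rfl (by omega),
    ← I_add' (x := s + 2 * L) (m := L) (y := s + 3 * L) (n := L) (by omega) rfl (by omega),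
    ← I_add' (x := u1) (m := L) (y := u1 + L) (n := L) rfl rfl (by omega),
    ← I_add' (x := u2) (m := L) (y := u2 + L) (n := L) rfl rfl (by omega),
    ← I_add' (x := u1 + L + s + L) (m := L) (y := u1 + (s + 2 * L) + L) (n := L)
      (z := u1 + s + 2 * L) (by omega) (by omega) (by omega),
    ← I_add' (x := u2 + L + (s + L)) (m := L) (y := u2 + (s + 3 * L)) (n := L)
      (z := u2 + s + 2 * L) (by omega) (by omega) (by omega),
    ← I_add' (x := w) (m := 2 * (W + 1)) (y := w + 2 * (W + 1)) (n := 2 * (W + 1)) rfl rfl (by omega),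
    ← I_add' (x := w + 2 * (W + 1)) (m := W + 1) (y := w + 3 * (W + 1)) (n := W + 1) (by omega)
      rfl (by omega), ← pair_w]
  abel

lemma core3 {α β L W : ℕ}
    (hg : ∀ s u w, Arr α β (I s L + I u L + I (u + s) L + I w (W + 1)))
    (ha : ∀ s u w, Arr α β (I s L + I u L + I (u + s + L) L + (I w W + I (w + (W + 1)) 1)))
    (hb : ∀ s u w, Arr α β (I s L + I u L + I (u + s + L) L + (I (w + (W + 1) + 1) W + I (w + W) 1))) :
    Pk α β 3 (3 * L) (2 * L) L (3 * (W + 1)) := by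
  intro s u1 u2 w
  have := ((Fam.one (ha s (u1 + L) w)).add (Fam.one (hb (s + 2 * L) u1 w))).add
    (Fam.one (hg (s + L) u2 (w + 2 * (W + 1))))
  convert this using 1
  unfold Mset
  rw [← I_add' (x := s) (m := 2 * L) (y := s + 2 * L) (n := L) rfl rfl (by omega),
    ← I_add' (x := s) (m := L) (y := s + L) (n := L) rfl rfl (by omega),
    ← I_add' (x := u1) (m := L) (y := u1 + L) (n := L) rfl rfl (by omega),
    ← I_add' (x := u1 + L + s + L) (m := L) (y := u1 + (s + 2 * L) + L) (n := L)
      (z := u1 + s + 2 * L) (by omega) (by omega) (by omega),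
    ← I_add' (x := w) (m := 2 * (W + 1)) (y := w + 2 * (W + 1)) (n := W + 1) rfl rfl (by omega),
    ← pair_w, show u2 + (s + L) = u2 + s + L by omega]
  abel

/-- Four cores, second kind. -/
lemma core4' {α β L W : ℕ}
    (hg : ∀ s u w, Arr α β (I s L + I u L + I (u + s + L) L + I w (W + 1)))
    (ha : ∀ s u w, Arr α β (I s L + I u L + I (u + s) L + (I w W + I (w + (W + 1)) 1)))
    (hb : ∀ s u w, Arr α β (I s L + I u L + I (u + s) L + (I (w + (W + 1) + 1) W + I (w + W) 1))) :
    Pk α β 4 (4 * L) (2 * L) (2 * L) (4 * (W + 1)) := by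
  intro s u1 u2 w
  have := ((Fam.one (ha (s + L) (u2 + L) w)).add (Fam.one (hb (s + 3 * L) u2 w))).add
    ((Fam.one (hg s (u1 + L) (w + 2 * (W + 1)))).add
      (Fam.one (hg (s + 2 * L) u1 (w + 3 * (W + 1)))))
  convert this using 1
  unfold Mset
  rw [← I_add' (x := s) (m := 2 * L) (y := s + 2 * L) (n := 2 * L) rfl rfl (by omega),
    ← I_add' (x := s) (m := L) (y := s + L) (n := L) rfl rfl (by omega),
    ← I_add' (x := s + 2 * L) (m := L) (y := s + 3 * L) (n := L) (by omega) rfl (by omega),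
    ← I_add' (x := u1) (m := L) (y := u1 + L) (n := L) rfl rfl (by omega),
    ← I_add' (x := u2) (m := L) (y := u2 + L) (n := L) rfl rfl (by omega),
    ← I_add' (x := u1 + L + s + L) (m := L) (y := u1 + (s + 2 * L) + L) (n := L)
      (z := u1 + s + 2 * L) (by omega) (by omega) (by omega),
    ← I_add' (x := u2 + L + (s + L)) (m := L) (y := u2 + (s + 3 * L)) (n := L)
      (z := u2 + s + 2 * L) (by omega) (by omega) (by omega),
    ← I_add' (x := w) (m := 2 * (W + 1)) (y := w + 2 * (W + 1)) (n := 2 * (W + 1)) rfl rfl (by omega),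
    ← I_add' (x := w + 2 * (W + 1)) (m := W + 1) (y := w + 3 * (W + 1)) (n := W + 1) (by omega)
      rfl (by omega), ← pair_w]
  abel

lemma core77 (C : ℕ) (h : C % 4 = 0 ∨ C % 4 = 3) : Core 7 7 C := by
  have h4 := (core4 (L := 7) (W := 27) arr_g77 arr_a77 arr_b77).mul rfl rfl (C / 4)
  rcases h with h | h
  · rw [show C / 4 * 4 = C by omega] at h4
    exact ⟨_, _, _, _, by omega, h4⟩
  · have := h4.add (core3 (L := 7) (W := 27) arr_g77 arr_a77 arr_b77) (by omega) (by omega)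
    rw [show C / 4 * 4 + 3 = C by omega] at this
    exact ⟨_, _, _, _, by omega, this⟩

lemma core99 (C : ℕ) (h : C % 4 = 0 ∨ C % 4 = 3) : Core 9 9 C := by
  have h4 := (core4 (L := 9) (W := 53) arr_g99 arr_a99 arr_b99).mul rfl rfl (C / 4)
  rcases h with h | h
  · rw [show C / 4 * 4 = C by omega] at h4
    exact ⟨_, _, _, _, by omega, h4⟩
  · have := h4.add (core3 (L := 9) (W := 53) arr_g99 arr_a99 arr_b99) (by omega) (by omega)
    rw [show C / 4 * 4 + 3 = C by omega] at this
    exact ⟨_, _, _, _, by omega, this⟩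

lemma core79 (C : ℕ) (h : C % 4 = 0 ∨ C % 4 = 1) : Core 7 9 C := by
  have h4 := (core4' (L := 9) (W := 35) arr_g79 arr_a79 arr_b79).mul rfl rfl (C / 4)
  rcases h with h | h
  · rw [show C / 4 * 4 = C by omega] at h4
    exact ⟨_, _, _, _, by omega, h4⟩
  · have h1 : Pk 7 9 1 9 9 0 36 := by
      intro s u1 u2 w
      simpa [Mset, I_zero] using Fam.one (arr_g79 s u1 w)
    have := h4.add h1 (by omega) (by omega)
    rw [show C / 4 * 4 + 1 = C by omega] at this
    exact ⟨_, _, _, _, by omega, this⟩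

/-- The families of full arrays needed in the end. -/
lemma fam_final (a b c : ℕ) (ha : Odd a) (ha7 : 7 ≤ a) (hb3 : 3 ≤ b)
    (hb : b ≠ 3 ∧ b ≠ 5 ∧ b ≠ 6 ∧ b ≠ 10)
    (h : c * a * b % 4 = 0 ∨ c * a * b % 4 = 3) : Fam a b c (I 0 (c * a * b)) := by
  have key : c * a * b % 4 = ((c % 4) * (a % 4) % 4) * (b % 4) % 4 := by
    simp [Nat.mul_mod]
  rw [key] at h
  have ha2 : a % 4 = 3 ∨ a % 4 = 1 := by rcases ha with ⟨x, rfl⟩; omega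
  have hc4 : c % 4 < 4 := Nat.mod_lt _ (by norm_num)
  have hb4 : b % 4 < 4 := Nat.mod_lt _ (by norm_num)
  have main : ∀ α β r : ℕ, Strip α → Strip β → Core α β (r * c) → α ≤ a → a % 4 = α % 4 →
      r * β ≤ b → b % 4 = r * β % 4 → Fam a b c (I 0 (c * a * b)) := by
    intro α β r h1 h2 h3 h4 h5 h6 h7
    have := fam_ab h1 h2 h3 ((a - α) / 4) ((b - r * β) / 4)
    rwa [show α + (a - α) / 4 * 4 = a by omega,
      show r * β + (b - r * β) / 4 * 4 = b by omega] at this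
  generalize hcc : c % 4 = cc at *
  generalize hbb : b % 4 = bb at *
  have hcore0 : ∀ α β, Core α β (0 * c) := fun α β => by rw [Nat.zero_mul]; exact Core.zero α β
  rcases ha2 with ha2 | ha2 <;> rw [ha2] at h
  · interval_cases bb
    · exact main 7 7 0 strip7_ok strip7_ok (hcore0 _ _) ha7 ha2 (by omega) (by omega)
    · exact main 7 9 1 strip7_ok strip9_ok (core79 _ (by omega)) ha7 ha2 (by omega) (by omega)
    · exact main 7 7 2 strip7_ok strip7_ok (core77 _ (by omega)) ha7 ha2 (by omega) (by omega)
    · exact main 7 7 1 strip7_ok strip7_ok (core77 _ (by omega)) ha7 ha2 (by omega) (by omega)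
  · interval_cases bb
    · exact main 9 7 0 strip9_ok strip7_ok (hcore0 _ _) (by omega) ha2 (by omega) (by omega)
    · exact main 9 9 1 strip9_ok strip9_ok (core99 _ (by omega)) (by omega) ha2 (by omega) (by omega)
    · exact main 9 7 2 strip9_ok strip7_ok (core79 _ (by omega)).transpose (by omega) ha2 (by omega)
        (by omega)
    · exact main 9 7 1 strip9_ok strip7_ok (core79 _ (by omega)).transpose (by omega) ha2 (by omega)
        (by omega)

/-! ### Assembling the Heffter array -/

lemma Fam.arrays {a b n : ℕ} {V : Multiset ℕ} (h : Fam a b n V) :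
    ∃ A : Fin n → Fin a → Fin b → ℤ, (∀ t i, ∑ j, A t i j = 0) ∧ (∀ t j, ∑ i, A t i j = 0) ∧
      ∑ t, ∑ i, ∑ j, ({(A t i j).natAbs} : Multiset ℕ) = V := by
  induction n generalizing V with
  | zero => cases h; exact ⟨fun t => t.elim0, fun t => t.elim0, fun t => t.elim0, by simp⟩
  | succ n ih =>
    obtain ⟨U, W, ⟨B, b1, b2, b3⟩, hW, rfl⟩ := h
    obtain ⟨A, a1, a2, a3⟩ := ih hW
    refine ⟨Fin.cons B A, fun t => ?_, fun t => ?_, ?_⟩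
    · refine Fin.cases ?_ (fun t => ?_) t
      · simpa using b1
      · simpa using a1 t
    · refine Fin.cases ?_ (fun t => ?_) t
      · simpa using b2
      · simpa using a2 t
    · rw [Fin.sum_univ_succ]
      simp only [Fin.cons_zero, Fin.cons_succ]
      rw [b3, a3]

lemma sum_dite_lt {M : Type*} [AddCommMonoid M] {c d : ℕ} (hd : d ≤ c) (F : Fin d → M) :
    (∑ t : Fin c, if h : t.val < d then F ⟨t.val, h⟩ else 0) = ∑ h, F h := by
  obtain ⟨r, rfl⟩ := Nat.exists_eq_add_of_le hd
  rw [Fin.sum_univ_add]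
  simp

lemma sum_dite_subRight {M : Type*} [AddCommMonoid M] {c d : ℕ} [NeZero c] (hd : d ≤ c)
    (i : Fin c) (F : Fin d → M) :
    (∑ x : Fin c, if h : (x - i).val < d then F ⟨(x - i).val, h⟩ else 0) = ∑ h, F h :=
  (Equiv.sum_comp (Equiv.subRight i)
    (fun t : Fin c => if h : t.val < d then F ⟨t.val, h⟩ else 0)).trans (sum_dite_lt hd F)

lemma sum_dite_subLeft {M : Type*} [AddCommMonoid M] {c d : ℕ} [NeZero c] (hd : d ≤ c)
    (i : Fin c) (F : Fin d → M) :
    (∑ x : Fin c, if h : (i - x).val < d then F ⟨(i - x).val, h⟩ else 0) = ∑ h, F h :=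
  (Equiv.sum_comp (Equiv.subLeft i)
    (fun t : Fin c => if h : t.val < d then F ⟨t.val, h⟩ else 0)).trans (sum_dite_lt hd F)

/-- The block-cyclic array built from full arrays. -/
def blk {a c d e : ℕ} [NeZero c] (A : Fin c → Fin a → Fin (d * e) → ℤ)
    (p : Fin c × Fin a) (q : Fin c × Fin e) : ℤ :=
  if h : (q.1 - p.1).val < d then A p.1 p.2 (finProdFinEquiv (⟨(q.1 - p.1).val, h⟩, q.2)) else 0

lemma assemble {a c d e : ℕ} (hd : d ≤ c) (hc : 0 < c)
    (h : Fam a (d * e) c (I 0 (c * a * (d * e)))) :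
    ∃ A : Matrix (Fin (c * a)) (Fin (c * e)) ℤ,
      IsIntegerHeffterArray (c * a) (c * e) (d * e) (d * a) A := by
  have : NeZero c := ⟨by omega⟩
  obtain ⟨A, h1, h2, h3⟩ := h.arrays
  have h3' : (Finset.univ : Finset (Fin c × Fin a × Fin (d * e))).val.map
      (fun p => (A p.1 p.2.1 p.2.2).natAbs) = I 0 (c * a * (d * e)) := by
    rw [← h3]
    have : ∑ p : Fin c × Fin a × Fin (d * e), ({(A p.1 p.2.1 p.2.2).natAbs} : Multiset ℕ) =
        ∑ t, ∑ i, ∑ j, ({(A t i j).natAbs} : Multiset ℕ) := by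
      rw [Fintype.sum_prod_type]
      refine Finset.sum_congr rfl fun t _ => ?_
      rw [Fintype.sum_prod_type]
    rw [← this, Finset.sum_eq_multiset_sum, ← Multiset.sum_map_singleton (Multiset.map _ _),
      Multiset.map_map]
    rfl
  have hnd : (I 0 (c * a * (d * e))).Nodup :=
    (Multiset.nodup_range _).map (fun x y hxy => by simpa using hxy)
  have hinj : ∀ t i j t' i' j', (A t i j).natAbs = (A t' i' j').natAbs →
      t = t' ∧ i = i' ∧ j = j' := by
    intro t i j t' i' j' hh
    rw [← h3'] at hnd
    have := Multiset.inj_on_of_nodup_map hnd (t, i, j) (Finset.mem_univ _) (t', i', j')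
      (Finset.mem_univ _) hh
    simpa using this
  have hmem : ∀ t i j, 1 ≤ (A t i j).natAbs ∧ (A t i j).natAbs ≤ c * a * (d * e) := by
    intro t i j
    have : (A t i j).natAbs ∈ I 0 (c * a * (d * e)) := by
      rw [← h3']
      exact Multiset.mem_map.2 ⟨(t, i, j), Finset.mem_univ _, rfl⟩
    obtain ⟨x, hx, hx'⟩ := Multiset.mem_map.1 this
    have := Multiset.mem_range.1 hx
    omega
  have hne : ∀ t i j, A t i j ≠ 0 := fun t i j h0 => by
    have := (hmem t i j).1
    simp [h0] at this
  have hnz : ∀ p q, blk A p q ≠ 0 ↔ (q.1 - p.1).val < d := by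
    intro p q
    unfold blk
    split_ifs with hh
    · simp [hh, hne]
    · simp [hh]
  refine ⟨fun p q => blk A (finProdFinEquiv.symm p) (finProdFinEquiv.symm q), ?_, ?_, ?_, ?_, ?_, ?_⟩
  · intro p
    obtain ⟨p, rfl⟩ := finProdFinEquiv.surjective p
    rw [Finset.card_filter]
    simp only [Equiv.symm_apply_apply, hnz]
    rw [Equiv.sum_comp finProdFinEquiv.symm (fun q : Fin c × Fin e => if (q.1 - p.1).val < d then 1 else 0),
      Fintype.sum_prod_type]
    rw [Finset.sum_congr rfl (g := fun x => if h : (x - p.1).val < d then e else 0)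
      (fun x _ => by split_ifs <;> simp),
      sum_dite_subRight hd p.1 (fun _ => e)]
    simp
  · intro q
    obtain ⟨q, rfl⟩ := finProdFinEquiv.surjective q
    rw [Finset.card_filter]
    simp only [Equiv.symm_apply_apply, hnz]
    rw [Equiv.sum_comp finProdFinEquiv.symm (fun p : Fin c × Fin a => if (q.1 - p.1).val < d then 1 else 0),
      Fintype.sum_prod_type]
    rw [Finset.sum_congr rfl (g := fun x => if h : (q.1 - x).val < d then a else 0)
      (fun x _ => by split_ifs <;> simp),
      sum_dite_subLeft hd q.1 (fun _ => a)]
    simp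
  · intro p q hpq
    rw [hnz] at hpq
    simp only [blk, dif_pos hpq]
    obtain ⟨m1, m2⟩ := hmem (finProdFinEquiv.symm p).1 (finProdFinEquiv.symm p).2
      (finProdFinEquiv (⟨((finProdFinEquiv.symm q).1 - (finProdFinEquiv.symm p).1).val, hpq⟩,
        (finProdFinEquiv.symm q).2))
    rw [Int.abs_eq_natAbs]
    refine ⟨by exact_mod_cast m1, ?_⟩
    have : c * a * (d * e) = (c * e) * (d * a) := by ring
    rw [this] at m2
    exact_mod_cast m2
  · intro p q p' q' hpq hpq' hab
    obtain ⟨p, rfl⟩ := finProdFinEquiv.surjective p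
    obtain ⟨q, rfl⟩ := finProdFinEquiv.surjective q
    obtain ⟨p', rfl⟩ := finProdFinEquiv.surjective p'
    obtain ⟨q', rfl⟩ := finProdFinEquiv.surjective q'
    simp only [Equiv.symm_apply_apply] at hpq hpq' hab
    rw [hnz] at hpq hpq'
    simp only [blk, dif_pos hpq, dif_pos hpq', Int.abs_eq_natAbs] at hab
    obtain ⟨e1, e2, e3⟩ := hinj _ _ _ _ _ _ (by exact_mod_cast hab)
    have e4 := finProdFinEquiv.injective e3
    simp only [Prod.mk.injEq, Fin.mk.injEq] at e4
    have e5 : q.1 - p.1 = q'.1 - p'.1 := Fin.ext e4.1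
    rw [e1] at e5
    have e6 : q.1 = q'.1 := sub_left_injective e5
    rw [show p = p' from Prod.ext e1 e2, show q = q' from Prod.ext e6 e4.2]
  · intro p
    obtain ⟨p, rfl⟩ := finProdFinEquiv.surjective p
    simp only [Equiv.symm_apply_apply]
    rw [Equiv.sum_comp finProdFinEquiv.symm (fun q => blk A p q), Fintype.sum_prod_type]
    rw [Finset.sum_congr rfl (g := fun x => if h : (x - p.1).val < d then
        ∑ y, A p.1 p.2 (finProdFinEquiv (⟨(x - p.1).val, h⟩, y)) else 0)
      (fun x _ => by unfold blk; split_ifs with hh <;> simp [hh]),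
      sum_dite_subRight hd p.1 (fun t => ∑ y, A p.1 p.2 (finProdFinEquiv (t, y))),
      ← Fintype.sum_prod_type (f := fun z => A p.1 p.2 (finProdFinEquiv z)),
      Equiv.sum_comp finProdFinEquiv (fun z => A p.1 p.2 z), h1]
  · intro q
    obtain ⟨q, rfl⟩ := finProdFinEquiv.surjective q
    simp only [Equiv.symm_apply_apply]
    rw [Equiv.sum_comp finProdFinEquiv.symm (fun p => blk A p q), Fintype.sum_prod_type]
    refine Finset.sum_eq_zero fun x _ => ?_
    unfold blk
    by_cases hh : (q.1 - x).val < d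
    · simp only [hh, dif_pos]
      exact h2 x (finProdFinEquiv (⟨(q.1 - x).val, hh⟩, q.2))
    · simp [hh]

end HeffterAux

theorem exists_integer_heffter_of_odd_k
    (m n s k : ℕ)
    (hs3 : 3 ≤ s) (hsn : s ≤ n) (hk3 : 3 ≤ k) (hkm : k ≤ m)
    (hms : m * s = n * k)
    (hmod : n * k % 4 = 0 ∨ n * k % 4 = 3)
    (hkodd : Odd k)
    (hkgcd : 7 * Nat.gcd s k ≤ k)
    (hs : s ≠ 3 ∧ s ≠ 5 ∧ s ≠ 6 ∧ s ≠ 10) :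
    ∃ A : Matrix (Fin m) (Fin n) ℤ, IsIntegerHeffterArray m n s k A := by
  have hg : 0 < Nat.gcd s k := Nat.gcd_pos_of_pos_left _ (by omega)
  obtain ⟨e, a, hco, he, ha⟩ := Nat.exists_coprime s k
  generalize Nat.gcd s k = d at *
  rw [Nat.mul_comm] at he ha
  subst he ha
  have h1 : m * e = n * a := by
    apply Nat.eq_of_mul_eq_mul_left hg
    linarith
  have h2 : a ∣ m := (Nat.Coprime.dvd_of_dvd_mul_right hco.symm (by rw [h1]; exact dvd_mul_left a n))
  obtain ⟨c, rfl⟩ := h2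
  rw [Nat.mul_comm a c] at *
  have ha7 : 7 ≤ a := by
    rw [Nat.mul_comm 7] at hkgcd
    exact Nat.le_of_mul_le_mul_left hkgcd hg
  have h3 : n = c * e := by
    apply Nat.eq_of_mul_eq_mul_right (show 0 < a by omega)
    rw [← h1]; ring
  subst h3
  have he : 0 < e := Nat.pos_of_ne_zero (by rintro rfl; simp at hs3)
  have hdc : d ≤ c := Nat.le_of_mul_le_mul_right hsn he
  refine HeffterAux.assemble hdc (by omega) (HeffterAux.fam_final a (d * e) c
    (Nat.odd_mul.1 hkodd).2 ha7 hs3 hs ?_)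
  rwa [show c * a * (d * e) = c * e * (d * a) by ring]
end

section
/- Let m, n, s, k be four integers such that 3 ≤ s ≤ n, 3 ≤ k ≤ m, m·s = n·k and n·k ≡ 0 or 3 (mod 4). If s and k are coprime, k ≥ 7 is odd, and s ∉ {3, 5, 6, 10}, then there exists an integer Heffter array H(m, n; s, k). -/
namespace Heff

/-- Labels of the numbers used in the construction: `t i a` is the `a`-th member of the `i`-th
zero-sum triple, `u j h` is the `h`-th member of the `j`-th unit (four numbers in arithmetic
progression of difference two), `c n` is the `n`-th number of a run of consecutive integers. -/
inductive Lab : Type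
  | t (i a : ℕ) : Lab
  | u (j h : ℕ) : Lab
  | c (n : ℕ) : Lab

/-- The integer attached to a label. -/
def val (r y : ℤ) (u : ℕ → ℤ) : Lab → ℤ
  | Lab.t i a => if a = 0 then 2 * (i : ℤ) + 1 else if a = 1 then r - i else r + 1 + i
  | Lab.u j h => u j + 2 * (h : ℤ)
  | Lab.c n => y + n

/-- A box of labels: triples `x ≤ i < x + n`, units `y ≤ j < y + m`, run `z ≤ k < z + l`. -/
def Bx (x n y m z l : ℕ) : Set Lab := {b | match b with
  | Lab.t i a => x ≤ i ∧ i < x + n ∧ a < 3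
  | Lab.u j h => y ≤ j ∧ j < y + m ∧ h < 4
  | Lab.c k => z ≤ k ∧ k < z + l}

lemma Bx_disj (x n y m z l n' m' l' : ℕ) :
    Disjoint (Bx x n y m z l) (Bx (x + n) n' (y + m) m' (z + l) l') := by
  rw [Set.disjoint_left]
  rintro (⟨i, a⟩ | ⟨j, h⟩ | k) h1 h2 <;> simp only [Bx, Set.mem_ofPred_eq] at h1 h2 <;> omega

lemma Bx_union (x n y m z l n' m' l' : ℕ) :
    Bx x n y m z l ∪ Bx (x + n) n' (y + m) m' (z + l) l' ⊆
      Bx x (n + n') y (m + m') z (l + l') := by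
  rintro (⟨i, a⟩ | ⟨j, h⟩ | k) (h1 | h1) <;> simp only [Bx, Set.mem_ofPred_eq] at h1 ⊢ <;> omega

/-- The sign of a template entry. -/
def sg (m : ℤ) : ℤ := if 0 < m then 1 else -1

/-- There is a `p × q` zero-sum array with distinct labels from `X`. -/
def P (v : Lab → ℤ) (p q : ℕ) (X : Set Lab) : Prop :=
  ∃ (L : Fin p → Fin q → Lab) (e : Fin p → Fin q → ℤ),
    (∀ i j, e i j = 1 ∨ e i j = -1) ∧
    (∀ i, ∑ j, e i j * v (L i j) = 0) ∧
    (∀ j, ∑ i, e i j * v (L i j) = 0) ∧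
    (∀ i j i' j', L i j = L i' j' → i = i' ∧ j = j') ∧
    (∀ i j, L i j ∈ X)

lemma P.mono {v : Lab → ℤ} {p q : ℕ} {X Y : Set Lab} (h : P v p q X) (hXY : X ⊆ Y) :
    P v p q Y := by
  obtain ⟨L, e, h1, h2, h3, h4, h5⟩ := h
  exact ⟨L, e, h1, h2, h3, h4, fun i j => hXY (h5 i j)⟩

lemma P.transpose {v : Lab → ℤ} {p q : ℕ} {X : Set Lab} (h : P v p q X) : P v q p X := by
  obtain ⟨L, e, h1, h2, h3, h4, h5⟩ := h
  exact ⟨fun i j => L j i, fun i j => e j i, fun i j => h1 j i, h3, h2,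
    fun i j i' j' h => (h4 _ _ _ _ h).symm, fun i j => h5 j i⟩

lemma P.hglue {v : Lab → ℤ} {p q q' : ℕ} {X Y : Set Lab} (h : P v p q X) (h' : P v p q' Y)
    (hd : Disjoint X Y) : P v p (q + q') (X ∪ Y) := by
  obtain ⟨L, e, h1, h2, h3, h4, h5⟩ := h
  obtain ⟨L', e', h1', h2', h3', h4', h5'⟩ := h'
  rw [Set.disjoint_left] at hd
  refine ⟨fun i => Fin.append (L i) (L' i), fun i => Fin.append (e i) (e' i), ?_, ?_, ?_, ?_, ?_⟩
  · intro i j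
    induction j using Fin.addCases with
    | left j => simpa using h1 i j
    | right j => simpa using h1' i j
  · intro i
    rw [Fin.sum_univ_add]
    simp [h2, h2']
  · intro j
    induction j using Fin.addCases with
    | left j => simpa using h3 j
    | right j => simpa using h3' j
  · intro i j i' j' hl
    induction j using Fin.addCases with
    | left j =>
      induction j' using Fin.addCases with
      | left j' =>
        simp only [Fin.append_left] at hl
        obtain ⟨ha, hb⟩ := h4 _ _ _ _ hl
        exact ⟨ha, by rw [hb]⟩
      | right j' =>
        simp only [Fin.append_left, Fin.append_right] at hl
        exact absurd (hl ▸ h5' i' j') (hd (h5 i j))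
    | right j =>
      induction j' using Fin.addCases with
      | left j' =>
        simp only [Fin.append_left, Fin.append_right] at hl
        exact absurd (hl ▸ h5' i j) (hd (h5 i' j'))
      | right j' =>
        simp only [Fin.append_right] at hl
        obtain ⟨ha, hb⟩ := h4' _ _ _ _ hl
        exact ⟨ha, by rw [hb]⟩
  · intro i j
    induction j using Fin.addCases with
    | left j => simpa using Or.inl (h5 i j)
    | right j => simpa using Or.inr (h5' i j)

lemma P.vglue {v : Lab → ℤ} {p p' q : ℕ} {X Y : Set Lab} (h : P v p q X) (h' : P v p' q Y)
    (hd : Disjoint X Y) : P v (p + p') q (X ∪ Y) :=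
  (h.transpose.hglue h'.transpose hd).transpose

lemma of_tpl {v : Lab → ℤ} {p q : ℕ} (M : Fin p → Fin q → ℤ) (dec : ℕ → Lab) (X : Set Lab)
    (hdec : Function.Injective dec) (hX : ∀ n < p * q, dec n ∈ X)
    (hM : ∀ i j, M i j ≠ 0 ∧ (M i j).natAbs ≤ p * q)
    (hinj : ∀ i j i' j', (M i j).natAbs = (M i' j').natAbs → i = i' ∧ j = j')
    (hr : ∀ i, ∑ j, sg (M i j) * v (dec ((M i j).natAbs - 1)) = 0)
    (hc : ∀ j, ∑ i, sg (M i j) * v (dec ((M i j).natAbs - 1)) = 0) : P v p q X := by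
  refine ⟨fun i j => dec ((M i j).natAbs - 1), fun i j => sg (M i j), ?_, hr, hc, ?_, ?_⟩
  · intro i j
    show sg (M i j) = 1 ∨ sg (M i j) = -1
    unfold sg
    split_ifs <;> simp
  · intro i j i' j' h
    have h1 := hdec h
    have h2 := (hM i j).1
    have h3 := (hM i' j').1
    apply hinj
    omega
  · intro i j
    apply hX
    have h2 := hM i j
    omega

def decT (x n : ℕ) : Lab := Lab.t (x + n / 3) (n % 3)

def decG (w x z n : ℕ) : Lab :=
  if n < 4 * w then Lab.c (z + n) else Lab.u (x + (n - 4 * w) / 4) ((n - 4 * w) % 4)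

lemma decT_inj (x : ℕ) : Function.Injective (decT x) := by
  intro n m h
  simp only [decT, Lab.t.injEq] at h
  omega

lemma decG_inj (w x z : ℕ) : Function.Injective (decG w x z) := by
  intro n m h
  simp only [decG] at h
  split_ifs at h <;> simp only [Lab.c.injEq, Lab.u.injEq] at h <;> omega

lemma decT_mem (x y z N n : ℕ) (h : n < 3 * N) : decT x n ∈ Bx x N y 0 z 0 := by
  simp only [decT, Bx, Set.mem_ofPred_eq]
  omega

lemma decG_mem (w x y z N n : ℕ) (h : n < 4 * (w + N)) :
    decG w y z n ∈ Bx x 0 y N z (4 * w) := by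
  unfold decG
  split_ifs with h1 <;> simp only [Bx, Set.mem_ofPred_eq] <;> omega

/-- Translation-invariant version of `P`: arrays for every choice of offsets. -/
def A (v : Lab → ℤ) (p q n m l : ℕ) : Prop := ∀ x y z, P v p q (Bx x n y m z l)

lemma A.transpose {v : Lab → ℤ} {p q n m l : ℕ} (h : A v p q n m l) : A v q p n m l :=
  fun x y z => (h x y z).transpose

lemma A.hglue {v : Lab → ℤ} {p q q' n m l n' m' l' : ℕ} (h : A v p q n m l)
    (h' : A v p q' n' m' l') : A v p (q + q') (n + n') (m + m') (l + l') :=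
  fun x y z => ((h x y z).hglue (h' (x + n) (y + m) (z + l)) (Bx_disj ..)).mono (Bx_union ..)

lemma A.vglue {v : Lab → ℤ} {p p' q n m l n' m' l' : ℕ} (h : A v p q n m l)
    (h' : A v p' q n' m' l') : A v (p + p') q (n + n') (m + m') (l + l') :=
  (h.transpose.hglue h'.transpose).transpose

lemma A.cast {v : Lab → ℤ} {p q n m l p' q' n' m' l' : ℕ} (h : A v p q n m l)
    (hp : p = p') (hq : q = q') (hn : n = n') (hm : m = m') (hl : l = l') :
    A v p' q' n' m' l' := by
  subst hp hq hn hm hl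
  exact h

def tpl34 : Fin 3 → Fin 4 → ℤ :=
  ![![1, -4, -7, 10],
    ![2, -5, -8, 11],
    ![-3, 6, 9, -12]]

def tpl36 : Fin 3 → Fin 6 → ℤ :=
  ![![1, -4, -9, 12, 14, -17],
    ![2, -5, 7, -10, -15, 18],
    ![-3, 6, 8, -11, 13, -16]]

def tpl37 : Fin 3 → Fin 7 → ℤ :=
  ![![1, 5, -9, -10, 13, -18, 21],
    ![2, -6, 7, -11, 14, 16, -19],
    ![-3, 4, 8, 12, -15, 17, -20]]

def tpl39 : Fin 3 → Fin 9 → ℤ :=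
  ![![1, 5, -9, -10, 13, -16, 19, -23, 26],
    ![2, -6, 7, -11, 14, -17, 20, 24, -27],
    ![-3, 4, 8, 12, -15, 18, -21, -22, 25]]

def tpl440 : Fin 4 → Fin 4 → ℤ :=
  ![![5, -7, 3, -1],
    ![-6, 8, -4, 2],
    ![10, -12, 16, -14],
    ![-9, 11, -15, 13]]

def tpl640 : Fin 6 → Fin 4 → ℤ :=
  ![![6, -8, 3, -1],
    ![-5, 7, -4, 2],
    ![10, -12, 19, -17],
    ![-9, 11, -20, 18],
    ![22, -21, 15, -16],
    ![-24, 23, -13, 14]]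

def tpl443 : Fin 4 → Fin 4 → ℤ :=
  ![![-2, -7, 5, 4],
    ![1, 12, -3, -10],
    ![-8, 6, 14, -13],
    ![9, -11, -15, 16]]

def tpl643 : Fin 6 → Fin 4 → ℤ :=
  ![![10, -9, 6, -7],
    ![-12, 11, 3, -2],
    ![13, -16, 24, -21],
    ![-15, 14, -22, 23],
    ![20, -18, -8, 4],
    ![-17, 19, -5, 1]]

def tpl662 : Fin 6 → Fin 6 → ℤ :=
  ![![10, -12, 14, -15, 20, -17],
    ![-9, 11, -16, 13, -18, 19],
    ![-8, 6, 30, -31, 35, -33],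
    ![-4, 2, -29, 32, -36, 34],
    ![3, -5, 28, -25, 22, -24],
    ![7, -1, -27, 26, -23, 21]]

def tpl663 : Fin 6 → Fin 6 → ℤ :=
  ![![10, -7, 2, -11, 28, -25],
    ![1, -8, -4, 9, -26, 27],
    ![15, -14, 22, -21, 34, -36],
    ![-13, 16, -24, 23, -35, 33],
    ![-12, 6, 32, -31, 19, -17],
    ![-3, 5, -29, 30, -20, 18]]

lemma H34 (r y : ℤ) (u : ℕ → ℤ) : A (val r y u) 3 4 4 0 0 := by
  intro x y' z
  refine of_tpl tpl34 (decT x) _ (decT_inj x) (fun n hn => decT_mem x y' z 4 n (by omega))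
    (by decide +kernel) (by decide +kernel) ?_ ?_ <;>
  · intro i
    fin_cases i <;> simp [Fin.sum_univ_succ, tpl34, decT, val, sg] <;> ring

lemma H36 (r y : ℤ) (u : ℕ → ℤ) : A (val r y u) 3 6 6 0 0 := by
  intro x y' z
  refine of_tpl tpl36 (decT x) _ (decT_inj x) (fun n hn => decT_mem x y' z 6 n (by omega))
    (by decide +kernel) (by decide +kernel) ?_ ?_ <;>
  · intro i
    fin_cases i <;> simp [Fin.sum_univ_succ, tpl36, decT, val, sg] <;> ring

lemma H37 (r y : ℤ) (u : ℕ → ℤ) : A (val r y u) 3 7 7 0 0 := by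
  intro x y' z
  refine of_tpl tpl37 (decT x) _ (decT_inj x) (fun n hn => decT_mem x y' z 7 n (by omega))
    (by decide +kernel) (by decide +kernel) ?_ ?_ <;>
  · intro i
    fin_cases i <;> simp [Fin.sum_univ_succ, tpl37, decT, val, sg] <;> ring

lemma H39 (r y : ℤ) (u : ℕ → ℤ) : A (val r y u) 3 9 9 0 0 := by
  intro x y' z
  refine of_tpl tpl39 (decT x) _ (decT_inj x) (fun n hn => decT_mem x y' z 9 n (by omega))
    (by decide +kernel) (by decide +kernel) ?_ ?_ <;>
  · intro i
    fin_cases i <;> simp [Fin.sum_univ_succ, tpl39, decT, val, sg] <;> ring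

lemma G440 (r y : ℤ) (u : ℕ → ℤ) : A (val r y u) 4 4 0 4 0 := by
  intro x y' z
  refine of_tpl tpl440 (decG 0 y' z) _ (decG_inj 0 y' z)
    (fun n hn => decG_mem 0 x y' z 4 n (by omega))
    (by decide +kernel) (by decide +kernel) ?_ ?_ <;>
  · intro i
    fin_cases i <;> simp [Fin.sum_univ_succ, tpl440, decG, val, sg] <;> ring

lemma G640 (r y : ℤ) (u : ℕ → ℤ) : A (val r y u) 6 4 0 6 0 := by
  intro x y' z
  refine of_tpl tpl640 (decG 0 y' z) _ (decG_inj 0 y' z)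
    (fun n hn => decG_mem 0 x y' z 6 n (by omega))
    (by decide +kernel) (by decide +kernel) ?_ ?_ <;>
  · intro i
    fin_cases i <;> simp [Fin.sum_univ_succ, tpl640, decG, val, sg] <;> ring

lemma G443 (r y : ℤ) (u : ℕ → ℤ) : A (val r y u) 4 4 0 1 12 := by
  intro x y' z
  refine of_tpl tpl443 (decG 3 y' z) _ (decG_inj 3 y' z)
    (fun n hn => decG_mem 3 x y' z 1 n (by omega))
    (by decide +kernel) (by decide +kernel) ?_ ?_ <;>
  · intro i
    fin_cases i <;> simp [Fin.sum_univ_succ, tpl443, decG, val, sg] <;> ring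

lemma G643 (r y : ℤ) (u : ℕ → ℤ) : A (val r y u) 6 4 0 3 12 := by
  intro x y' z
  refine of_tpl tpl643 (decG 3 y' z) _ (decG_inj 3 y' z)
    (fun n hn => decG_mem 3 x y' z 3 n (by omega))
    (by decide +kernel) (by decide +kernel) ?_ ?_ <;>
  · intro i
    fin_cases i <;> simp [Fin.sum_univ_succ, tpl643, decG, val, sg] <;> ring

lemma G662 (r y : ℤ) (u : ℕ → ℤ) : A (val r y u) 6 6 0 7 8 := by
  intro x y' z
  refine of_tpl tpl662 (decG 2 y' z) _ (decG_inj 2 y' z)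
    (fun n hn => decG_mem 2 x y' z 7 n (by omega))
    (by decide +kernel) (by decide +kernel) ?_ ?_ <;>
  · intro i
    fin_cases i <;> simp [Fin.sum_univ_succ, tpl662, decG, val, sg] <;> ring

lemma G663 (r y : ℤ) (u : ℕ → ℤ) : A (val r y u) 6 6 0 6 12 := by
  intro x y' z
  refine of_tpl tpl663 (decG 3 y' z) _ (decG_inj 3 y' z)
    (fun n hn => decG_mem 3 x y' z 6 n (by omega))
    (by decide +kernel) (by decide +kernel) ?_ ?_ <;>
  · intro i
    fin_cases i <;> simp [Fin.sum_univ_succ, tpl663, decG, val, sg] <;> ring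

lemma trip (r y : ℤ) (u : ℕ → ℤ) (s : ℕ) (hs : 4 ≤ s) (hs5 : s ≠ 5) :
    A (val r y u) 3 s s 0 0 := by
  induction s using Nat.strong_induction_on with
  | _ s ih =>
    by_cases h4 : s = 4
    · subst h4; exact H34 r y u
    by_cases h6 : s = 6
    · subst h6; exact H36 r y u
    by_cases h7 : s = 7
    · subst h7; exact H37 r y u
    by_cases h9 : s = 9
    · subst h9; exact H39 r y u
    have h := ih (s - 4) (by omega) (by omega) (by omega)
    exact (h.hglue (H34 r y u)).cast rfl (by omega) (by omega) rfl rfl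

lemma unit4 (r y : ℤ) (u : ℕ → ℤ) (b : ℕ) (hb : 2 ≤ b) :
    A (val r y u) 4 (2 * b) 0 (2 * b) 0 := by
  induction b using Nat.strong_induction_on with
  | _ b ih =>
    by_cases h4 : b = 2
    · subst h4; exact G440 r y u
    by_cases h6 : b = 3
    · subst h6; exact (G640 r y u).transpose
    have h := ih (b - 2) (by omega) (by omega)
    exact (h.hglue (G440 r y u)).cast rfl (by omega) rfl (by omega) rfl

lemma growA (r y : ℤ) (u : ℕ → ℤ) (a b N l : ℕ) (hb : 2 ≤ b)
    (h : A (val r y u) (2 * a) (2 * b) 0 N l) (i : ℕ) :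
    A (val r y u) (2 * (a + 2 * i)) (2 * b) 0 (N + 2 * i * b) l := by
  induction i with
  | zero => exact h.cast (by omega) rfl rfl (by simp) rfl
  | succ i ih =>
    exact (ih.vglue (unit4 r y u b hb)).cast (by omega) rfl rfl (by ring) rfl

lemma grow (r y : ℤ) (u : ℕ → ℤ) (a b N l : ℕ) (ha : 2 ≤ a) (hb : 2 ≤ b)
    (h : A (val r y u) (2 * a) (2 * b) 0 N l) (i j N' : ℕ)
    (hN : N' + a * b = N + (a + 2 * i) * (b + 2 * j)) :
    A (val r y u) (2 * (a + 2 * i)) (2 * (b + 2 * j)) 0 N' l := by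
  have h1 := growA r y u a b N l hb h i
  have h2 := (growA r y u b (a + 2 * i) _ l (by omega) h1.transpose j).transpose
  exact h2.cast rfl rfl rfl (by nlinarith) rfl

lemma split2 (a : ℕ) (ha : 2 ≤ a) : ∃ i, a = 2 + 2 * i ∨ a = 3 + 2 * i :=
  ⟨(a - 2) / 2, by omega⟩

lemma grid0 (r y : ℤ) (u : ℕ → ℤ) (a b : ℕ) (ha : 2 ≤ a) (hb : 2 ≤ b)
    (hab : a % 2 = 0 ∨ b % 2 = 0) : A (val r y u) (2 * a) (2 * b) 0 (a * b) 0 := by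
  obtain ⟨i, hi⟩ := split2 a ha
  obtain ⟨j, hj⟩ := split2 b hb
  rcases hi with rfl | rfl <;> rcases hj with rfl | rfl
  · exact grow r y u 2 2 4 0 le_rfl le_rfl (G440 r y u) i j _ (by ring)
  · exact grow r y u 2 3 6 0 (by omega) (by omega) (G640 r y u).transpose i j _ (by ring)
  · exact grow r y u 3 2 6 0 (by omega) (by omega) (G640 r y u) i j _ (by ring)
  · omega

lemma grid3 (r y : ℤ) (u : ℕ → ℤ) (a b N : ℕ) (ha : 2 ≤ a) (hb : 2 ≤ b)
    (hN : N + 3 = a * b) : A (val r y u) (2 * a) (2 * b) 0 N 12 := by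
  obtain ⟨i, hi⟩ := split2 a ha
  obtain ⟨j, hj⟩ := split2 b hb
  rcases hi with rfl | rfl <;> rcases hj with rfl | rfl
  · exact grow r y u 2 2 1 12 le_rfl le_rfl (G443 r y u) i j _ (by omega)
  · exact grow r y u 2 3 3 12 (by omega) (by omega) (G643 r y u).transpose i j _ (by omega)
  · exact grow r y u 3 2 3 12 (by omega) (by omega) (G643 r y u) i j _ (by omega)
  · exact grow r y u 3 3 6 12 (by omega) (by omega) (G663 r y u) i j _ (by omega)

lemma grid2 (r y : ℤ) (u : ℕ → ℤ) (a b N : ℕ) (ha : 2 ≤ a) (hb : 2 ≤ b)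
    (ha2 : a % 2 = 1) (hb2 : b % 2 = 1)
    (hN : N + 2 = a * b) : A (val r y u) (2 * a) (2 * b) 0 N 8 := by
  obtain ⟨i, hi⟩ := split2 a ha
  obtain ⟨j, hj⟩ := split2 b hb
  rcases hi with rfl | rfl <;> rcases hj with rfl | rfl
  · omega
  · omega
  · omega
  · exact grow r y u 3 3 7 8 (by omega) (by omega) (G662 r y u) i j _ (by omega)

/-- A set of `c` arrays with pairwise distinct labels. -/
def Q (v : Lab → ℤ) (k s c n m l : ℕ) : Prop :=
  ∃ (L : ℕ → Fin k → Fin s → Lab) (e : ℕ → Fin k → Fin s → ℤ),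
    (∀ t i j, e t i j = 1 ∨ e t i j = -1) ∧
    (∀ t < c, ∀ i, ∑ j, e t i j * v (L t i j) = 0) ∧
    (∀ t < c, ∀ j, ∑ i, e t i j * v (L t i j) = 0) ∧
    (∀ t < c, ∀ t' < c, ∀ i j i' j', L t i j = L t' i' j' → t = t' ∧ i = i' ∧ j = j') ∧
    (∀ t < c, ∀ i j, L t i j ∈ Bx 0 n 0 m 0 l)

lemma Q.zero (v : Lab → ℤ) (k s : ℕ) : Q v k s 0 0 0 0 :=
  ⟨fun _ _ _ => Lab.c 0, fun _ _ _ => 1, by simp, by simp, by simp, by simp, by simp⟩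

lemma Q.step {v : Lab → ℤ} {k s c n m l n' m' l' : ℕ} (h : Q v k s c n m l)
    (h' : A v k s n' m' l') : Q v k s (c + 1) (n + n') (m + m') (l + l') := by
  obtain ⟨L, e, h1, h2, h3, h4, h5⟩ := h
  obtain ⟨L', e', h1', h2', h3', h4', h5'⟩ := h' (0 + n) (0 + m) (0 + l)
  have hd := Set.disjoint_left.1 (Bx_disj 0 n 0 m 0 l n' m' l')
  have hu := Bx_union 0 n 0 m 0 l n' m' l'
  refine ⟨fun t => if t < c then L t else L', fun t => if t < c then e t else e', ?_, ?_, ?_,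
    ?_, ?_⟩
  · intro t i j
    by_cases ht : t < c
    · simpa [ht] using h1 t i j
    · simpa [ht] using h1' i j
  · intro t _ i
    by_cases ht : t < c
    · simpa [ht] using h2 t ht i
    · simpa [ht] using h2' i
  · intro t _ i
    by_cases ht : t < c
    · simpa [ht] using h3 t ht i
    · simpa [ht] using h3' i
  · intro t htc t' htc' i j i' j' hl
    by_cases ht : t < c <;> by_cases ht' : t' < c <;> simp only [ht, ht', if_true, if_false] at hl
    · exact h4 t ht t' ht' i j i' j' hl
    · exact absurd (hl ▸ h5' i' j') (hd (h5 t ht i j))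
    · exact absurd (hl ▸ h5' i j) (hd (h5 t' ht' i' j'))
    · exact ⟨by omega, h4' i j i' j' hl⟩
  · intro t _ i j
    by_cases ht : t < c
    · simpa [ht] using hu (Or.inl (h5 t ht i j))
    · simpa [ht] using hu (Or.inr (h5' i j))

lemma Q.steps {v : Lab → ℤ} {k s c n m l n' m' l' : ℕ} (h : Q v k s c n m l)
    (h' : A v k s n' m' l') (d : ℕ) :
    Q v k s (c + d) (n + d * n') (m + d * m') (l + d * l') := by
  induction d with
  | zero => simpa using h
  | succ d ih =>
    have h2 := ih.step h'
    convert h2 using 1 <;> ring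

/-- The starting points of the units. -/
def us (T E NC j : ℕ) : ℕ :=
  if j < E then 2 + 8 * j else 3 * T + 4 * E + 1 + NC + 8 * ((j - E) / 2) + (j - E) % 2

/-- The concrete values. -/
def vv (T E NC : ℕ) : Lab → ℤ :=
  val ((2 * T + 4 * E : ℕ) : ℤ) ((3 * T + 4 * E + 1 : ℕ) : ℤ) (fun j => (us T E NC j : ℤ))

lemma vv_t (T E NC i a : ℕ) (ha : a < 3) :
    (a = 0 ∧ vv T E NC (Lab.t i a) = 2 * i + 1) ∨
    (a = 1 ∧ vv T E NC (Lab.t i a) = 2 * T + 4 * E - i) ∨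
    (a = 2 ∧ vv T E NC (Lab.t i a) = 2 * T + 4 * E + 1 + i) := by
  interval_cases a <;> simp [vv, val]

lemma vv_u (T E NC j h : ℕ) :
    (j < E ∧ vv T E NC (Lab.u j h) = 2 + 8 * j + 2 * h) ∨
    (∃ g e : ℕ, j = E + 2 * g + e ∧ e < 2 ∧
      vv T E NC (Lab.u j h) = 3 * T + 4 * E + 1 + NC + 8 * g + e + 2 * h) := by
  by_cases hj : j < E
  · left
    simp [vv, val, us, hj]
  · right
    refine ⟨(j - E) / 2, (j - E) % 2, by omega, by omega, ?_⟩
    simp [vv, val, us, hj]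

lemma vv_c (T E NC n : ℕ) : vv T E NC (Lab.c n) = 3 * T + 4 * E + 1 + n := by
  simp [vv, val]

lemma vv_range (T E NC NU g K : ℕ) (h1 : 4 * E ≤ T) (h2 : T ≤ 4 * E + 1)
    (h3 : NU = E + 2 * g) (hK : K = 3 * T + 4 * E + NC + 8 * g) (b : Lab)
    (hb : b ∈ Bx 0 T 0 NU 0 NC) : 1 ≤ vv T E NC b ∧ vv T E NC b ≤ K := by
  rcases b with ⟨i, a⟩ | ⟨j, h⟩ | n <;> simp only [Bx, Set.mem_ofPred_eq] at hb
  · have := vv_t T E NC i a hb.2.2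
    omega
  · rcases vv_u T E NC j h with h4 | ⟨g', e, h4⟩ <;> omega
  · have := vv_c T E NC n
    omega

lemma vv_inj (T E NC NU g : ℕ) (h1 : 4 * E ≤ T) (h2 : T ≤ 4 * E + 1)
    (h3 : NU = E + 2 * g) (b b' : Lab)
    (hb : b ∈ Bx 0 T 0 NU 0 NC) (hb' : b' ∈ Bx 0 T 0 NU 0 NC)
    (hv : vv T E NC b = vv T E NC b') : b = b' := by
  rcases b with ⟨i, a⟩ | ⟨j, h⟩ | n <;> rcases b' with ⟨i', a'⟩ | ⟨j', h'⟩ | n' <;>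
    simp only [Bx, Set.mem_ofPred_eq] at hb hb'
  · have := vv_t T E NC i a hb.2.2
    have := vv_t T E NC i' a' hb'.2.2
    rw [Lab.t.injEq]
    omega
  · have := vv_t T E NC i a hb.2.2
    exfalso
    rcases vv_u T E NC j' h' with h4 | ⟨g', e, h4⟩ <;> omega
  · have := vv_t T E NC i a hb.2.2
    have := vv_c T E NC n'
    omega
  · have := vv_t T E NC i' a' hb'.2.2
    exfalso
    rcases vv_u T E NC j h with h4 | ⟨g', e, h4⟩ <;> omega
  · rw [Lab.u.injEq]
    rcases vv_u T E NC j h with h4 | ⟨g1, e1, h4⟩ <;>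
      rcases vv_u T E NC j' h' with h5 | ⟨g2, e2, h5⟩ <;> omega
  · have := vv_c T E NC n'
    exfalso
    rcases vv_u T E NC j h with h4 | ⟨g', e, h4⟩ <;> omega
  · have := vv_t T E NC i' a' hb'.2.2
    have := vv_c T E NC n
    omega
  · have := vv_c T E NC n
    exfalso
    rcases vv_u T E NC j' h' with h4 | ⟨g', e, h4⟩ <;> omega
  · have := vv_c T E NC n
    have := vv_c T E NC n'
    rw [Lab.c.injEq]
    omega

/-- A set of `c` tight arrays with entries of distinct absolute values in `1, …, K`. -/
def HSet (k s c K : ℕ) : Prop :=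
  ∃ F : ℕ → Fin k → Fin s → ℤ,
    (∀ t < c, ∀ i, ∑ j, F t i j = 0) ∧ (∀ t < c, ∀ j, ∑ i, F t i j = 0) ∧
    (∀ t < c, ∀ t' < c, ∀ i j i' j', |F t i j| = |F t' i' j'| → t = t' ∧ i = i' ∧ j = j') ∧
    (∀ t < c, ∀ i j, 1 ≤ |F t i j| ∧ |F t i j| ≤ K)

lemma HSet_of_Q (k s c T E NC NU g K : ℕ) (h1 : 4 * E ≤ T) (h2 : T ≤ 4 * E + 1)
    (h3 : NU = E + 2 * g) (hK : K = 3 * T + 4 * E + NC + 8 * g)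
    (h : Q (vv T E NC) k s c T NU NC) : HSet k s c K := by
  obtain ⟨L, e, q1, q2, q3, q4, q5⟩ := h
  have habs : ∀ t < c, ∀ i j, |e t i j * vv T E NC (L t i j)| = vv T E NC (L t i j) := by
    intro t ht i j
    have := vv_range T E NC NU g K h1 h2 h3 hK _ (q5 t ht i j)
    rw [abs_mul, abs_of_nonneg (a := vv T E NC (L t i j)) (by omega)]
    rcases q1 t i j with h | h <;> simp [h]
  refine ⟨fun t i j => e t i j * vv T E NC (L t i j), q2, q3, ?_, ?_⟩
  · intro t ht t' ht' i j i' j' heq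
    simp only [habs t ht, habs t' ht'] at heq
    exact q4 t ht t' ht' _ _ _ _
      (vv_inj T E NC NU g h1 h2 h3 _ _ (q5 t ht i j) (q5 t' ht' i' j') heq)
  · intro t ht i j
    simp only [habs t ht]
    exact vv_range T E NC NU g K h1 h2 h3 hK _ (q5 t ht i j)

/-- Assembling one array with run length `4 * w1` and `d` arrays with run length `4 * w0`. -/
lemma assemble (k s d τ w0 w1 N0 N1 AB F K : ℕ)
    (H0 : ∀ r y u, A (val r y u) k s τ N0 (4 * w0))
    (H1 : ∀ r y u, A (val r y u) k s τ N1 (4 * w1))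
    (hN0 : N0 + w0 = AB) (hN1 : N1 + w1 = AB)
    (hT : (d + 1) * τ % 4 ≤ 1)
    (hF : (d + 1) * AB = (d + 1) * τ / 4 + F)
    (hle : w1 + d * w0 ≤ F) (hpar : (F - (w1 + d * w0)) % 2 = 0)
    (hK : K = 3 * ((d + 1) * τ) + 4 * ((d + 1) * AB)) : HSet k s (d + 1) K := by
  have hq := ((Q.zero (vv ((d + 1) * τ) ((d + 1) * τ / 4) (4 * (w1 + d * w0))) k s).step
    (H1 _ _ _)).steps (H0 _ _ _) d
  have e1 : 0 + τ + d * τ = (d + 1) * τ := by ring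
  have e2 : 0 + 4 * w1 + d * (4 * w0) = 4 * (w1 + d * w0) := by ring
  have e4 : 0 + 1 + d = d + 1 := by ring
  have e3 : (N1 + d * N0) + (w1 + d * w0) = (d + 1) * AB := by
    rw [← hN0] at hN1 ⊢
    nlinarith
  rw [e1, e2] at hq
  generalize hTT : (d + 1) * τ = T at *
  generalize w1 + d * w0 = W at *
  generalize (d + 1) * AB = M at *
  refine HSet_of_Q k s (d + 1) T (T / 4) (4 * W) (0 + N1 + d * N0) ((F - W) / 2) K ?_ ?_ ?_ ?_
    (by rw [← e4]; exact hq)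
  · omega
  · omega
  · generalize d * N0 = Z at *
    omega
  · omega

lemma main_abs (k s d τ a b K : ℕ) (ha : 2 ≤ a) (hb : 2 ≤ b)
    (HA : ∀ r y u N l, A (val r y u) (2 * a) (2 * b) 0 N l → A (val r y u) k s τ N l)
    (hT : (d + 1) * τ % 4 ≤ 1)
    (h11 : τ + 11 ≤ 4 * (a * b))
    (h21 : 3 ≤ a → 3 ≤ b → τ + 21 ≤ 4 * (a * b))
    (hK : K = 3 * ((d + 1) * τ) + 4 * ((d + 1) * (a * b))) : HSet k s (d + 1) K := by
  have hab : 4 ≤ a * b := by nlinarith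
  have hmul : (d + 1) * τ + 11 * (d + 1) ≤ 4 * ((d + 1) * (a * b)) := by nlinarith
  obtain ⟨F, hF⟩ : ∃ F, (d + 1) * (a * b) = (d + 1) * τ / 4 + F :=
    ⟨(d + 1) * (a * b) - (d + 1) * τ / 4, by omega⟩
  have G3 : ∀ r y u, A (val r y u) k s τ (a * b - 3) (4 * 3) := fun r y u =>
    HA _ _ _ _ _ (grid3 r y u a b _ ha hb (by omega))
  by_cases hodd : a % 2 = 1 ∧ b % 2 = 1
  · have h21' := h21 (by omega) (by omega)
    have hmul' : (d + 1) * τ + 21 * (d + 1) ≤ 4 * ((d + 1) * (a * b)) := by nlinarith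
    have G2 : ∀ r y u, A (val r y u) k s τ (a * b - 2) (4 * 2) := fun r y u =>
      HA _ _ _ _ _ (grid2 r y u a b _ ha hb hodd.1 hodd.2 (by omega))
    by_cases hp : F % 2 = 0
    · exact assemble k s d τ 2 2 _ _ (a * b) F K G2 G2 (by omega) (by omega) hT hF (by omega)
        (by omega) hK
    · exact assemble k s d τ 2 3 _ _ (a * b) F K G2 G3 (by omega) (by omega) hT hF (by omega)
        (by omega) hK
  · have G0 : ∀ r y u, A (val r y u) k s τ (a * b) (4 * 0) := fun r y u =>
      HA _ _ _ _ _ (grid0 r y u a b ha hb (by omega))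
    by_cases hp : F % 2 = 0
    · exact assemble k s d τ 0 0 _ _ (a * b) F K G0 G0 (by omega) (by omega) hT hF (by omega)
        (by omega) hK
    · exact assemble k s d τ 0 3 _ _ (a * b) F K G0 G3 (by omega) (by omega) hT hF (by omega)
        (by omega) hK

lemma HSet_even (k s d : ℕ) (hk : 7 ≤ k) (hk2 : k % 2 = 1) (hs : 4 ≤ s) (hs2 : s % 2 = 0)
    (hmod : (d + 1) * s * k % 4 = 0 ∨ (d + 1) * s * k % 4 = 3) :
    HSet k s (d + 1) ((d + 1) * s * k) := by
  obtain ⟨a, rfl⟩ : ∃ a, k = 3 + 2 * a := ⟨(k - 3) / 2, by omega⟩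
  obtain ⟨b, rfl⟩ : ∃ b, s = 2 * b := ⟨s / 2, by omega⟩
  have ha : 2 ≤ a := by omega
  have hb : 2 ≤ b := by omega
  refine main_abs _ _ d (2 * b) a b _ ha hb ?_ ?_ (by nlinarith) (fun _ _ => by nlinarith)
    (by ring)
  · intro r y u N l h
    exact ((trip r y u (2 * b) (by omega) (by omega)).vglue h).cast rfl rfl rfl (by omega)
      (by omega)
  · have e : (d + 1) * (2 * b) = 2 * ((d + 1) * b) := by ring
    have e2 : (d + 1) * (2 * b) * (3 + 2 * a) = 6 * ((d + 1) * b) + 4 * ((d + 1) * b * a) := by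
      ring
    rw [e2] at hmod
    rw [e]
    omega

lemma HSet_odd (k s d : ℕ) (hk : 7 ≤ k) (hk2 : k % 2 = 1) (hs : 7 ≤ s) (hs2 : s % 2 = 1)
    (hne : s ≠ k)
    (hmod : (d + 1) * s * k % 4 = 0 ∨ (d + 1) * s * k % 4 = 3) :
    HSet k s (d + 1) ((d + 1) * s * k) := by
  obtain ⟨a, rfl⟩ : ∃ a, k = 3 + 2 * a := ⟨(k - 3) / 2, by omega⟩
  obtain ⟨b, rfl⟩ : ∃ b, s = 3 + 2 * b := ⟨(s - 3) / 2, by omega⟩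
  have ha : 2 ≤ a := by omega
  have hb : 2 ≤ b := by omega
  have hab : a < b ∨ b < a := by omega
  refine main_abs _ _ d (3 + 2 * b + 2 * a) a b _ ha hb ?_ ?_ ?_ (fun _ _ => by nlinarith)
    (by ring)
  · intro r y u N l h
    exact ((trip r y u (3 + 2 * b) (by omega) (by omega)).vglue
      (((trip r y u (2 * a) (by omega) (by omega)).transpose).hglue h)).cast rfl rfl
      (by omega) (by omega) (by omega)
  · have e2 : (d + 1) * (3 + 2 * b) * (3 + 2 * a) + 4 * ((d + 1) * a + (d + 1) * b)
        = 9 * (d + 1) + 10 * ((d + 1) * (a + b)) + 4 * ((d + 1) * a * b) := by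
      ring
    have e : (d + 1) * (3 + 2 * b + 2 * a) = 3 * (d + 1) + 2 * ((d + 1) * (a + b)) := by ring
    rw [e]
    generalize (d + 1) * (a + b) = X at *
    omega
  · rcases hab with h | h <;> nlinarith

lemma heffter_of_HSet (k s c : ℕ) (h : HSet k s c (c * s * k)) :
    ∃ M : Matrix (Fin (c * k)) (Fin (c * s)) ℤ, IsIntegerHeffterArray (c * k) (c * s) s k M := by
  obtain ⟨F, h1, h2, h3, h4⟩ := h
  let f : Fin c × Fin k → Fin c × Fin s → ℤ := fun x y => if x.1 = y.1 then F x.1 x.2 y.2 else 0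
  have hf0 : ∀ x y, f x y ≠ 0 ↔ x.1 = y.1 := by
    intro x y
    by_cases hxy : x.1 = y.1
    · have := (h4 x.1 x.1.2 x.2 y.2).1
      simp only [f, hxy, if_true, iff_true]
      rw [hxy] at this
      intro h0
      rw [h0] at this
      simp at this
    · simp [f, hxy]
  have hfv : ∀ x y, f x y ≠ 0 → f x y = F x.1 x.2 y.2 := by
    intro x y hxy
    simp [f, (hf0 x y).1 hxy]
  refine ⟨fun i j => f (finProdFinEquiv.symm i) (finProdFinEquiv.symm j), ?_, ?_, ?_, ?_, ?_, ?_⟩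
  · intro i
    obtain ⟨x, rfl⟩ := finProdFinEquiv.surjective i
    simp only [Equiv.symm_apply_apply, hf0]
    rw [← Fintype.card_subtype]
    refine (Fintype.card_congr (β := Fin s) ⟨fun j => (finProdFinEquiv.symm j.1).2,
      fun j => ⟨finProdFinEquiv (x.1, j), by simp⟩, ?_, ?_⟩).trans (Fintype.card_fin _)
    · rintro ⟨j, hj⟩
      apply Subtype.ext
      simp only [hj, Prod.mk.eta, Equiv.apply_symm_apply]
    · intro j
      simp
  · intro j
    obtain ⟨y, rfl⟩ := finProdFinEquiv.surjective j
    simp only [Equiv.symm_apply_apply, hf0]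
    rw [← Fintype.card_subtype]
    refine (Fintype.card_congr (β := Fin k) ⟨fun j => (finProdFinEquiv.symm j.1).2,
      fun j => ⟨finProdFinEquiv (y.1, j), by simp⟩, ?_, ?_⟩).trans (Fintype.card_fin _)
    · rintro ⟨j, hj⟩
      apply Subtype.ext
      simp only [← hj, Prod.mk.eta, Equiv.apply_symm_apply]
    · intro j
      simp
  · intro i j hij
    beta_reduce at hij ⊢
    rw [hfv _ _ hij]
    have := h4 _ (finProdFinEquiv.symm i).1.2 (finProdFinEquiv.symm i).2 (finProdFinEquiv.symm j).2
    push_cast at this ⊢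
    exact this
  · intro i j i' j' hij hij' heq
    beta_reduce at hij hij' heq
    rw [hfv _ _ hij, hfv _ _ hij'] at heq
    obtain ⟨q1, q2, q3⟩ := h3 _ (finProdFinEquiv.symm i).1.2 _ (finProdFinEquiv.symm i').1.2
      _ _ _ _ heq
    have p1 := (hf0 _ _).1 hij
    have p2 := (hf0 _ _).1 hij'
    have q1' := Fin.ext q1
    have r1 : i = i' := finProdFinEquiv.symm.injective (Prod.ext q1' q2)
    have r2 : j = j' := finProdFinEquiv.symm.injective
      (Prod.ext (p1.symm.trans (q1'.trans p2)) q3)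
    rw [r1, r2]
  · intro i
    obtain ⟨x, rfl⟩ := finProdFinEquiv.surjective i
    rw [← finProdFinEquiv.sum_comp]
    simp only [Equiv.symm_apply_apply, Fintype.sum_prod_type, f]
    rw [Finset.sum_eq_single x.1]
    · simpa using h1 _ x.1.2 x.2
    · intro b _ hb
      simp [hb.symm]
    · simp
  · intro j
    obtain ⟨y, rfl⟩ := finProdFinEquiv.surjective j
    rw [← finProdFinEquiv.sum_comp]
    simp only [Equiv.symm_apply_apply, Fintype.sum_prod_type, f]
    rw [Finset.sum_eq_single y.1]
    · simpa using h2 _ y.1.2 y.2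
    · intro b _ hb
      simp [hb]
    · simp

end Heff

theorem exists_integer_heffter_of_coprime
    (m n s k : ℕ)
    (hs3 : 3 ≤ s) (hsn : s ≤ n) (hk3 : 3 ≤ k) (hkm : k ≤ m)
    (hms : m * s = n * k)
    (hmod : n * k % 4 = 0 ∨ n * k % 4 = 3)
    (hkodd : Odd k)
    (hcop : Nat.Coprime s k) (hk7 : 7 ≤ k)
    (hs : s ≠ 3 ∧ s ≠ 5 ∧ s ≠ 6 ∧ s ≠ 10) :
    ∃ A : Matrix (Fin m) (Fin n) ℤ, IsIntegerHeffterArray m n s k A := by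
  have hdvd : k ∣ m := by
    apply hcop.symm.dvd_of_dvd_mul_right
    rw [hms]
    exact Dvd.intro_left n rfl
  obtain ⟨c, hc⟩ := hdvd
  have hm : m = c * k := by rw [hc, mul_comm]
  have hn : n = c * s := by
    have : n * k = (c * s) * k := by rw [← hms, hm]; ring
    exact Nat.eq_of_mul_eq_mul_right (by omega) this
  subst hm hn
  have hk2 : k % 2 = 1 := Nat.odd_iff.1 hkodd
  obtain ⟨d, rfl⟩ : ∃ d, c = d + 1 := by
    rcases c with _ | d
    · omega
    · exact ⟨d, rfl⟩
  apply Heff.heffter_of_HSet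
  rcases Nat.mod_two_eq_zero_or_one s with h2 | h2
  · exact Heff.HSet_even k s d hk7 hk2 (by omega) h2 hmod
  · refine Heff.HSet_odd k s d hk7 hk2 (by omega) h2 ?_ hmod
    rintro rfl
    have := (Nat.coprime_self s).1 hcop
    omega
end

section
/- Let m, n, c be positive integers such that m·n·c ≡ 0 or 3 (mod 4), and suppose that m ≥ 7 and n ≥ 7 are both odd. Then there exists an integer Heffter array set IHS(m, n; c). -/
/-- An integer Heffter array set `IHS(m, n; c)`: a family of `c` totally filled
`m × n` integer arrays such that the absolute values of all `c·m·n` entries are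
pairwise distinct and their set is exactly `{1, …, m·n·c}`, and every row and
column of each array sums to `0`. -/
def IsIHS (m n c : ℕ) (A : Fin c → Matrix (Fin m) (Fin n) ℤ) : Prop :=
  Function.Injective (fun p : Fin c × Fin m × Fin n => |A p.1 p.2.1 p.2.2|) ∧
  (∀ x : ℤ, (1 ≤ x ∧ x ≤ (m : ℤ) * n * c) ↔ ∃ l i j, |A l i j| = x) ∧
  (∀ l i, ∑ j, A l i j = 0) ∧
  (∀ l j, ∑ i, A l i j = 0)

/-- There is an `m × n` array with zero row and column sums whose absolute values cover `S`. -/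
def Rz (m n : ℕ) (S : Set ℤ) : Prop :=
  ∃ A : Fin m → Fin n → ℤ, (∀ i, ∑ j, A i j = 0) ∧ (∀ j, ∑ i, A i j = 0) ∧
    ∀ x ∈ S, ∃ i j, |A i j| = x

theorem Rz.mono {m n : ℕ} {S S' : Set ℤ} (h : Rz m n S) (hs : S' ⊆ S) : Rz m n S' := by
  obtain ⟨A, h1, h2, h3⟩ := h
  exact ⟨A, h1, h2, fun x hx => h3 x (hs hx)⟩

theorem Rz.transpose {m n : ℕ} {S : Set ℤ} (h : Rz m n S) : Rz n m S := by
  obtain ⟨A, h1, h2, h3⟩ := h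
  refine ⟨fun i j => A j i, h2, h1, fun x hx => ?_⟩
  obtain ⟨i, j, e⟩ := h3 x hx
  exact ⟨j, i, e⟩

theorem Rz.hcat {m n n' : ℕ} {S S' : Set ℤ} (h : Rz m n S) (h' : Rz m n' S') :
    Rz m (n + n') (S ∪ S') := by
  obtain ⟨A, h1, h2, h3⟩ := h
  obtain ⟨B, k1, k2, k3⟩ := h'
  refine ⟨fun i => Fin.append (A i) (B i), ?_, ?_, ?_⟩
  · intro i
    simp [Fin.sum_univ_add, h1, k1]
  · intro j
    refine Fin.addCases (fun j => ?_) (fun j => ?_) j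
    · simp [h2]
    · simp [k2]
  · rintro x (hx | hx)
    · obtain ⟨i, j, e⟩ := h3 x hx
      exact ⟨i, Fin.castAdd n' j, by simpa using e⟩
    · obtain ⟨i, j, e⟩ := k3 x hx
      exact ⟨i, Fin.natAdd n j, by simpa using e⟩

theorem Rz.vcat {m m' n : ℕ} {S S' : Set ℤ} (h : Rz m n S) (h' : Rz m' n S') :
    Rz (m + m') n (S ∪ S') :=
  (h.transpose.hcat h'.transpose).transpose

/-! ### Linear families of triples -/

/-- The triples `2i+1, V-i, V+1+i` for `i` in `[s, s+t)`. -/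
def fam (V s t : ℕ) : Set ℤ :=
  {x | ∃ i : ℕ, s ≤ i ∧ i < s + t ∧ (x = 2 * i + 1 ∨ x = (V : ℤ) - i ∨ x = (V : ℤ) + 1 + i)}

theorem fam_split (V s t t' : ℕ) : fam V s (t + t') ⊆ fam V s t ∪ fam V (s + t) t' := by
  rintro x ⟨i, h1, h2, h3⟩
  by_cases h : i < s + t
  · exact Or.inl ⟨i, h1, h, h3⟩
  · exact Or.inr ⟨i, by omega, by omega, h3⟩

/-- Coefficient of the start in the entry of type `e`. -/
def cS (e : ℤ) : ℤ := if |e| = 1 then 2 else if |e| = 2 then -1 else 1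
/-- Coefficient of `V` in the entry of type `e`. -/
def cV (e : ℤ) : ℤ := if |e| = 1 then 0 else 1
/-- Constant term in the entry of type `e`, column `j`. -/
def cC (e : ℤ) (j : ℕ) : ℤ := if |e| = 1 then 2 * j + 1 else if |e| = 2 then -j else 1 + j

/-- Entry of a table. -/
def ent (s : ℕ) (M : List ℤ) (i j : ℕ) : ℤ := M.getD (i * s + j) 0

/-- Validity of a table for a family of `t` triples. -/
def famChk (t : ℕ) (M : List ℤ) : Prop :=
  (∀ i : Fin 3, ∑ j : Fin t, (ent t M i j).sign * cS (ent t M i j) = 0 ∧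
    ∑ j : Fin t, (ent t M i j).sign * cV (ent t M i j) = 0 ∧
    ∑ j : Fin t, (ent t M i j).sign * cC (ent t M i j) j = 0) ∧
  (∀ j : Fin t, ∑ i : Fin 3, (ent t M i j).sign * cS (ent t M i j) = 0 ∧
    ∑ i : Fin 3, (ent t M i j).sign * cV (ent t M i j) = 0 ∧
    ∑ i : Fin 3, (ent t M i j).sign * cC (ent t M i j) j = 0) ∧
  (∀ j : Fin t, (∃ i : Fin 3, |ent t M i j| = 1) ∧ (∃ i : Fin 3, |ent t M i j| = 2) ∧
    (∃ i : Fin 3, |ent t M i j| = 3))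

instance (t : ℕ) (M : List ℤ) : Decidable (famChk t M) := by
  unfold famChk; infer_instance

theorem sum_lin3 {n : ℕ} (σ a b c : Fin n → ℤ) (p q : ℤ) (ha : ∑ j, σ j * a j = 0)
    (hb : ∑ j, σ j * b j = 0) (hc : ∑ j, σ j * c j = 0) :
    ∑ j, σ j * (p * a j + q * b j + c j) = 0 := by
  have : ∀ j, σ j * (p * a j + q * b j + c j) = p * (σ j * a j) + q * (σ j * b j) + σ j * c j :=
    fun j => by ring
  simp only [this, Finset.sum_add_distrib, ← Finset.mul_sum, ha, hb, hc]
  simp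

theorem abs_sign_mul {e y : ℤ} (he : e ≠ 0) (hy : 0 ≤ y) : |e.sign * y| = y := by
  rw [abs_mul, abs_of_nonneg hy]
  rcases lt_or_gt_of_ne he with h | h
  · simp [Int.sign_eq_neg_one_of_neg h]
  · simp [Int.sign_eq_one_of_pos h]

theorem fam_of_chk {t : ℕ} {M : List ℤ} (h : famChk t M) (V s : ℕ) (hV : s + t ≤ V) :
    Rz 3 t (fam V s t) := by
  obtain ⟨h1, h2, h3⟩ := h
  refine ⟨fun i j => (ent t M i j).sign *
    (s * cS (ent t M i j) + V * cV (ent t M i j) + cC (ent t M i j) j), ?_, ?_, ?_⟩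
  · intro i
    obtain ⟨a, b, c⟩ := h1 i
    exact sum_lin3 _ _ _ _ _ _ a b c
  · intro j
    obtain ⟨a, b, c⟩ := h2 j
    exact sum_lin3 _ _ _ _ _ _ a b c
  · rintro x ⟨i, hi1, hi2, hx⟩
    obtain ⟨⟨r1, e1⟩, ⟨r2, e2⟩, ⟨r3, e3⟩⟩ := h3 ⟨i - s, by omega⟩
    rcases hx with hx | hx | hx
    · refine ⟨r1, ⟨i - s, by omega⟩, ?_⟩
      rw [abs_sign_mul]
      · simp only [cS, cV, cC, e1]
        norm_num
        omega
      · intro h0; rw [h0] at e1; norm_num at e1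
      · simp only [cS, cV, cC, e1]
        norm_num
        omega
    · refine ⟨r2, ⟨i - s, by omega⟩, ?_⟩
      rw [abs_sign_mul]
      · simp only [cS, cV, cC, e2]
        norm_num
        omega
      · intro h0; rw [h0] at e2; norm_num at e2
      · simp only [cS, cV, cC, e2]
        norm_num
        omega
    · refine ⟨r3, ⟨i - s, by omega⟩, ?_⟩
      rw [abs_sign_mul]
      · simp only [cS, cV, cC, e3]
        norm_num
        omega
      · intro h0; rw [h0] at e3; norm_num at e3
      · simp only [cS, cV, cC, e3]
        norm_num
        omega

theorem fam4 (V s : ℕ) (hV : s + 4 ≤ V) : Rz 3 4 (fam V s 4) :=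
  fam_of_chk (M := [1, -1, -1, 1, 2, -2, -2, 2, -3, 3, 3, -3]) (by decide) V s hV

theorem fam6 (V s : ℕ) (hV : s + 6 ≤ V) : Rz 3 6 (fam V s 6) :=
  fam_of_chk (M := [1, -1, -3, 3, 2, -2, 2, -2, 1, -1, -3, 3, -3, 3, 2, -2, 1, -1])
    (by decide) V s hV

theorem fam7 (V s : ℕ) (hV : s + 7 ≤ V) : Rz 3 7 (fam V s 7) :=
  fam_of_chk (M := [3, -3, -3, 1, 2, -3, 3, -2, 2, 2, -3, 1, 1, -1, -1, 1, 1, 2, -3, 2, -2])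
    (by decide) V s hV

theorem fam9 (V s : ℕ) (hV : s + 9 ≤ V) : Rz 3 9 (fam V s 9) :=
  fam_of_chk (M := [1, -3, 2, -3, 2, 1, 2, 1, -3, 2, 1, -3, 1, -3, 2, -3, 2, 1,
    -3, 2, 1, 2, 1, -3, 1, -3, 2]) (by decide) V s hV

theorem fam_step {V s t : ℕ} (h : Rz 3 t (fam V s t)) (hV : s + (t + 4) ≤ V) :
    Rz 3 (t + 4) (fam V s (t + 4)) :=
  (h.hcat (fam4 V (s + t) (by omega))).mono (fam_split V s t 4)

theorem fam_even (V s : ℕ) (t : ℕ) (h4 : 4 ≤ t) (he : t % 2 = 0) (hV : s + t ≤ V) :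
    Rz 3 t (fam V s t) := by
  induction t using Nat.strong_induction_on with
  | _ t ih =>
    by_cases h : t = 4
    · subst h; exact fam4 V s hV
    by_cases h : t = 6
    · subst h; exact fam6 V s hV
    obtain ⟨t', rfl⟩ : ∃ t', t = t' + 4 := ⟨t - 4, by omega⟩
    exact fam_step (ih t' (by omega) (by omega) (by omega) (by omega)) hV

theorem fam_odd (V s : ℕ) (t : ℕ) (h4 : 7 ≤ t) (he : t % 2 = 1) (hV : s + t ≤ V) :
    Rz 3 t (fam V s t) := by
  induction t using Nat.strong_induction_on with
  | _ t ih =>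
    by_cases h : t = 7
    · subst h; exact fam7 V s hV
    by_cases h : t = 9
    · subst h; exact fam9 V s hV
    obtain ⟨t', rfl⟩ : ∃ t', t = t' + 4 := ⟨t - 4, by omega⟩
    exact fam_step (ih t' (by omega) (by omega) (by omega) (by omega)) hV

/-! ### Balanced blocks -/

/-- Offsets: `k` steps of size two, then steps of size one. -/
def off (k t : ℕ) : ℤ := if t < k then 2 * t else (t : ℤ) + k - 1

/-- Offset of a table entry. -/
def eo (k : ℕ) (e : ℤ) : ℤ := off k (e.natAbs - 1)

/-- Validity of a table for a balanced block. -/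
def blkChk (r s k : ℕ) (M : List ℤ) : Prop :=
  (∀ i : Fin r, ∑ j : Fin s, (ent s M i j).sign = 0 ∧
    ∑ j : Fin s, (ent s M i j).sign * eo k (ent s M i j) = 0) ∧
  (∀ j : Fin s, ∑ i : Fin r, (ent s M i j).sign = 0 ∧
    ∑ i : Fin r, (ent s M i j).sign * eo k (ent s M i j) = 0) ∧
  (∀ t : Fin (r * s), ∃ i : Fin r, ∃ j : Fin s, (ent s M i j).natAbs = t + 1)

instance (r s k : ℕ) (M : List ℤ) : Decidable (blkChk r s k M) := by
  unfold blkChk; infer_instance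

/-- Signed index tables for the 4 × 4 blocks. -/
def tab16 : ℕ → List ℤ
  | 1 => [13, -5, 8, -16, 1, 7, -6, -2, -10, 9, -14, 15, -4, -11, 12, 3]
  | 4 => [-8, 1, 12, -3, 6, -13, -7, 14, 11, 15, -10, -16, -9, -2, 5, 4]
  | 5 => [3, -13, 11, -2, 14, 7, -15, -6, -5, 9, -12, 8, -10, -4, 16, 1]
  | 8 => [-8, 7, -3, 4, 5, -6, 16, -14, 15, -13, -12, 10, -9, 11, 1, -2]
  | 9 => [3, -4, 6, -5, 12, -10, -8, 7, -1, 2, 13, -15, -16, 14, -9, 11]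
  | 16 => [13, -5, 8, -16, 1, 7, -6, -2, -10, 9, -14, 15, -4, -11, 12, 3]
  | _ => []

/-- Signed index tables for the 4 × 6 blocks. -/
def tab24 : ℕ → List ℤ
  | 1 => [15, -19, -18, 17, -6, 11, -13, -7, -20, 21, 10, 9, 2, 23, 14, -22, -5, -12, -4, 3, 24, -16, 1, -8]
  | 4 => [13, 4, -10, -9, 22, -20, -8, 2, -3, 19, -24, 15, -17, -6, 5, -21, 16, 23, 12, -1, 7, 11, -14, -18]
  | 5 => [10, -18, 19, -24, -3, 14, -4, -8, 2, 21, 1, -6, 15, 9, -7, -20, 16, -13, -22, 17, -11, 23, -12, 5]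
  | 8 => [-18, 24, 22, 2, -8, -16, 21, -12, -14, -19, 6, 20, -13, -7, -17, 23, 15, 3, 10, 1, 9, -4, -11, -5]
  | 9 => [17, 9, -22, -7, 13, -12, -15, 11, 24, -18, -16, 14, -23, -5, -4, 20, 10, 1, 21, -19, 3, 6, -8, -2]
  | 12 => [11, 22, -9, -15, 12, -23, -7, -20, 1, 8, -4, 24, 13, 2, -6, -10, -14, 17, -21, -3, 16, 19, 5, -18]
  | 13 => [3, -13, -4, -14, 22, 10, -6, 23, 1, -9, -19, 12, -11, 2, -18, 16, 17, -5, 15, -7, 24, 8, -20, -21]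
  | 16 => [-16, -8, 18, -12, 9, 10, -15, 7, 4, -3, -6, 13, 11, -19, -22, 14, 17, -5, 24, 21, -2, 1, -23, -20]
  | 17 => [22, 1, -14, -4, -18, 15, 17, 11, 3, -16, -13, -2, -20, -7, -9, 8, 24, 6, -19, -5, 23, 12, 10, -21]
  | 24 => [15, -19, -18, 17, -6, 11, -13, -7, -20, 21, 10, 9, 2, 23, 14, -22, -5, -12, -4, 3, 24, -16, 1, -8]
  | _ => []

/-- Signed index tables for the 6 × 6 blocks. -/
def tab36 : ℕ → List ℤ
  | 1 => [-33, -17, -24, 32, 29, 13, 34, 3, -9, -35, -1, 8, -10, 28, 2, 12, -21, -11, 15, -30, -18, 27, 25, -19, -20, 22, 23, -5, -36, 16, 14, -6, 26, -31, 4, -7]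
  | 4 => [-11, 9, -30, 20, -12, 24, 4, 22, -5, -2, -19, 1, -21, -6, 28, -34, 7, 26, 3, -29, -25, 33, 32, -13, -10, 18, 15, 16, -31, -8, 36, -14, 17, -35, 23, -27]
  | 5 => [33, -22, 29, -11, -34, 5, -24, 25, -12, 16, 14, -19, 18, 6, -27, 36, -4, -30, -21, 32, 17, -26, 1, -2, -7, -31, -20, 8, 35, 15, 3, -10, 13, -23, -9, 28]
  | 8 => [4, -2, 15, -31, -23, 35, -11, 1, -5, -3, 9, 8, -20, -24, 10, 17, -6, 21, -13, 22, -33, 19, 32, -27, 26, 34, 16, -36, -28, -12, 18, -30, -7, 29, 14, -25]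
  | 9 => [13, -16, -18, 25, -7, 5, 31, -24, -1, 26, 2, -35, -29, 36, 32, -33, 15, -21, -23, 27, -28, 19, 14, -9, -6, 4, 3, -20, -8, 34, 11, -22, 10, -17, -12, 30]
  | 12 => [2, 35, -7, -29, -11, 14, -3, 15, 13, 10, -20, -22, 24, 8, -27, -9, -12, 17, 31, -6, 36, -25, 1, -32, -30, -26, -16, 33, 18, 21, -23, -28, 4, 19, 34, -5]
  | 13 => [29, -13, 33, -16, -22, 1, -32, -27, 9, -2, 14, 31, 4, 23, -10, 18, -8, -26, -6, -19, -30, 12, 11, 28, 24, 7, -21, -15, 36, -25, -17, 35, 20, 3, -34, -5]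
  | 16 => [-10, 7, 2, -4, -21, 31, -14, 3, -6, 13, 30, -22, 11, -1, 29, -26, 9, -25, -19, 23, 27, 18, -33, -16, 5, -12, -20, -34, 36, 32, 35, -17, -28, 24, -15, 8]
  | 17 => [-4, -22, 10, -27, 28, 13, 14, -19, 30, -5, -24, 6, -35, 34, -18, 23, 15, -17, 31, -26, -29, 25, -33, 32, -9, 36, -12, 2, 11, -20, 1, 7, 21, -16, -3, -8]
  | 20 => [-34, 28, 10, -9, -25, 29, 19, -16, -26, 7, 36, -15, 18, 33, 13, -27, -32, -8, -14, -35, 30, 21, 23, -31, -17, -12, -3, 11, 1, 20, 22, 5, -24, -6, -2, 4]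
  | 21 => [-18, -19, 20, -29, 31, 16, 30, 36, -17, -11, 2, -35, 1, -27, -9, 33, 12, -7, -25, 5, 32, 22, -23, -8, -13, 28, -26, 10, -4, 6, 34, -15, 3, -24, -14, 21]
  | 24 => [30, -14, -4, 15, 1, -26, -33, -34, -20, 28, 31, 24, 13, 22, -23, -32, -3, 19, 21, -36, 12, -10, -2, 9, -27, 29, 17, -8, 6, -16, -7, 25, 18, 5, -35, -11]
  | 25 => [-3, -10, 7, 12, 17, -23, 26, 35, -18, -28, -13, 2, -34, 30, -11, 1, -14, 27, 21, -24, 19, -8, 20, -31, 15, 5, -22, -9, -16, 29, -33, -32, 25, 36, 6, -4]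
  | 28 => [7, -4, 3, -12, -13, 19, 21, 23, -16, -17, 18, -30, -10, 24, -15, -35, 2, 33, 28, -22, 26, 29, -34, -31, -36, 9, 8, 27, -1, -11, -14, -32, -6, 5, 25, 20]
  | 29 => [31, 16, -24, 2, -18, -6, -11, 34, 4, -21, -30, 26, 8, -15, -1, -10, 5, 13, 7, -32, 22, -3, 36, -28, -14, 25, -35, 9, 29, -17, -20, -27, 33, 23, -19, 12]
  | 36 => [-33, -17, -24, 32, 29, 13, 34, 3, -9, -35, -1, 8, -10, 28, 2, 12, -21, -11, 15, -30, -18, 27, 25, -19, -20, 22, 23, -5, -36, 16, 14, -6, 26, -31, 4, -7]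
  | _ => []

/-- The admissible switching positions for a block of size `z`. -/
def okK (z k : ℕ) : Prop := 1 ≤ k ∧ ((k % 4 = 0 ∨ k % 4 = 1) ∧ k + 7 ≤ z ∨ k = z)

instance (z k : ℕ) : Decidable (okK z k) := by
  unfold okK; infer_instance

theorem tab16_ok : ∀ k : Fin 17, okK 16 k → blkChk 4 4 k (tab16 k) := by decide +kernel
theorem tab24_ok : ∀ k : Fin 25, okK 24 k → blkChk 4 6 k (tab24 k) := by decide +kernel
theorem tab36_ok : ∀ k : Fin 37, okK 36 k → blkChk 6 6 k (tab36 k) := by decide +kernel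

/-- Image of the index interval `[s, s+t)`. -/
def im (w : ℕ → ℤ) (s t : ℕ) : Set ℤ := {x | ∃ i : ℕ, s ≤ i ∧ i < s + t ∧ x = w i}

theorem im_split (w : ℕ → ℤ) (s t t' : ℕ) : im w s (t + t') ⊆ im w s t ∪ im w (s + t) t' := by
  rintro x ⟨i, h1, h2, h3⟩
  by_cases h : i < s + t
  · exact Or.inl ⟨i, h1, h, h3⟩
  · exact Or.inr ⟨i, by omega, by omega, h3⟩

theorem sum_lin2 {n : ℕ} (σ b : Fin n → ℤ) (p : ℤ) (ha : ∑ j, σ j = 0)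
    (hb : ∑ j, σ j * b j = 0) : ∑ j, σ j * (p + b j) = 0 := by
  simp only [mul_add, Finset.sum_add_distrib, ← Finset.sum_mul, ha, hb]
  simp

theorem off_nonneg {k t : ℕ} (hk : 1 ≤ k) : 0 ≤ off k t := by
  unfold off; split_ifs <;> omega

theorem blk_of_chk {r s k : ℕ} {M : List ℤ} (h : blkChk r s k M) (hk : 1 ≤ k) (w : ℕ → ℤ) (p : ℕ)
    (a : ℤ) (ha : 0 ≤ a) (hw : ∀ i < r * s, w (p + i) = a + off k i) :
    Rz r s (im w p (r * s)) := by
  obtain ⟨h1, h2, h3⟩ := h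
  refine ⟨fun i j => (ent s M i j).sign * (a + eo k (ent s M i j)), ?_, ?_, ?_⟩
  · intro i
    obtain ⟨x, y⟩ := h1 i
    exact sum_lin2 _ _ _ x y
  · intro j
    obtain ⟨x, y⟩ := h2 j
    exact sum_lin2 _ _ _ x y
  · rintro x ⟨i, hi1, hi2, rfl⟩
    obtain ⟨r1, c1, e1⟩ := h3 ⟨i - p, by omega⟩
    simp only at e1
    refine ⟨r1, c1, ?_⟩
    have e2 : eo k (ent s M r1 c1) = off k (i - p) := by
      unfold eo; rw [e1]; rfl
    rw [abs_sign_mul, e2, ← hw (i - p) (by omega)]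
    · congr 1; omega
    · intro h0; rw [h0] at e1; simp at e1
    · rw [e2]; have := off_nonneg (t := i - p) hk; omega

/-- Realizability of a block of size `z` at position `s`. -/
def Real1 (w : ℕ → ℤ) (s z : ℕ) : Prop :=
  (z = 16 ∧ Rz 4 4 (im w s 16)) ∨ (z = 24 ∧ Rz 4 6 (im w s 24)) ∨ (z = 36 ∧ Rz 6 6 (im w s 36))

theorem real_of_pat {w : ℕ → ℤ} {s z k : ℕ} (hz : z = 16 ∨ z = 24 ∨ z = 36) (hk : okK z k)
    (a : ℤ) (ha : 0 ≤ a) (hw : ∀ i < z, w (s + i) = a + off k i) : Real1 w s z := by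
  have hkz : k < z + 1 := by unfold okK at hk; omega
  rcases hz with rfl | rfl | rfl
  · exact Or.inl ⟨rfl, blk_of_chk (tab16_ok ⟨k, hkz⟩ hk) hk.1 w s a ha hw⟩
  · exact Or.inr (Or.inl ⟨rfl, blk_of_chk (tab24_ok ⟨k, hkz⟩ hk) hk.1 w s a ha hw⟩)
  · exact Or.inr (Or.inr ⟨rfl, blk_of_chk (tab36_ok ⟨k, hkz⟩ hk) hk.1 w s a ha hw⟩)

/-- All blocks of the list, placed one after the other from `s`, are realizable. -/
def chain (w : ℕ → ℤ) : ℕ → List ℕ → Prop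
  | _, [] => True
  | s, z :: l => Real1 w s z ∧ chain w (s + z) l

theorem chain_append (w : ℕ → ℤ) (l l' : List ℕ) (s : ℕ) :
    chain w s (l ++ l') ↔ chain w s l ∧ chain w (s + l.sum) l' := by
  induction l generalizing s with
  | nil => simp [chain]
  | cons z l ih => simp [chain, ih, and_assoc, add_assoc]

/-- Block sizes. -/
def okL (l : List ℕ) : Prop := ∀ z ∈ l, z = 16 ∨ z = 24 ∨ z = 36

/-- An `m × n` balanced array can be assembled from blocks of the sizes in the list. -/
def Dec (m n : ℕ) : Prop := ∃ l : List ℕ, okL l ∧ l.sum = m * n ∧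
  ∀ w s, chain w s l → Rz m n (im w s (m * n))

theorem Dec.transpose {m n : ℕ} (h : Dec m n) : Dec n m := by
  obtain ⟨l, h1, h2, h3⟩ := h
  refine ⟨l, h1, by rw [h2, mul_comm], fun w s hc => ?_⟩
  rw [mul_comm n m]
  exact (h3 w s hc).transpose

theorem Dec.hcat {m n n' : ℕ} (h : Dec m n) (h' : Dec m n') : Dec m (n + n') := by
  obtain ⟨l, h1, h2, h3⟩ := h
  obtain ⟨l', k1, k2, k3⟩ := h'
  refine ⟨l ++ l', ?_, by rw [List.sum_append, h2, k2, mul_add], fun w s hc => ?_⟩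
  · intro z hz
    rcases List.mem_append.1 hz with hz | hz
    · exact h1 z hz
    · exact k1 z hz
  · rw [chain_append, h2] at hc
    rw [mul_add]
    exact ((h3 w s hc.1).hcat (k3 w _ hc.2)).mono (im_split w s _ _)

theorem dec44 : Dec 4 4 := by
  refine ⟨[16], by simp [okL], by simp, fun w s hc => ?_⟩
  simpa [chain, Real1] using hc
theorem dec46 : Dec 4 6 := by
  refine ⟨[24], by simp [okL], by simp, fun w s hc => ?_⟩
  simpa [chain, Real1] using hc
theorem dec66 : Dec 6 6 := by
  refine ⟨[36], by simp [okL], by simp, fun w s hc => ?_⟩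
  simpa [chain, Real1] using hc

theorem dec_ext {m : ℕ} (h4 : Dec m 4) (h6 : Dec m 6) (n : ℕ) (hn : 4 ≤ n) (he : n % 2 = 0) :
    Dec m n := by
  induction n using Nat.strong_induction_on with
  | _ n ih =>
    by_cases h : n = 4
    · subst h; exact h4
    by_cases h : n = 6
    · subst h; exact h6
    obtain ⟨t, rfl⟩ : ∃ t, n = t + 4 := ⟨n - 4, by omega⟩
    exact (ih t (by omega) (by omega) (by omega)).hcat h4

theorem dec_all (m n : ℕ) (hm : 4 ≤ m) (hm2 : m % 2 = 0) (hn : 4 ≤ n) (hn2 : n % 2 = 0) :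
    Dec m n :=
  dec_ext (dec_ext dec44 dec46 m hm hm2).transpose
    (dec_ext dec46.transpose dec66 m hm hm2).transpose n hn hn2

/-! ### The enumeration of the numbers used in the balanced part -/

/-- Enumeration of the positive integers that are not odd numbers below `2N`. -/
def ww (N u : ℕ) (i : ℕ) : ℤ :=
  if i < N + u then 2 * i + 2 else if i < N + 2 * u then 2 * (i : ℤ) - 2 * u + 1 else i + N + 1

theorem okL_tail {z : ℕ} {l : List ℕ} (h : okL (z :: l)) : okL l :=
  fun y hy => h y (List.mem_cons_of_mem _ hy)

theorem okL_head {z : ℕ} {l : List ℕ} (h : okL (z :: l)) : z = 16 ∨ z = 24 ∨ z = 36 :=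
  h z List.mem_cons_self

theorem chain_late (N u : ℕ) (l : List ℕ) (hl : okL l) (s : ℕ) (hs : N + 2 * u ≤ s) :
    chain (ww N u) s l := by
  induction l generalizing s with
  | nil => trivial
  | cons z l ih =>
    have hz := okL_head hl
    refine ⟨real_of_pat (k := 1) hz (by unfold okK; omega) (s + N + 1) (by omega) ?_,
      ih (okL_tail hl) _ (by omega)⟩
    intro i hi
    unfold ww off
    split_ifs <;> omega

theorem chain_mid (N u : ℕ) (hu : u = 3 ∨ u = 4) (l : List ℕ) (hl : okL l) :
    chain (ww N u) (N + u) l := by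
  cases l with
  | nil => trivial
  | cons z l =>
    have hz := okL_head hl
    refine ⟨real_of_pat (k := u + 1) hz (by unfold okK; omega) (2 * N + 1) (by omega) ?_,
      chain_late N u l (okL_tail hl) _ (by omega)⟩
    intro i hi
    unfold ww off
    split_ifs <;> omega

theorem chain_exists (N : ℕ) (hN : N % 4 = 0 ∨ N % 4 = 1) (l : List ℕ) (hl : okL l) (s : ℕ)
    (hs : s % 4 = 0) (hsN : s ≤ N) : ∃ u, u ≤ 4 ∧ chain (ww N u) s l := by
  induction l generalizing s with
  | nil => exact ⟨0, by omega, trivial⟩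
  | cons z l ih =>
    have hz := okL_head hl
    by_cases h1 : s + z ≤ N
    · obtain ⟨u, hu, hc⟩ := ih (okL_tail hl) (s + z) (by omega) h1
      refine ⟨u, hu, real_of_pat (k := z) hz (by unfold okK; omega) (2 * s + 2) (by omega) ?_, hc⟩
      intro i hi
      unfold ww off
      split_ifs <;> omega
    by_cases h2 : s + z = N + 3 ∨ s + z = N + 4
    · obtain ⟨u, hu⟩ : ∃ u, u = s + z - N := ⟨_, rfl⟩
      have e : s + z = N + u := by omega
      refine ⟨u, by omega,
        real_of_pat (k := z) hz (by unfold okK; omega) (2 * s + 2) (by omega) ?_, ?_⟩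
      · intro i hi
        unfold ww off
        split_ifs <;> omega
      · rw [e]
        exact chain_mid N u (by omega) l (okL_tail hl)
    by_cases h3 : s = N
    · exact ⟨0, by omega, chain_late N 0 _ hl s (by omega)⟩
    · refine ⟨0, by omega,
        real_of_pat (k := N - s) hz (by unfold okK; omega) (2 * s + 2) (by omega) ?_,
        chain_late N 0 l (okL_tail hl) _ (by omega)⟩
      intro i hi
      unfold ww off
      split_ifs <;> omega

/-- The list repeated `c` times. -/
def rep : ℕ → List ℕ → List ℕ
  | 0, _ => []
  | c + 1, l => l ++ rep c l

theorem rep_ok (c : ℕ) (l : List ℕ) (hl : okL l) : okL (rep c l) := by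
  induction c with
  | zero => intro z hz; simp [rep] at hz
  | succ c ih =>
    intro z hz
    rcases List.mem_append.1 hz with hz | hz
    · exact hl z hz
    · exact ih z hz

theorem chain_rep (w : ℕ → ℤ) (l : List ℕ) (c s : ℕ) (h : chain w s (rep c l)) (i : ℕ)
    (hi : i < c) : chain w (s + i * l.sum) l := by
  induction c generalizing s i with
  | zero => omega
  | succ c ih =>
    rw [rep, chain_append] at h
    cases i with
    | zero => simpa using h.1
    | succ i =>
      have := ih _ h.2 i (by omega)
      convert this using 1
      ring

/-! ### Counting -/

theorem isIHS_of_cover (m n c : ℕ) (A : Fin c → Matrix (Fin m) (Fin n) ℤ)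
    (hr : ∀ l i, ∑ j, A l i j = 0) (hc : ∀ l j, ∑ i, A l i j = 0)
    (h : ∀ x : ℤ, 1 ≤ x → x ≤ (m : ℤ) * n * c → ∃ l i j, |A l i j| = x) : IsIHS m n c A := by
  set f : Fin c × Fin m × Fin n → ℤ := fun p => |A p.1 p.2.1 p.2.2| with hf
  have hsub : Finset.Icc (1 : ℤ) ((m : ℤ) * n * c) ⊆ Finset.univ.image f := by
    intro x hx
    rw [Finset.mem_Icc] at hx
    obtain ⟨l, i, j, e⟩ := h x hx.1 hx.2
    exact Finset.mem_image.2 ⟨(l, i, j), Finset.mem_univ _, e⟩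
  have hcard : (Finset.Icc (1 : ℤ) ((m : ℤ) * n * c)).card = m * n * c := by
    rw [Int.card_Icc]
    have : (m : ℤ) * n * c + 1 - 1 = ((m * n * c : ℕ) : ℤ) := by push_cast; ring
    rw [this, Int.toNat_natCast]
  have hu : (Finset.univ : Finset (Fin c × Fin m × Fin n)).card = m * n * c := by
    simp [Finset.card_univ]; ring
  have heq := Finset.eq_of_subset_of_card_le hsub
    (by rw [hcard, ← hu]; exact Finset.card_image_le)
  have hinj : Set.InjOn f (Finset.univ : Finset (Fin c × Fin m × Fin n)) := by
    apply Finset.card_image_iff.1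
    rw [← heq, hcard, hu]
  refine ⟨fun p q hpq => hinj (by simp) (by simp) hpq, fun x => ⟨fun hx => h x hx.1 hx.2, ?_⟩,
    hr, hc⟩
  rintro ⟨l, i, j, e⟩
  have : x ∈ Finset.univ.image f := Finset.mem_image.2 ⟨(l, i, j), Finset.mem_univ _, e⟩
  rw [← heq, Finset.mem_Icc] at this
  exact this

theorem ww_cover (N u Q : ℕ) (hQ : N + 8 ≤ Q) (hu : u ≤ 4) (x : ℕ) (h1 : 1 ≤ x) (hx : x ≤ N + Q)
    (hodd : ¬ (x % 2 = 1 ∧ x < 2 * N)) : ∃ i, i < Q ∧ (x : ℤ) = ww N u i := by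
  by_cases ha : x % 2 = 0 ∧ x ≤ 2 * N + 2 * u
  · refine ⟨x / 2 - 1, by omega, ?_⟩
    unfold ww
    split_ifs <;> omega
  by_cases hb : x < 2 * N + 2 * u
  · refine ⟨(x - 1) / 2 + u, by omega, ?_⟩
    unfold ww
    split_ifs <;> omega
  · refine ⟨x - N - 1, by omega, ?_⟩
    unfold ww
    split_ifs <;> omega

theorem main_aux (p q c : ℕ) (hp : 4 ≤ p) (hq : 4 ≤ q) (hp2 : p % 2 = 0) (hq2 : q % 2 = 0)
    (hN : c * (p + q + 3) % 4 = 0 ∨ c * (p + q + 3) % 4 = 1)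
    (hQ : c * (p + q + 3) + 8 ≤ c * (p * q)) :
    ∃ A : Fin c → Matrix (Fin (3 + p)) (Fin (3 + q)) ℤ, IsIHS (3 + p) (3 + q) c A := by
  obtain ⟨T, hT⟩ : ∃ T, T = p + q + 3 := ⟨_, rfl⟩
  obtain ⟨N, hNd⟩ : ∃ N, N = c * T := ⟨_, rfl⟩
  obtain ⟨P, hP⟩ : ∃ P, P = p * q := ⟨_, rfl⟩
  obtain ⟨Q, hQd⟩ : ∃ Q, Q = c * P := ⟨_, rfl⟩
  rw [← hT, ← hNd] at hN
  rw [← hT, ← hP, ← hNd, ← hQd] at hQ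
  obtain ⟨l, hl, hsum, hdec⟩ := dec_all p q hp hp2 hq hq2
  rw [← hP] at hsum hdec
  obtain ⟨u, hu, hch⟩ := chain_exists N hN (rep c l) (rep_ok c l hl) 0 rfl (Nat.zero_le _)
  have key : ∀ i : Fin c, Rz (3 + p) (3 + q)
      (fam (2 * N + Q) (i * T) T ∪ im (ww N u) (i * P) P) := by
    intro i
    have hi : (i : ℕ) * T + T ≤ N := by
      rw [hNd]
      calc (i : ℕ) * T + T = (i + 1) * T := by ring
        _ ≤ c * T := Nat.mul_le_mul_right _ i.2
    have hc1 := chain_rep _ l c 0 hch i i.2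
    rw [hsum, Nat.zero_add] at hc1
    have r1 := hdec _ _ hc1
    have r2 : Rz 3 (3 + q) (fam (2 * N + Q) (i * T) (3 + q)) :=
      fam_odd _ _ _ (by omega) (by omega) (by omega)
    have r3 : Rz p 3 (fam (2 * N + Q) (i * T + (3 + q)) p) :=
      (fam_even _ _ _ (by omega) (by omega) (by omega)).transpose
    refine (r2.vcat (r3.hcat r1)).mono ?_
    rintro x (hx | hx)
    · have e : T = (3 + q) + p := by omega
      have hx' : x ∈ fam (2 * N + Q) (i * T) ((3 + q) + p) := by rw [← e]; exact hx
      rcases fam_split _ _ _ _ hx' with h | h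
      · exact Or.inl h
      · exact Or.inr (Or.inl h)
    · exact Or.inr (Or.inr hx)
  choose A hA1 hA2 hA3 using key
  refine ⟨fun i => Matrix.of (A i), isIHS_of_cover _ _ _ _ (fun i => hA1 i) (fun i => hA2 i) ?_⟩
  intro x hx1 hx2
  have htot : ((3 + p : ℕ) : ℤ) * (3 + q : ℕ) * c = 3 * N + Q := by
    rw [hNd, hQd, hP, hT]; push_cast; ring
  rw [htot] at hx2
  have hTpos : 0 < T := by omega
  have hPpos : 0 < P := by rw [hP]; positivity
  have famcase : ∀ j < N, (x = 2 * j + 1 ∨ x = ((2 * N + Q : ℕ) : ℤ) - j ∨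
      x = ((2 * N + Q : ℕ) : ℤ) + 1 + j) → ∃ l i j, |(Matrix.of (A l)) i j| = x := by
    intro j hj hx
    have hlt : j / T < c := by
      rw [Nat.div_lt_iff_lt_mul hTpos, ← hNd]; exact hj
    have hdm := Nat.div_add_mod j T
    have hml := Nat.mod_lt j hTpos
    rw [mul_comm] at hdm
    obtain ⟨i, k, e⟩ := hA3 ⟨j / T, hlt⟩ x (Or.inl ⟨j, by simp only; omega, by simp only; omega, hx⟩)
    exact ⟨_, i, k, e⟩
  lift x to ℕ using by omega
  by_cases hc1 : 2 * N + Q < x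
  · exact famcase (x - (2 * N + Q) - 1) (by omega) (by omega)
  by_cases hc2 : N + Q < x
  · exact famcase (2 * N + Q - x) (by omega) (by omega)
  by_cases hc3 : x % 2 = 1 ∧ x < 2 * N
  · exact famcase ((x - 1) / 2) (by omega) (by omega)
  obtain ⟨j, hj, hx⟩ := ww_cover N u Q hQ hu x (by omega) (by omega) hc3
  have hlt : j / P < c := by
    rw [Nat.div_lt_iff_lt_mul hPpos, ← hQd]; exact hj
  have hdm := Nat.div_add_mod j P
  have hml := Nat.mod_lt j hPpos
  rw [mul_comm] at hdm
  obtain ⟨i, k, e⟩ := hA3 ⟨j / P, hlt⟩ x (Or.inr ⟨j, by simp only; omega, by simp only; omega, hx⟩)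
  exact ⟨_, i, k, e⟩


theorem exists_IHS_of_odd
    (m n c : ℕ) (hm : 0 < m) (hn : 0 < n) (hc : 0 < c)
    (hmod : m * n * c % 4 = 0 ∨ m * n * c % 4 = 3)
    (hm7 : 7 ≤ m) (hn7 : 7 ≤ n) (hmodd : Odd m) (hnodd : Odd n) :
    ∃ A : Fin c → Matrix (Fin m) (Fin n) ℤ, IsIHS m n c A := by
  obtain ⟨a, ha⟩ := hmodd
  obtain ⟨b, hb⟩ := hnodd
  obtain ⟨p, rfl⟩ : ∃ p, m = 3 + 2 * p := ⟨a - 1, by omega⟩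
  obtain ⟨q, rfl⟩ : ∃ q, n = 3 + 2 * q := ⟨b - 1, by omega⟩
  have e : (3 + 2 * p) * (3 + 2 * q) * c = 4 * (p * q * c) + 3 * (c * (2 * p + 2 * q + 3)) := by
    ring
  refine main_aux (2 * p) (2 * q) c (by omega) (by omega) (by omega) (by omega) ?_ ?_
  · rw [e] at hmod
    omega
  · obtain ⟨s, rfl⟩ : ∃ s, p = s + 2 := ⟨p - 2, by omega⟩
    obtain ⟨t, rfl⟩ : ∃ t, q = t + 2 := ⟨q - 2, by omega⟩
    by_cases hc2 : 2 ≤ c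
    · nlinarith [Nat.zero_le (c * s * t), Nat.zero_le (c * s), Nat.zero_le (c * t)]
    · have hc1 : c = 1 := by omega
      subst hc1
      have hst : 1 ≤ s + t := by
        by_contra h0
        have hs : s = 0 := by omega
        have ht : t = 0 := by omega
        subst hs; subst ht
        norm_num at hmod
      nlinarith [Nat.zero_le (s * t)]
end

section
/- Let m, n, c be positive integers such that c ≡ 0 (mod 4), m is odd, and n ≡ 3 (mod 4). If m ≥ 7 and n ≥ 7, then there exists an integer Heffter array set IHS(m, n; c). -/
/-- `HS ι α β r S`: a family, indexed by `ι`, of integer `α × β` arrays whose entries have pairwise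
distinct absolute values, all in `S`, with row sums prescribed by `r` and zero column sums. -/
def HS (ι α β : Type) [Fintype α] [Fintype β] (r : α → ℤ) (S : Set ℤ) : Prop :=
  ∃ A : ι → α → β → ℤ,
    (∀ l i j l' i' j', |A l i j| = |A l' i' j'| → l = l' ∧ i = i' ∧ j = j') ∧
    (∀ l i j, |A l i j| ∈ S) ∧
    (∀ l i, ∑ j, A l i j = r i) ∧ (∀ l j, ∑ i, A l i j = 0)

section HSlemmas
variable {ι ι' κ α α' β β' : Type} [Fintype α] [Fintype β] [Fintype α'] [Fintype β'] [Fintype κ]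
  {r r' : α → ℤ} {S S' : Set ℤ}

theorem HS.mono (h : HS ι α β r S) (hs : S ⊆ S') : HS ι α β r S' := by
  obtain ⟨A, h1, h2, h3, h4⟩ := h
  exact ⟨A, h1, fun l i j => hs (h2 l i j), h3, h4⟩

theorem HS.equiv (h : HS ι α β r S) (e : ι' ≃ ι) (f : α' ≃ α) (g : β' ≃ β) :
    HS ι' α' β' (fun i => r (f i)) S := by
  obtain ⟨A, h1, h2, h3, h4⟩ := h
  refine ⟨fun l i j => A (e l) (f i) (g j), ?_, fun l i j => h2 _ _ _, ?_, ?_⟩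
  · intro l i j l' i' j' hh
    obtain ⟨a, b, c⟩ := h1 _ _ _ _ _ _ hh
    exact ⟨e.injective a, f.injective b, g.injective c⟩
  · intro l i
    refine Eq.trans ?_ (h3 (e l) (f i))
    exact Equiv.sum_comp g (fun j => A (e l) (f i) j)
  · intro l j
    refine Eq.trans ?_ (h4 (e l) (g j))
    exact Equiv.sum_comp f (fun i => A (e l) i (g j))

theorem HS.neg (h : HS ι α β r S) : HS ι α β (fun i => - r i) S := by
  obtain ⟨A, h1, h2, h3, h4⟩ := h
  refine ⟨fun l i j => - A l i j, ?_, ?_, ?_, ?_⟩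
  · intro l i j l' i' j' hh
    simp only [abs_neg] at hh
    exact h1 _ _ _ _ _ _ hh
  · intro l i j
    simp only [abs_neg]
    exact h2 _ _ _
  · intro l i
    simp [h3]
  · intro l i
    simp [h4]

theorem HS.transpose (h : HS ι α β (fun _ => 0) S) : HS ι β α (fun _ => 0) S := by
  obtain ⟨A, h1, h2, h3, h4⟩ := h
  refine ⟨fun l i j => A l j i, ?_, fun l i j => h2 _ _ _, h4, h3⟩
  intro l i j l' i' j' hh
  obtain ⟨a, b, c⟩ := h1 _ _ _ _ _ _ hh
  exact ⟨a, c, b⟩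

theorem HS.hcat (h : HS ι α β r S) (h' : HS ι α β' r' S') (hd : Disjoint S S') :
    HS ι α (β ⊕ β') (fun i => r i + r' i) (S ∪ S') := by
  obtain ⟨A, h1, h2, h3, h4⟩ := h
  obtain ⟨B, g1, g2, g3, g4⟩ := h'
  rw [Set.disjoint_left] at hd
  refine ⟨fun l i j => Sum.elim (A l i) (B l i) j, ?_, ?_, ?_, ?_⟩
  · intro l i j l' i' j' hh
    rcases j with j | j <;> rcases j' with j' | j' <;> simp only [Sum.elim_inl, Sum.elim_inr] at hh
    · obtain ⟨a, b, c⟩ := h1 _ _ _ _ _ _ hh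
      simp [a, b, c]
    · exact absurd (hh ▸ g2 l' i' j') (hd (h2 l i j))
    · exact absurd (hh ▸ g2 l i j) (hd (h2 l' i' j'))
    · obtain ⟨a, b, c⟩ := g1 _ _ _ _ _ _ hh
      simp [a, b, c]
  · intro l i j
    rcases j with j | j
    · exact Or.inl (h2 l i j)
    · exact Or.inr (g2 l i j)
  · intro l i
    simp [Fintype.sum_sum_type, h3, g3]
  · intro l j
    rcases j with j | j
    · simp [h4]
    · simp [g4]

theorem HS.union (h : HS ι α β r S) (h' : HS ι' α β r S') (hd : Disjoint S S') :
    HS (ι ⊕ ι') α β r (S ∪ S') := by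
  obtain ⟨A, h1, h2, h3, h4⟩ := h
  obtain ⟨B, g1, g2, g3, g4⟩ := h'
  rw [Set.disjoint_left] at hd
  refine ⟨fun l => Sum.elim A B l, ?_, ?_, ?_, ?_⟩
  · intro l i j l' i' j' hh
    rcases l with l | l <;> rcases l' with l' | l' <;> simp only [Sum.elim_inl, Sum.elim_inr] at hh
    · obtain ⟨a, b, c⟩ := h1 _ _ _ _ _ _ hh
      simp [a, b, c]
    · exact absurd (hh ▸ g2 l' i' j') (hd (h2 l i j))
    · exact absurd (hh ▸ g2 l i j) (hd (h2 l' i' j'))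
    · obtain ⟨a, b, c⟩ := g1 _ _ _ _ _ _ hh
      simp [a, b, c]
  · intro l i j
    rcases l with l | l
    · exact Or.inl (h2 l i j)
    · exact Or.inr (g2 l i j)
  · intro l i
    rcases l with l | l
    · simp [h3]
    · simp [g3]
  · intro l j
    rcases l with l | l
    · simp [h4]
    · simp [g4]

theorem HS.split (h : HS (ι ⊕ ι') α β r S) :
    ∃ S₁ S₂, S₁ ⊆ S ∧ S₂ ⊆ S ∧ Disjoint S₁ S₂ ∧ HS ι α β r S₁ ∧ HS ι' α β r S₂ := by
  obtain ⟨A, h1, h2, h3, h4⟩ := h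
  refine ⟨{x | ∃ l i j, |A (Sum.inl l) i j| = x}, {x | ∃ l i j, |A (Sum.inr l) i j| = x},
    ?_, ?_, ?_, ⟨fun l => A (Sum.inl l), ?_, ?_, ?_, ?_⟩, ⟨fun l => A (Sum.inr l), ?_, ?_, ?_, ?_⟩⟩
  · rintro x ⟨l, i, j, rfl⟩
    exact h2 _ _ _
  · rintro x ⟨l, i, j, rfl⟩
    exact h2 _ _ _
  · rw [Set.disjoint_left]
    rintro x ⟨l, i, j, rfl⟩ ⟨l', i', j', hh⟩
    have := (h1 _ _ _ _ _ _ hh).1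
    simp at this
  · intro l i j l' i' j' hh
    have := h1 _ _ _ _ _ _ hh
    simpa using this
  · intro l i j
    exact ⟨l, i, j, rfl⟩
  · intro l i
    exact h3 _ _
  · intro l i
    exact h4 _ _
  · intro l i j l' i' j' hh
    have := h1 _ _ _ _ _ _ hh
    simpa using this
  · intro l i j
    exact ⟨l, i, j, rfl⟩
  · intro l i
    exact h3 _ _
  · intro l i
    exact h4 _ _

theorem HS.hgroup (h : HS (ι × κ) α β (fun _ => 0) S) : HS ι α (β × κ) (fun _ => 0) S := by
  obtain ⟨A, h1, h2, h3, h4⟩ := h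
  refine ⟨fun l i j => A (l, j.2) i j.1, ?_, fun l i j => h2 _ _ _, ?_, fun l j => h4 _ _⟩
  · rintro l i ⟨j, k⟩ l' i' ⟨j', k'⟩ hh
    have := h1 _ _ _ _ _ _ hh
    simp only [Prod.mk.injEq] at this ⊢
    tauto
  · intro l i
    rw [Fintype.sum_prod_type_right]
    simp [h3]

theorem HS.vgroup (h : HS (ι × κ) α β (fun _ => 0) S) : HS ι (α × κ) β (fun _ => 0) S :=
  h.transpose.hgroup.transpose

theorem HS.vcat (h : HS ι α β (fun _ => 0) S) (h' : HS ι α' β (fun _ => 0) S')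
    (hd : Disjoint S S') : HS ι (α ⊕ α') β (fun _ => 0) (S ∪ S') := by
  have := h.transpose.hcat h'.transpose hd
  simp only [add_zero] at this
  exact this.transpose

theorem HS.of_abs (A B : ι → α → β → ℤ)
    (hB : ∀ l i j, 0 ≤ B l i j) (hAB : ∀ l i j, A l i j = B l i j ∨ A l i j = - B l i j)
    (h1 : ∀ l i j l' i' j', B l i j = B l' i' j' → l = l' ∧ i = i' ∧ j = j')
    (h2 : ∀ l i j, B l i j ∈ S)
    (h3 : ∀ l i, ∑ j, A l i j = r i) (h4 : ∀ l j, ∑ i, A l i j = 0) : HS ι α β r S := by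
  have key : ∀ l i j, |A l i j| = B l i j := by
    intro l i j
    rcases hAB l i j with h | h
    · rw [h, abs_of_nonneg (hB l i j)]
    · rw [h, abs_neg, abs_of_nonneg (hB l i j)]
  refine ⟨A, ?_, ?_, h3, h4⟩
  · intro l i j l' i' j' hh
    rw [key, key] at hh
    exact h1 _ _ _ _ _ _ hh
  · intro l i j
    rw [key]
    exact h2 l i j

end HSlemmas

/-- The set of numbers in a run of `n` triples `(x + 2 j, y - j, x + y + j)`. -/
def RunSet (x y n : ℤ) : Set ℤ :=
  {v | (x ≤ v ∧ v < x + 2 * n ∧ (v - x) % 2 = 0) ∨ (y - n < v ∧ v ≤ y) ∨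
    (x + y ≤ v ∧ v < x + y + n)}

theorem hs_pairs (x y : ℤ) (h : ℕ) (hx : 0 < x) (hxy : x + 6 * h ≤ y + 2) :
    HS (Fin h) (Fin 3) (Fin 2) ![-2, 1, 1] (RunSet x y (2 * h)) := by
  refine HS.of_abs (fun l => !![x + 4 * l, -(x + 4 * l + 2);
      y - 2 * l, -(y - 2 * l - 1);
      -(x + y + 2 * l), x + y + 2 * l + 1])
    (fun l => !![x + 4 * l, x + 4 * l + 2;
      y - 2 * l, y - 2 * l - 1;
      x + y + 2 * l, x + y + 2 * l + 1]) ?_ ?_ ?_ ?_ ?_ ?_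
  · rintro ⟨l, hl⟩ i j
    fin_cases i <;> fin_cases j <;> simp <;> omega
  · rintro ⟨l, hl⟩ i j
    fin_cases i <;> fin_cases j <;> simp
  · rintro ⟨l, hl⟩ i j ⟨l', hl'⟩ i' j' hh
    fin_cases i <;> fin_cases j <;> fin_cases i' <;> fin_cases j' <;> simp at hh ⊢ <;> omega
  · rintro ⟨l, hl⟩ i j
    simp only [RunSet, Set.mem_ofPred_eq]
    fin_cases i <;> fin_cases j <;> simp <;> omega
  · intro l i
    fin_cases i <;> simp [Fin.sum_univ_succ] <;> ring
  · intro l j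
    fin_cases j <;> simp [Fin.sum_univ_succ] <;> ring

theorem hs_trips (x y : ℤ) (h : ℕ) (hx : 0 < x) (hxy : x + 9 * h ≤ y + 2) :
    HS (Fin h) (Fin 3) (Fin 3) ![-3, 0, 3] (RunSet x y (3 * h)) := by
  refine HS.of_abs (fun l => !![x + 6 * l, -(x + y + 3 * l + 1), y - 3 * l - 2;
      y - 3 * l, x + 6 * l + 2, -(x + y + 3 * l + 2);
      -(x + y + 3 * l), y - 3 * l - 1, x + 6 * l + 4])
    (fun l => !![x + 6 * l, x + y + 3 * l + 1, y - 3 * l - 2;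
      y - 3 * l, x + 6 * l + 2, x + y + 3 * l + 2;
      x + y + 3 * l, y - 3 * l - 1, x + 6 * l + 4]) ?_ ?_ ?_ ?_ ?_ ?_
  · rintro ⟨l, hl⟩ i j
    fin_cases i <;> fin_cases j <;> simp <;> omega
  · rintro ⟨l, hl⟩ i j
    fin_cases i <;> fin_cases j <;> simp
  · rintro ⟨l, hl⟩ i j ⟨l', hl'⟩ i' j' hh
    fin_cases i <;> fin_cases j <;> fin_cases i' <;> fin_cases j' <;> simp at hh ⊢ <;> omega
  · rintro ⟨l, hl⟩ i j
    simp only [RunSet, Set.mem_ofPred_eq]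
    fin_cases i <;> fin_cases j <;> simp <;> omega
  · intro l i
    fin_cases i <;> simp [Fin.sum_univ_succ] <;> ring
  · intro l j
    fin_cases j <;> simp [Fin.sum_univ_succ] <;> ring

/-- The numbers used by the exceptional block. -/
def ExcSet (s : ℤ) : Set ℤ :=
  {v | v = 1 ∨ v = 2 ∨ v = 4 ∨ v = 2*s-1 ∨ v = 2*s+1 ∨ v = 4*s-1 ∨ v = 4*s ∨
    (5*s-1 ≤ v ∧ v ≤ 5*s+1) ∨ v = 6*s ∨ v = 6*s+1 ∨ v = 7*s ∨ v = 8*s-1 ∨ v = 8*s ∨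
    (10*s-2 ≤ v ∧ v ≤ 10*s+2) ∨ v = 12*s}

set_option maxHeartbeats 4000000 in
theorem hs_exc (s : ℤ) (hs : 11 ≤ s) :
    HS Unit (Fin 3) (Fin 7) (fun _ => 0) (ExcSet s) := by
  refine HS.of_abs (fun _ => !![2*s+1, -1, -(6*s), 10*s, 4*s, 2, -(10*s+2);
      5*s-1, -(5*s), 8*s-1, -(6*s+1), 8*s, -(10*s+1), 4;
      -(7*s), 5*s+1, -(2*s-1), -(4*s-1), -(12*s), 10*s-1, 10*s-2])
    (fun _ => !![2*s+1, 1, 6*s, 10*s, 4*s, 2, 10*s+2;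
      5*s-1, 5*s, 8*s-1, 6*s+1, 8*s, 10*s+1, 4;
      7*s, 5*s+1, 2*s-1, 4*s-1, 12*s, 10*s-1, 10*s-2]) ?_ ?_ ?_ ?_ ?_ ?_
  · intro l i j
    fin_cases i <;> fin_cases j <;> simp <;> omega
  · intro l i j
    fin_cases i <;> fin_cases j <;> simp
  · intro l i j l' i' j' hh
    refine ⟨rfl, ?_⟩
    fin_cases i <;> fin_cases j <;> fin_cases i' <;> fin_cases j' <;> simp at hh ⊢ <;> omega
  · intro l i j
    simp only [ExcSet, Set.mem_ofPred_eq]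
    fin_cases i <;> fin_cases j <;> simp <;> omega
  · intro l i
    fin_cases i <;> simp [Fin.sum_univ_succ] <;> ring
  · intro l j
    fin_cases j <;> simp [Fin.sum_univ_succ] <;> ring

theorem hs_bulk (N : ℤ) (h : ℕ) (hN : 0 ≤ N) :
    HS (Fin h) (Fin 4) (Fin 4) (fun _ => 0) {v | N < v ∧ v ≤ N + 16 * h} := by
  refine HS.of_abs (fun l i j => ![1, -1, -1, 1] i * ![1, -1, -1, 1] j * (N + 16 * l + 4 * i + j + 1))
    (fun l i j => N + 16 * l + 4 * i + j + 1) ?_ ?_ ?_ ?_ ?_ ?_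
  · intro l i j
    positivity
  · intro l i j
    fin_cases i <;> fin_cases j <;> simp
  · intro l i j l' i' j' hh
    refine ⟨Fin.ext ?_, Fin.ext ?_, Fin.ext ?_⟩ <;> omega
  · intro l i j
    simp only [Set.mem_ofPred_eq]
    omega
  · intro l i
    fin_cases i <;> simp [Fin.sum_univ_succ] <;> ring
  · intro l j
    fin_cases j <;> simp [Fin.sum_univ_succ] <;> ring

theorem HS.reindex {ι ι' α β : Type} [Fintype α] [Fintype β] [Fintype ι] [Fintype ι']
    {r : α → ℤ} {S : Set ℤ} (h : HS ι α β r S) (hc : Fintype.card ι' = Fintype.card ι) :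
    HS ι' α β r S :=
  h.equiv (Fintype.equivOfCardEq hc) (Equiv.refl α) (Equiv.refl β)

theorem HS.recol {ι α β β' : Type} [Fintype α] [Fintype β] [Fintype β']
    {r : α → ℤ} {S : Set ℤ} (h : HS ι α β r S) (hc : Fintype.card β' = Fintype.card β) :
    HS ι α β' r S :=
  h.equiv (Equiv.refl ι) (Equiv.refl α) (Fintype.equivOfCardEq hc)

theorem HS.rerow {ι α α' β : Type} [Fintype α] [Fintype β] [Fintype α']
    {S : Set ℤ} (h : HS ι α β (fun _ => 0) S) (hc : Fintype.card α' = Fintype.card α) :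
    HS ι α' β (fun _ => 0) S :=
  h.equiv (Equiv.refl ι) (Fintype.equivOfCardEq hc) (Equiv.refl β)

/-- Two families of pairs make a family of `3 × 4` blocks. -/
theorem hs_quad {ι : Type} {S S' : Set ℤ} (h : HS ι (Fin 3) (Fin 2) ![-2, 1, 1] S)
    (h' : HS ι (Fin 3) (Fin 2) ![-2, 1, 1] S') (hd : Disjoint S S') :
    HS ι (Fin 3) (Fin 4) (fun _ => 0) (S ∪ S') := by
  have := (h.hcat h'.neg hd).recol (β' := Fin 4) (by simp)
  simpa only [add_neg_cancel] using this

/-- A family of trips and two families of pairs make a family of `3 × 7` blocks. -/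
theorem hs_seven {ι : Type} {S S' T : Set ℤ} (ht : HS ι (Fin 3) (Fin 3) ![-3, 0, 3] T)
    (h : HS ι (Fin 3) (Fin 2) ![-2, 1, 1] S)
    (h' : HS ι (Fin 3) (Fin 2) ![-2, 1, 1] S') (hd : Disjoint S S') (hd' : Disjoint T (S ∪ S')) :
    HS ι (Fin 3) (Fin 7) (fun _ => 0) (T ∪ (S ∪ S')) := by
  have h2 := h'.equiv (Equiv.refl ι) (finRotate 3) (Equiv.refl (Fin 2))
  have := (ht.hcat (h.neg.hcat h2 hd) hd').recol (β' := Fin 7) (by simp)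
  convert this using 1
  funext i
  fin_cases i <;> rfl

set_option maxHeartbeats 4000000 in
theorem blocks (s P K : ℕ) (hT : 4 * s = 7 * P + 4 * K) (hs : 11 ≤ s) (hP : P % 4 = 0)
    (hP4 : 4 ≤ P) (hPs : 3 * P ≤ 2 * s) :
    ∃ S₁ S₂ : Set ℤ, S₁ ⊆ {v | 1 ≤ v ∧ v ≤ 12 * (s : ℤ)} ∧ S₂ ⊆ {v | 1 ≤ v ∧ v ≤ 12 * (s : ℤ)} ∧
      Disjoint S₁ S₂ ∧ HS (Fin P) (Fin 3) (Fin 7) (fun _ => 0) S₁ ∧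
      HS (Fin K) (Fin 3) (Fin 4) (fun _ => 0) S₂ := by
  obtain ⟨e, he, he1⟩ : ∃ e : ℕ, s % 2 = e ∧ e ≤ 1 := ⟨s % 2, rfl, by omega⟩
  obtain ⟨t, ht⟩ : ∃ t : ℕ, t + 2 * e + 1 = P := ⟨P - 1 - 2 * e, by omega⟩
  obtain ⟨p, hp⟩ : ∃ p : ℕ, 2 * p + 3 + 3 * t = 2 * s := ⟨(2 * s - 3 - 3 * t) / 2, by omega⟩
  obtain ⟨q, hq⟩ : ∃ q : ℕ, 2 * q + 2 + 3 * e = s := ⟨(s - 2 - 3 * e) / 2, by omega⟩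
  have E := hs_exc (s : ℤ) (by omega)
  have A3 := hs_trips 6 (10 * s - 3) t (by omega) (by omega)
  have A2 := hs_pairs (6 + 6 * t) (10 * s - 3 - 3 * t) p (by omega) (by omega)
  have B3 := hs_trips (2 * s + 3) (5 * s - 2) e (by omega) (by omega)
  have B2 := hs_pairs (2 * s + 3 + 6 * e) (5 * s - 2 - 3 * e) q (by omega) (by omega)
  have C3 := hs_trips 3 (6 * s - 1) e (by omega) (by omega)
  have C2 := hs_pairs (3 + 6 * e) (6 * s - 1 - 3 * e) q (by omega) (by omega)
  have T3 := A3.union (B3.union C3 (by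
      rw [Set.disjoint_left]; rintro v (hv | hv | hv) (hv' | hv' | hv') <;>
        (clear hT he hP hP4 hPs; omega))) (by

      rw [Set.disjoint_left]
      rintro v (hv | hv | hv) ((hv' | hv' | hv') | (hv' | hv' | hv')) <;>
        (clear hT he hP hP4 hPs; omega))
  have T2 := A2.union (B2.union C2 (by
      rw [Set.disjoint_left]; rintro v (hv | hv | hv) (hv' | hv' | hv') <;>
        (clear hT he hP hP4 hPs; omega))) (by

      rw [Set.disjoint_left]
      rintro v (hv | hv | hv) ((hv' | hv' | hv') | (hv' | hv' | hv')) <;>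
        (clear hT he hP hP4 hPs; omega))
  have D23 : Disjoint (RunSet 6 (10 * s - 3) (3 * t) ∪
      (RunSet (2 * s + 3) (5 * s - 2) (3 * e) ∪ RunSet 3 (6 * s - 1) (3 * e)))
      (RunSet (6 + 6 * t) (10 * s - 3 - 3 * t) (2 * p) ∪
      (RunSet (2 * s + 3 + 6 * e) (5 * s - 2 - 3 * e) (2 * q) ∪
        RunSet (3 + 6 * e) (6 * s - 1 - 3 * e) (2 * q))) := by
    simp only [Set.disjoint_union_left, Set.disjoint_union_right]
    constructorm* _ ∧ _ <;>
    · rw [Set.disjoint_left]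
      rintro v (hv | hv | hv) (hv' | hv' | hv') <;>
        (clear hT he hP hP4 hPs; omega)
  have DE3 : Disjoint (ExcSet s) (RunSet 6 (10 * s - 3) (3 * t) ∪
      (RunSet (2 * s + 3) (5 * s - 2) (3 * e) ∪ RunSet 3 (6 * s - 1) (3 * e))) := by
    simp only [Set.disjoint_union_right]
    constructorm* _ ∧ _ <;>
    · rw [Set.disjoint_left]
      rintro v (h | h | h | h | h | h | h | h | h | h | h | h | h | h | h) (hv | hv | hv) <;>
        (clear hT he hP hP4 hPs; omega)
  have DE2 : Disjoint (ExcSet s) (RunSet (6 + 6 * t) (10 * s - 3 - 3 * t) (2 * p) ∪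
      (RunSet (2 * s + 3 + 6 * e) (5 * s - 2 - 3 * e) (2 * q) ∪
        RunSet (3 + 6 * e) (6 * s - 1 - 3 * e) (2 * q))) := by
    simp only [Set.disjoint_union_right]
    constructorm* _ ∧ _ <;>
    · rw [Set.disjoint_left]
      rintro v (h | h | h | h | h | h | h | h | h | h | h | h | h | h | h) (hv | hv | hv) <;>
        (clear hT he hP hP4 hPs; omega)
  have U3 : RunSet 6 (10 * s - 3) (3 * t) ∪
      (RunSet (2 * s + 3) (5 * s - 2) (3 * e) ∪ RunSet 3 (6 * s - 1) (3 * e)) ⊆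
      {v | 1 ≤ v ∧ v ≤ 12 * (s : ℤ)} := by
    rintro v ((hv | hv | hv) | (hv | hv | hv) | (hv | hv | hv)) <;> constructor <;>
      (clear hT he hP hP4 hPs; omega)
  have U2 : RunSet (6 + 6 * t) (10 * s - 3 - 3 * t) (2 * p) ∪
      (RunSet (2 * s + 3 + 6 * e) (5 * s - 2 - 3 * e) (2 * q) ∪
        RunSet (3 + 6 * e) (6 * s - 1 - 3 * e) (2 * q)) ⊆
      {v | 1 ≤ v ∧ v ≤ 12 * (s : ℤ)} := by
    rintro v ((hv | hv | hv) | (hv | hv | hv) | (hv | hv | hv)) <;> constructor <;>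
      (clear hT he hP hP4 hPs; omega)
  have UE : ExcSet s ⊆ {v | 1 ≤ v ∧ v ≤ 12 * (s : ℤ)} := by
    intro v
    simp only [ExcSet, Set.mem_ofPred_eq]
    omega
  generalize RunSet 6 (10 * s - 3) (3 * t) ∪
      (RunSet (2 * s + 3) (5 * s - 2) (3 * e) ∪ RunSet 3 (6 * s - 1) (3 * e)) = X3 at *
  generalize RunSet (6 + 6 * t) (10 * s - 3 - 3 * t) (2 * p) ∪
      (RunSet (2 * s + 3 + 6 * e) (5 * s - 2 - 3 * e) (2 * q) ∪
        RunSet (3 + 6 * e) (6 * s - 1 - 3 * e) (2 * q)) = X2 at *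
  generalize ExcSet s = XE at *
  have T3' := T3.reindex (ι' := Fin (P - 1)) (by simp; omega)
  have T2' := T2.reindex (ι' := (Fin (P - 1) ⊕ Fin (P - 1)) ⊕ (Fin K ⊕ Fin K)) (by simp; omega)
  obtain ⟨Y, Z, hY, hZ, hYZ, HY, HZ⟩ := T2'.split
  obtain ⟨Y1, Y2, hY1, hY2, hY12, HY1, HY2⟩ := HY.split
  obtain ⟨Z1, Z2, hZ1, hZ2, hZ12, HZ1, HZ2⟩ := HZ.split
  have hYY : Y1 ∪ Y2 ⊆ Y := Set.union_subset hY1 hY2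
  have hZZ : Z1 ∪ Z2 ⊆ Z := Set.union_subset hZ1 hZ2
  have h7 := hs_seven T3' HY1 HY2 hY12 (D23.mono_right (hYY.trans hY))
  have h7' := E.union h7 (by
    rw [Set.disjoint_union_right]
    exact ⟨DE3, DE2.mono_right (hYY.trans hY)⟩)
  refine ⟨_, _, ?_, ?_, ?_, h7'.reindex (by simp; omega), hs_quad HZ1 HZ2 hZ12⟩
  · exact Set.union_subset UE (Set.union_subset U3 (hYY.trans (hY.trans U2)))
  · exact hZZ.trans (hZ.trans U2)
  · rw [Set.disjoint_union_left, Set.disjoint_union_left]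
    exact ⟨DE2.mono_right (hZZ.trans hZ), D23.mono_right (hZZ.trans hZ), hYZ.mono hYY hZZ⟩

theorem hs_all (a b c k : ℕ) (ha : 1 ≤ a) (hab : 2 ≤ a + b) (hc : 0 < c) (hc4 : c % 4 = 0) :
    HS (Fin c) (Fin (3 * a + 4 * b)) (Fin (7 + 4 * k)) (fun _ => 0)
      {v | 1 ≤ v ∧ v ≤ ((3 * a + 4 * b : ℕ) : ℤ) * ((7 + 4 * k : ℕ) : ℤ) * c} := by
  obtain ⟨d, rfl⟩ : ∃ d, c = 4 * d := ⟨c / 4, by omega⟩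
  have hd : 1 ≤ d := by omega
  have e1 : 1 ≤ d * a := Nat.mul_pos hd ha
  have e2 : 2 * 1 ≤ (a + b) * d := Nat.mul_le_mul hab hd
  have hs11 : 11 ≤ d * (7 * a + 4 * a * k + 4 * b) := by
    have : d * (7 * a + 4 * a * k + 4 * b) = 3 * (d * a) + 4 * ((a + b) * d) + 4 * (d * a * k) := by
      ring
    omega
  obtain ⟨S1, S2, hS1, hS2, h12, H1, H2⟩ := blocks (d * (7 * a + 4 * a * k + 4 * b)) (4 * d * a)
    (4 * d * a * k + 4 * d * b) (by ring) hs11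
    (by rw [mul_assoc]; omega) (by rw [mul_assoc]; omega)
    (by
      have : d * (7 * a + 4 * a * k + 4 * b) = 7 * (d * a) + 4 * (d * a * k) + 4 * (d * b) := by ring
      rw [this, mul_assoc]
      omega)
  have H2' := H2.reindex (ι' := ((Fin (4 * d) × Fin a) × Fin k) ⊕ (Fin (4 * d) × Fin b)) (by simp)
  obtain ⟨Y, Z, hY, hZ, hYZ, HY, HZ⟩ := H2'.split
  have H1' := H1.reindex (ι' := Fin (4 * d) × Fin a) (by simp)
  have top := H1'.hcat HY.hgroup (h12.mono_right hY)
  simp only [add_zero] at top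
  have top2 := top.vgroup.recol (β' := Fin (7 + 4 * k)) (by simp)
  have bulk := (hs_bulk (12 * (d * (7 * a + 4 * a * k + 4 * b) : ℕ)) (4 * d * b * (1 + k))
    (by positivity)).reindex (ι' := (Fin (4 * d) × Fin b) × Fin (1 + k)) (by simp)
  have bot := HZ.transpose.hcat bulk.hgroup (by
    rw [Set.disjoint_left]
    intro v hv hv'
    have := hS2 (hZ hv)
    simp only [Set.mem_ofPred_eq] at this hv'
    omega)
  simp only [add_zero] at bot
  have bot2 := bot.vgroup.recol (β' := Fin (7 + 4 * k)) (by simp; ring)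
  have all := (top2.vcat bot2 (by
    rw [Set.disjoint_left]
    intro v hv hv'
    simp only [Set.mem_union] at hv hv'
    rcases hv with hv | hv <;> rcases hv' with hv' | hv'
    · exact Set.disjoint_left.1 h12 hv (hZ hv')
    · have := hS1 hv
      simp only [Set.mem_ofPred_eq] at this hv'
      omega
    · exact Set.disjoint_left.1 hYZ hv hv'
    · have := hS2 (hY hv)
      simp only [Set.mem_ofPred_eq] at this hv'
      omega)).rerow (α' := Fin (3 * a + 4 * b)) (by simp)
  refine all.mono ?_
  have hN : ((3 * a + 4 * b : ℕ) : ℤ) * ((7 + 4 * k : ℕ) : ℤ) * (4 * d : ℕ) =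
      12 * (d * (7 * a + 4 * a * k + 4 * b) : ℕ) + 16 * (4 * d * b * (1 + k) : ℕ) := by
    push_cast
    ring
  rw [hN]
  intro v hv
  simp only [Set.mem_union] at hv
  simp only [Set.mem_ofPred_eq]
  rcases hv with (hv | hv) | (hv | hv)
  · have := hS1 hv
    simp only [Set.mem_ofPred_eq] at this
    omega
  · have := hS2 (hY hv)
    simp only [Set.mem_ofPred_eq] at this
    omega
  · have := hS2 (hZ hv)
    simp only [Set.mem_ofPred_eq] at this
    omega
  · simp only [Set.mem_ofPred_eq] at hv
    omega

theorem IsIHS_of_HS (m n c : ℕ) (h : HS (Fin c) (Fin m) (Fin n) (fun _ => 0)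
    {v | 1 ≤ v ∧ v ≤ (m : ℤ) * n * c}) :
    ∃ A : Fin c → Matrix (Fin m) (Fin n) ℤ, IsIHS m n c A := by
  obtain ⟨A, h1, h2, h3, h4⟩ := h
  have inj : Function.Injective (fun p : Fin c × Fin m × Fin n => |A p.1 p.2.1 p.2.2|) := by
    rintro ⟨l, i, j⟩ ⟨l', i', j'⟩ hh
    have := h1 _ _ _ _ _ _ hh
    simp only [Prod.mk.injEq]
    exact this
  refine ⟨A, inj, ?_, h3, h4⟩
  have himg : Finset.univ.image (fun p : Fin c × Fin m × Fin n => |A p.1 p.2.1 p.2.2|) =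
      Finset.Icc 1 ((m : ℤ) * n * c) := by
    apply Finset.eq_of_subset_of_card_le
    · intro x hx
      simp only [Finset.mem_image, Finset.mem_univ, true_and] at hx
      obtain ⟨p, rfl⟩ := hx
      have := h2 p.1 p.2.1 p.2.2
      simpa using this
    · rw [Finset.card_image_of_injective _ inj]
      simp only [Int.card_Icc, Finset.card_univ, Fintype.card_prod, Fintype.card_fin]
      have : ((m : ℤ) * n * c + 1 - 1) = ((c * (m * n) : ℕ) : ℤ) := by
        push_cast
        ring
      rw [this, Int.toNat_natCast]
  intro x
  constructor
  · intro hx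
    have : x ∈ Finset.Icc 1 ((m : ℤ) * n * c) := Finset.mem_Icc.2 hx
    rw [← himg] at this
    simp only [Finset.mem_image, Finset.mem_univ, true_and] at this
    obtain ⟨p, hp⟩ := this
    exact ⟨p.1, p.2.1, p.2.2, hp⟩
  · rintro ⟨l, i, j, rfl⟩
    exact h2 l i j

theorem exists_IHS_c0_n3
    (m n c : ℕ) (hm : 0 < m) (hn : 0 < n) (hc : 0 < c)
    (hcmod : c % 4 = 0) (hmodd : Odd m) (hnmod : n % 4 = 3)
    (hm7 : 7 ≤ m) (hn7 : 7 ≤ n) :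
    ∃ A : Fin c → Matrix (Fin m) (Fin n) ℤ, IsIHS m n c A := by
  apply IsIHS_of_HS
  obtain ⟨k, rfl⟩ : ∃ k, n = 7 + 4 * k := ⟨(n - 7) / 4, by omega⟩
  obtain ⟨w, hw⟩ := hmodd
  obtain ⟨a, b, ha, hab, rfl⟩ : ∃ a b, 1 ≤ a ∧ 2 ≤ a + b ∧ m = 3 * a + 4 * b := by
    rcases Nat.even_or_odd' w with ⟨u, hu | hu⟩
    · exact ⟨3, u - 2, by omega, by omega, by omega⟩
    · exact ⟨1, u, by omega, by omega, by omega⟩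
  exact hs_all a b c k ha hab hc hcmod
end

section
/- Let m, n, c be positive integers such that c ≡ 0 (mod 4) and m ≡ n ≡ 1 (mod 4). If m ≥ 9 and n ≥ 9, then there exists an integer Heffter array set IHS(m, n; c). -/
/-- A family of zero-sum arrays whose absolute values cover `S`. -/
def Fam (L R C : Type) [Fintype R] [Fintype C] (S : Set ℤ) : Prop :=
  ∃ A : L → R → C → ℤ, (∀ x ∈ S, ∃ l i j, |A l i j| = x) ∧
    (∀ l i, ∑ j, A l i j = 0) ∧ (∀ l j, ∑ i, A l i j = 0)

section FamLemmas

variable {L L' R R' C C' K : Type} [Fintype R] [Fintype C] [Fintype R'] [Fintype C'] [Fintype K]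

theorem Fam.transpose {S : Set ℤ} (h : Fam L R C S) : Fam L C R S := by
  obtain ⟨A, h1, h2, h3⟩ := h
  refine ⟨fun l j i => A l i j, fun x hx => ?_, h3, h2⟩
  obtain ⟨l, i, j, h⟩ := h1 x hx
  exact ⟨l, j, i, h⟩

theorem Fam.glue {S1 S2 S3 S4 : Set ℤ} (h1 : Fam L R C S1) (h2 : Fam L R C' S2)
    (h3 : Fam L R' C S3) (h4 : Fam L R' C' S4) :
    Fam L (R ⊕ R') (C ⊕ C') (S1 ∪ S2 ∪ S3 ∪ S4) := by
  obtain ⟨A1, a1, b1, c1⟩ := h1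
  obtain ⟨A2, a2, b2, c2⟩ := h2
  obtain ⟨A3, a3, b3, c3⟩ := h3
  obtain ⟨A4, a4, b4, c4⟩ := h4
  refine ⟨fun l i j => Sum.elim (fun i => Sum.elim (A1 l i) (A2 l i) j)
    (fun i => Sum.elim (A3 l i) (A4 l i) j) i, ?_, ?_, ?_⟩
  · rintro x (((hx | hx) | hx) | hx)
    · obtain ⟨l, i, j, h⟩ := a1 x hx
      exact ⟨l, Sum.inl i, Sum.inl j, h⟩
    · obtain ⟨l, i, j, h⟩ := a2 x hx
      exact ⟨l, Sum.inl i, Sum.inr j, h⟩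
    · obtain ⟨l, i, j, h⟩ := a3 x hx
      exact ⟨l, Sum.inr i, Sum.inl j, h⟩
    · obtain ⟨l, i, j, h⟩ := a4 x hx
      exact ⟨l, Sum.inr i, Sum.inr j, h⟩
  · rintro l (i | i) <;> simp [b1, b2, b3, b4]
  · rintro l (j | j) <;> simp [c1, c2, c3, c4]

theorem Fam.stack {S : Set ℤ} (h : Fam (L × K) R C S) : Fam L (R × K) C S := by
  obtain ⟨A, h1, h2, h3⟩ := h
  refine ⟨fun l p j => A (l, p.2) p.1 j, ?_, ?_, ?_⟩
  · intro x hx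
    obtain ⟨⟨l, k⟩, i, j, h⟩ := h1 x hx
    exact ⟨l, (i, k), j, h⟩
  · rintro l ⟨i, k⟩
    exact h2 _ _
  · intro l j
    rw [Fintype.sum_prod_type_right]
    exact Finset.sum_eq_zero fun k _ => h3 (l, k) j

theorem Fam.split {S : Set ℤ} (h : Fam (L ⊕ L') R C S) :
    ∃ S1 S2 : Set ℤ, S ⊆ S1 ∪ S2 ∧ Fam L R C S1 ∧ Fam L' R C S2 := by
  obtain ⟨A, h1, h2, h3⟩ := h
  refine ⟨{x | ∃ l i j, |A (Sum.inl l) i j| = x}, {x | ∃ l i j, |A (Sum.inr l) i j| = x}, ?_,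
    ⟨fun l => A (Sum.inl l), fun x hx => hx, fun l => h2 _, fun l => h3 _⟩,
    ⟨fun l => A (Sum.inr l), fun x hx => hx, fun l => h2 _, fun l => h3 _⟩⟩
  intro x hx
  obtain ⟨l | l, i, j, h⟩ := h1 x hx
  · exact Or.inl ⟨l, i, j, h⟩
  · exact Or.inr ⟨l, i, j, h⟩

theorem Fam.mono {S T : Set ℤ} (h : Fam L R C S) (hT : T ⊆ S) : Fam L R C T := by
  obtain ⟨A, h1, h2⟩ := h
  exact ⟨A, fun x hx => h1 x (hT hx), h2⟩

theorem Fam.reindex {S : Set ℤ} (h : Fam L R C S) (e : L' ≃ L) (f : R' ≃ R) (g : C' ≃ C) :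
    Fam L' R' C' S := by
  obtain ⟨A, h1, h2, h3⟩ := h
  refine ⟨fun l i j => A (e l) (f i) (g j), ?_, ?_, ?_⟩
  · intro x hx
    obtain ⟨l, i, j, h⟩ := h1 x hx
    exact ⟨e.symm l, f.symm i, g.symm j, by simpa using h⟩
  · intro l i
    rw [← h2 (e l) (f i)]
    exact Equiv.sum_comp g (fun j => A (e l) (f i) j)
  · intro l j
    rw [← h3 (e l) (g j)]
    exact Equiv.sum_comp f (fun i => A (e l) i (g j))

end FamLemmas

/-- A covering family of the right size is an integer Heffter array set. -/
theorem Fam.toIHS {m n c : ℕ} (h : Fam (Fin c) (Fin m) (Fin n) (Set.Icc 1 ((m : ℤ) * n * c))) :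
    ∃ A : Fin c → Matrix (Fin m) (Fin n) ℤ, IsIHS m n c A := by
  obtain ⟨A, h1, h2, h3⟩ := h
  refine ⟨fun l => A l, ?_⟩
  set f : Fin c × Fin m × Fin n → ℤ := fun p => |A p.1 p.2.1 p.2.2| with hf
  have hsub : Finset.Icc (1 : ℤ) ((m : ℤ) * n * c) ⊆ Finset.univ.image f := by
    intro x hx
    rw [Finset.mem_Icc] at hx
    obtain ⟨l, i, j, h⟩ := h1 x hx
    exact Finset.mem_image.2 ⟨(l, i, j), Finset.mem_univ _, h⟩
  have hcI : (Finset.Icc (1 : ℤ) ((m : ℤ) * n * c)).card = m * n * c := by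
    have : ((m : ℤ) * n * c) = ((m * n * c : ℕ) : ℤ) := by push_cast; ring
    rw [this, Int.card_Icc]
    lia
  have hcU : (Finset.univ : Finset (Fin c × Fin m × Fin n)).card = m * n * c := by
    simp
    ring
  have hle : (Finset.univ.image f).card ≤ m * n * c := hcU ▸ Finset.card_image_le
  have heq : Finset.Icc (1 : ℤ) ((m : ℤ) * n * c) = Finset.univ.image f :=
    Finset.eq_of_subset_of_card_le hsub (by rw [hcI]; exact hle)
  have hinj : Function.Injective f := by
    have : (Finset.univ.image f).card = (Finset.univ : Finset (Fin c × Fin m × Fin n)).card := by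
      rw [← heq, hcI, hcU]
    have := Finset.card_image_iff.1 this
    simpa using this
  refine ⟨hinj, fun x => ⟨fun hx => h1 x hx, ?_⟩, h2, h3⟩
  rintro ⟨l, i, j, h⟩
  have : x ∈ Finset.univ.image f := Finset.mem_image.2 ⟨(l, i, j), Finset.mem_univ _, h⟩
  rw [← heq, Finset.mem_Icc] at this
  exact this

/-! ### Shiftable 4 × 4 filler blocks -/

/-- The basic 4 × 4 block made of four runs of four consecutive numbers. -/
def fillBlock (b : Fin 4 → ℤ) : Fin 4 → Fin 4 → ℤ :=
  ![![b 0 + 1, -(b 0 + 2), -(b 1 + 1), b 1 + 2],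
    ![-(b 0 + 3), b 0 + 4, b 1 + 3, -(b 1 + 4)],
    ![-(b 2 + 1), b 2 + 2, b 3 + 1, -(b 3 + 2)],
    ![b 2 + 3, -(b 2 + 4), -(b 3 + 3), b 3 + 4]]

theorem fam_fill {L : Type} (b : L → Fin 4 → ℤ) (hb : ∀ l i, 0 ≤ b l i) :
    Fam L (Fin 4) (Fin 4) {x | ∃ l i, b l i + 1 ≤ x ∧ x ≤ b l i + 4} := by
  refine ⟨fun l => fillBlock (b l), ?_, ?_, ?_⟩
  · rintro x ⟨l, i, h1, h2⟩
    have h0 := hb l i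
    have hx : |x| = x := abs_of_nonneg (by lia)
    have : x = b l i + 1 ∨ x = b l i + 2 ∨ x = b l i + 3 ∨ x = b l i + 4 := by lia
    refine ⟨l, ?_⟩
    have key : ∃ r s, fillBlock (b l) r s = x ∨ fillBlock (b l) r s = -x := by
      fin_cases i
      · rcases this with h | h | h | h
        · exact ⟨0, 0, Or.inl h.symm⟩
        · exact ⟨0, 1, Or.inr (by rw [h]; rfl)⟩
        · exact ⟨1, 0, Or.inr (by rw [h]; rfl)⟩
        · exact ⟨1, 1, Or.inl h.symm⟩
      · rcases this with h | h | h | h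
        · exact ⟨0, 2, Or.inr (by rw [h]; rfl)⟩
        · exact ⟨0, 3, Or.inl h.symm⟩
        · exact ⟨1, 2, Or.inl h.symm⟩
        · exact ⟨1, 3, Or.inr (by rw [h]; rfl)⟩
      · rcases this with h | h | h | h
        · exact ⟨2, 0, Or.inr (by rw [h]; rfl)⟩
        · exact ⟨2, 1, Or.inl h.symm⟩
        · exact ⟨3, 0, Or.inl h.symm⟩
        · exact ⟨3, 1, Or.inr (by rw [h]; rfl)⟩
      · rcases this with h | h | h | h
        · exact ⟨2, 2, Or.inl h.symm⟩
        · exact ⟨2, 3, Or.inr (by rw [h]; rfl)⟩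
        · exact ⟨3, 2, Or.inr (by rw [h]; rfl)⟩
        · exact ⟨3, 3, Or.inl h.symm⟩
    obtain ⟨r, s, h | h⟩ := key
    · exact ⟨r, s, by simp only [h, hx]⟩
    · exact ⟨r, s, by simp only [h, abs_neg, hx]⟩
  · intro l i
    fin_cases i <;> simp [fillBlock, Fin.sum_univ_four] <;> ring
  · intro l j
    fin_cases j <;> simp [fillBlock, Fin.sum_univ_four] <;> ring

/-! ### Families with entries affine in the index -/

/-- A table entry `(s, a, b, g, h)` stands for `s * (a * t + b * M + g + h * S)`. -/
abbrev Entry := ℤ × ℤ × ℤ × ℤ × ℤ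

/-- The value of a table entry. -/
def entryVal (e : Entry) (t M S : ℤ) : ℤ :=
  e.1 * (e.2.1 * t + e.2.2.1 * M + e.2.2.2.1 + e.2.2.2.2 * S)

/-- The four signed coefficient sums of a line vanish. -/
def LineOK {n : ℕ} (f : Fin n → Entry) : Prop :=
  ∑ i, (f i).1 * (f i).2.1 = 0 ∧ ∑ i, (f i).1 * (f i).2.2.1 = 0 ∧
  ∑ i, (f i).1 * (f i).2.2.2.1 = 0 ∧ ∑ i, (f i).1 * (f i).2.2.2.2 = 0

instance {n : ℕ} (f : Fin n → Entry) : Decidable (LineOK f) := by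
  unfold LineOK
  infer_instance

theorem LineOK.sum_eq {n : ℕ} {f : Fin n → Entry} (h : LineOK f) (t M S : ℤ) :
    ∑ i, entryVal (f i) t M S = 0 := by
  obtain ⟨h1, h2, h3, h4⟩ := h
  have : ∀ i, entryVal (f i) t M S = ((f i).1 * (f i).2.1) * t + ((f i).1 * (f i).2.2.1) * M +
      (f i).1 * (f i).2.2.2.1 + ((f i).1 * (f i).2.2.2.2) * S := by
    intro i
    unfold entryVal
    ring
  simp only [this, Finset.sum_add_distrib, ← Finset.sum_mul, h1, h2, h3, h4]
  ring

/-- Some entry has the given unsigned coefficients. -/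
def Hit {u v w : ℕ} (tab : Fin u → Fin v → Fin w → Entry) (a b g h : ℤ) : Prop :=
  ∃ l i j, (tab l i j).2 = (a, b, g, h)

instance {u v w : ℕ} (tab : Fin u → Fin v → Fin w → Entry) (a b g h : ℤ) :
    Decidable (Hit tab a b g h) := by
  unfold Hit
  infer_instance

/-- The interval of length `2 * M` starting at `q * M + 1` is covered by two step-two entries. -/
def DoubleOK {u v w : ℕ} (tab : Fin u → Fin v → Fin w → Entry) (q h : ℤ) : Prop :=
  (Hit tab 2 q 1 h ∨ Hit tab (-2) (q + 2) (-1) h) ∧ (Hit tab 2 q 2 h ∨ Hit tab (-2) (q + 2) 0 h)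

instance {u v w : ℕ} (tab : Fin u → Fin v → Fin w → Entry) (q h : ℤ) :
    Decidable (DoubleOK tab q h) := by
  unfold DoubleOK
  infer_instance

/-- The unit interval number `q` is covered. -/
def UnitOK {u v w : ℕ} (tab : Fin u → Fin v → Fin w → Entry) (q h : ℤ) : Prop :=
  Hit tab 1 q 1 h ∨ Hit tab (-1) (q + 1) 0 h ∨ DoubleOK tab q h ∨ DoubleOK tab (q - 1) h

instance {u v w : ℕ} (tab : Fin u → Fin v → Fin w → Entry) (q h : ℤ) :
    Decidable (UnitOK tab q h) := by
  unfold UnitOK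
  infer_instance

/-- The local value `y` at level `h` is attained. -/
def Att {u v w : ℕ} (tab : Fin u → Fin v → Fin w → Entry) (M : ℕ) (y h : ℤ) : Prop :=
  ∃ (t : Fin M) (a b g : ℤ), Hit tab a b g h ∧ a * (t : ℕ) + b * M + g = y

theorem att_of {u v w : ℕ} {tab : Fin u → Fin v → Fin w → Entry} {M : ℕ} {y h a b g : ℤ}
    (hh : Hit tab a b g h) (t : ℤ) (h0 : 0 ≤ t) (h1 : t < M) (he : a * t + b * M + g = y) :
    Att tab M y h := by
  refine ⟨⟨t.toNat, by lia⟩, a, b, g, hh, ?_⟩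
  simpa [Int.toNat_of_nonneg h0] using he

theorem DoubleOK.att {u v w : ℕ} {tab : Fin u → Fin v → Fin w → Entry} {M : ℕ} {q h r : ℤ}
    (hd : DoubleOK tab q h) (h0 : 0 ≤ r) (h1 : r < 2 * M) : Att tab M (q * M + 1 + r) h := by
  obtain ⟨ho, he⟩ := hd
  rcases Int.even_or_odd' r with ⟨s, rfl | rfl⟩
  · rcases ho with ho | ho
    · exact att_of ho s (by lia) (by lia) (by ring)
    · exact att_of ho (M - 1 - s) (by lia) (by lia) (by ring)
  · rcases he with ho | ho
    · exact att_of ho s (by lia) (by lia) (by ring)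
    · exact att_of ho (M - 1 - s) (by lia) (by lia) (by ring)

theorem UnitOK.att {u v w : ℕ} {tab : Fin u → Fin v → Fin w → Entry} {M : ℕ} {q h r : ℤ}
    (hd : UnitOK tab q h) (h0 : 0 ≤ r) (h1 : r < M) : Att tab M (q * M + 1 + r) h := by
  rcases hd with hd | hd | hd | hd
  · exact att_of hd r h0 h1 (by ring)
  · exact att_of hd (M - 1 - r) (by lia) (by lia) (by ring)
  · exact hd.att h0 (by lia)
  · have := hd.att (M := M) (r := r + M) (by lia) (by lia)
    convert this using 1
    ring

theorem fam_affine {u v w : ℕ} (tab : Fin u → Fin v → Fin w → Entry) (M : ℕ) (S : ℤ)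
    (hS : 0 ≤ S) (nu : ℕ) (lev : ℕ → ℤ) (hlev : ∀ q, 0 ≤ lev q)
    (hs : ∀ l i j, (tab l i j).1 = 1 ∨ (tab l i j).1 = -1)
    (hr : ∀ l i, LineOK (fun j => tab l i j)) (hc : ∀ l j, LineOK (fun i => tab l i j))
    (hu : ∀ q < nu, UnitOK tab q (lev q)) :
    Fam (Fin M × Fin u) (Fin v) (Fin w)
      {x | ∃ q < nu, ∃ r < M, x = (q : ℤ) * M + 1 + (r : ℤ) + lev q * S} := by
  refine ⟨fun p i j => entryVal (tab p.2 i j) (p.1 : ℕ) M S, ?_, ?_, ?_⟩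
  · rintro x ⟨q, hq, r, hr, rfl⟩
    obtain ⟨t, a, b, g, ⟨l, i, j, hh⟩, he⟩ :=
      (hu q hq).att (M := M) (r := (r : ℤ)) (by lia) (by lia)
    refine ⟨(t, l), i, j, ?_⟩
    have hpos : (0 : ℤ) ≤ (q : ℤ) * M + 1 + (r : ℤ) + lev q * S := by
      have := hlev q
      positivity
    simp only [entryVal, hh, he]
    rcases hs l i j with h | h
    · rw [h, one_mul, abs_of_nonneg hpos]
    · rw [h, neg_one_mul, abs_neg, abs_of_nonneg hpos]
  · rintro ⟨t, l⟩ i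
    exact (hr l i).sum_eq _ _ _
  · rintro ⟨t, l⟩ j
    exact (hc l j).sum_eq _ _ _

/-- Look up a table. -/
def look (T : List (List (List Entry))) (u v w : ℕ) : Fin u → Fin v → Fin w → Entry :=
  fun l i j => ((T.getD l []).getD i []).getD j (0, 0, 0, 0, 0)

def stripTab : List (List (List (ℤ × ℤ × ℤ × ℤ × ℤ))) :=
  [[[(1,-1,5,0,1), (1,1,38,1,2), (1,-1,16,0,1), (-1,1,23,1,2), (-1,-2,36,0,2)],
    [(1,-1,8,0,1), (1,2,31,1,2), (1,1,2,1,1), (-1,1,22,1,2), (-1,1,19,1,2)],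
    [(-1,-1,11,0,1), (-1,1,33,1,2), (-1,-1,10,0,1), (1,1,16,1,2), (1,-2,38,0,2)],
    [(-1,-1,2,0,1), (-1,2,36,1,2), (-1,1,8,1,1), (1,1,29,1,2), (1,1,17,1,2)]],
   [[(1,1,13,1,1), (1,1,39,1,2), (1,1,0,1,1), (-1,1,21,1,2), (-1,2,31,2,2)],
    [(1,-1,6,0,1), (1,2,25,1,2), (1,1,14,1,1), (-1,1,27,1,2), (-1,1,18,1,2)],
    [(-1,1,12,1,1), (-1,1,30,1,2), (-1,1,11,1,1), (1,1,28,1,2), (1,2,25,2,2)],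
    [(-1,-1,7,0,1), (-1,2,34,1,2), (-1,1,3,1,1), (1,1,20,1,2), (1,1,24,1,2)]]]

def coreTab : List (List (List (ℤ × ℤ × ℤ × ℤ × ℤ))) :=
  [[[(-1,-1,7,0,0), (1,1,22,1,1), (-1,2,51,1,1), (-1,-1,61,0,1), (1,-1,97,0,1)],
    [(1,-1,47,0,1), (-1,-1,15,0,0), (1,1,48,1,1), (-1,-1,24,0,1), (-1,2,56,1,1)],
    [(-1,1,29,1,1), (-1,2,26,1,1), (-1,-1,19,0,0), (1,1,34,1,1), (1,1,40,1,1)],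
    [(-1,-2,73,-1,1), (1,-1,65,0,1), (1,-1,90,0,1), (-1,1,2,1,0), (-1,-1,80,0,1)],
    [(1,-1,62,0,1), (-1,-1,46,0,1), (-1,-1,68,0,1), (1,-2,53,0,1), (-1,-1,1,0,0)]],
   [[(-1,-1,17,0,0), (-1,2,76,1,1), (1,1,58,1,1), (1,1,63,1,1), (-1,1,28,1,1)],
    [(1,-2,73,0,1), (-1,-1,10,0,0), (-1,-1,37,0,1), (-1,1,50,1,1), (1,1,24,1,1)],
    [(-1,1,54,1,1), (1,1,25,1,1), (-1,-1,14,0,0), (-1,-1,33,0,1), (1,-2,76,0,1)],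
    [(-1,-1,70,0,1), (1,-1,83,0,1), (1,-2,58,0,1), (-1,-1,8,0,0), (-1,-1,63,0,1)],
    [(1,1,68,1,1), (-1,-1,22,0,1), (-1,1,65,1,1), (1,-2,28,0,1), (-1,-1,9,0,0)]],
   [[(1,-1,18,0,0), (1,-1,82,0,1), (-1,-1,93,0,1), (1,-1,79,0,1), (-1,-2,86,0,1)],
    [(1,1,95,1,1), (1,-1,2,0,0), (-1,1,47,1,1), (-1,-2,89,0,1), (1,-1,39,0,1)],
    [(1,-1,40,0,1), (-1,-2,95,0,1), (1,-1,6,0,0), (-1,1,31,1,1), (1,1,80,1,1)],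
    [(-1,-2,100,0,1), (1,1,66,1,1), (1,-1,60,0,1), (1,-1,11,0,0), (-1,1,37,1,1)],
    [(-1,1,53,1,1), (-1,1,55,1,1), (1,2,74,1,1), (1,1,30,1,1), (1,-1,4,0,0)]],
   [[(1,-1,20,0,0), (1,2,98,1,1), (-1,-1,42,0,1), (-1,1,97,1,1), (1,-1,21,0,1)],
    [(-1,1,49,1,1), (1,-1,5,0,0), (-1,-1,92,0,1), (1,-1,43,0,1), (1,2,93,1,1)],
    [(1,1,33,1,1), (-1,1,90,1,1), (1,-1,13,0,0), (1,2,87,1,1), (-1,1,43,1,1)],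
    [(1,-1,74,0,1), (-1,-1,84,0,1), (1,-2,86,-1,1), (1,1,11,1,0), (-1,-1,87,0,1)],
    [(-1,-2,78,0,1), (1,-1,71,0,1), (1,1,35,1,1), (-1,1,44,1,1), (1,-1,16,0,0)]]]

theorem fam_strip (M : ℕ) (S : ℤ) (hS : 0 ≤ S) : Fam (Fin M × Fin 2) (Fin 4) (Fin 5)
    {x | ∃ q : ℕ, q < 40 ∧ ∃ r < M, x = (q : ℤ) * M + 1 + (r : ℤ) + (if q < 16 then 1 else 2) * S} :=
  fam_affine (look stripTab 2 4 5) M S hS 40 (fun q => if q < 16 then 1 else 2)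
    (fun q => by split <;> norm_num) (by decide +kernel) (by decide +kernel)
    (by decide +kernel) (by decide +kernel)

theorem fam_core (M : ℕ) (S : ℤ) (hS : 0 ≤ S) : Fam (Fin M × Fin 4) (Fin 5) (Fin 5)
    {x | ∃ q : ℕ, q < 100 ∧ ∃ r < M, x = (q : ℤ) * M + 1 + (r : ℤ) + (if q < 20 then 0 else 1) * S} :=
  fam_affine (look coreTab 4 5 5) M S hS 100 (fun q => if q < 20 then 0 else 1)
    (fun q => by split <;> norm_num) (by decide +kernel) (by decide +kernel)
    (by decide +kernel) (by decide +kernel)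

theorem unit_div (M : ℕ) (hM : 0 < M) (y : ℤ) (p p' : ℕ) (h1 : (p : ℤ) * M + 1 ≤ y)
    (h2 : y ≤ (p' : ℤ) * M) : ∃ q : ℕ, p ≤ q ∧ q < p' ∧ ∃ r < M, y = (q : ℤ) * M + 1 + (r : ℤ) := by
  have hp : (0 : ℤ) ≤ (p : ℤ) * M := by positivity
  obtain ⟨z, hz⟩ : ∃ z : ℕ, y = z + 1 := ⟨(y - 1).toNat, by lia⟩
  subst hz
  have h1' : p * M ≤ z := by zify; lia
  have h2' : z < p' * M := by zify; lia
  refine ⟨z / M, (Nat.le_div_iff_mul_le hM).2 h1', (Nat.div_lt_iff_lt_mul hM).2 h2', z % M,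
    Nat.mod_lt _ hM, ?_⟩
  have := Nat.div_add_mod' z M
  have h3 : ((z / M : ℕ) : ℤ) * M + ((z % M : ℕ) : ℤ) = z := by exact_mod_cast this
  linarith

/-- The main construction. -/
theorem fam_main (k a b : ℕ) (hk : 0 < k) (ha : 0 < a) (hb : 0 < b) :
    Fam (Fin k × Fin 4) (Fin 5 ⊕ Fin 4 × Fin a) (Fin 5 ⊕ Fin 4 × Fin b)
      (Set.Icc 1 ((4 * a + 5 : ℤ) * (4 * b + 5) * (4 * k))) := by
  obtain ⟨M, hM⟩ : ∃ M : ℕ, M = 2 * k * (a + b) := ⟨_, rfl⟩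
  obtain ⟨F, hF⟩ : ∃ F : ℕ, F = 4 * k * (a * b) := ⟨_, rfl⟩
  have hMpos : 0 < M := by rw [hM]; positivity
  have hab : 1 ≤ a * b := Nat.mul_pos ha hb
  have hkF : 4 * k ≤ F := by rw [hF]; exact Nat.le_mul_of_pos_right _ hab
  have htot : ((4 * a + 5 : ℤ) * (4 * b + 5) * (4 * k)) = 100 * k + 40 * M + 16 * F := by
    rw [hM, hF]; push_cast; ring
  rw [htot]
  have hcore := fam_core k (20 * k + 40 * M : ℤ) (by positivity)
  have hstrip := fam_strip M (20 * k : ℤ) (by positivity)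
  -- distribute the strips
  have e1 : (Fin k × Fin 4) × Fin a ⊕ (Fin k × Fin 4) × Fin b ≃ Fin M × Fin 2 :=
    Fintype.equivOfCardEq (by simp [hM]; ring)
  have hstrip' := hstrip.reindex e1 (Equiv.refl _) (Equiv.refl _)
  obtain ⟨S1, S2, hS12, hs1, hs2⟩ := hstrip'.split
  -- fillers
  let base : Fin F → Fin 4 → ℤ := fun f i =>
    if 4 * (f : ℕ) + (i : ℕ) < 5 * k then 20 * (k : ℤ) + 16 * M + 4 * (4 * (f : ℕ) + (i : ℕ))
    else 120 * (k : ℤ) + 40 * M + 4 * (4 * (f : ℕ) + (i : ℕ) - 5 * k)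
  have hbase : ∀ f i, 0 ≤ base f i := by
    intro f i
    dsimp only [base]
    split_ifs <;> lia
  have hfill := fam_fill base hbase
  have e2 : ((Fin k × Fin 4) × Fin b) × Fin a ≃ Fin F :=
    Fintype.equivOfCardEq (by simp [hF]; ring)
  have hfill' := ((hfill.reindex e2 (Equiv.refl _) (Equiv.refl _)).stack.transpose.stack).transpose
  refine (Fam.glue hcore hs2.stack.transpose hs1.stack hfill').mono ?_
  have hrun : ∀ j : ℕ, j < 4 * F → ∃ (f : Fin F) (i : Fin 4), 4 * (f : ℕ) + (i : ℕ) = j := by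
    intro j hj
    exact ⟨⟨j / 4, by lia⟩, ⟨j % 4, by lia⟩, by simp; lia⟩
  rintro x ⟨hx1, hx2⟩
  by_cases c1 : x ≤ 20 * k
  · left; left; left
    obtain ⟨q, hq1, hq2, r, hr, h⟩ := unit_div k hk x 0 20 (by simpa using hx1) (by simpa using c1)
    refine ⟨q, by lia, r, hr, ?_⟩
    rw [if_pos hq2, h]; ring
  by_cases c2 : x ≤ 20 * k + 16 * M
  · have : x ∈ S1 ∪ S2 := by
      apply hS12
      obtain ⟨q, hq1, hq2, r, hr, h⟩ := unit_div M hMpos (x - 20 * k) 0 16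
        (by push_cast; lia) (by push_cast; lia)
      refine ⟨q, by lia, r, hr, ?_⟩
      rw [if_pos hq2]; lia
    rcases this with h | h
    · left; right; exact h
    · left; left; right; exact h
  by_cases c3 : x ≤ 40 * k + 16 * M
  · right
    obtain ⟨f, i, hfi⟩ := hrun ((x - 1 - 20 * k - 16 * M) / 4).toNat (by lia)
    have hlt : 4 * (f : ℕ) + (i : ℕ) < 5 * k := by lia
    refine ⟨f, i, ?_⟩
    dsimp only [base]
    rw [if_pos hlt]
    constructor <;> lia
  by_cases c4 : x ≤ 40 * k + 40 * M
  · have : x ∈ S1 ∪ S2 := by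
      apply hS12
      obtain ⟨q, hq1, hq2, r, hr, h⟩ := unit_div M hMpos (x - 40 * k) 16 40
        (by push_cast; lia) (by push_cast; lia)
      refine ⟨q, by lia, r, hr, ?_⟩
      rw [if_neg (by lia)]; lia
    rcases this with h | h
    · left; right; exact h
    · left; left; right; exact h
  by_cases c5 : x ≤ 120 * k + 40 * M
  · left; left; left
    obtain ⟨q, hq1, hq2, r, hr, h⟩ := unit_div k hk (x - (20 * k + 40 * M)) 20 100
      (by push_cast; lia) (by push_cast; lia)
    refine ⟨q, by lia, r, hr, ?_⟩
    rw [if_neg (by lia)]; lia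
  · right
    obtain ⟨f, i, hfi⟩ := hrun (((x - 1 - 120 * k - 40 * M) / 4).toNat + 5 * k) (by lia)
    have hlt : ¬ 4 * (f : ℕ) + (i : ℕ) < 5 * k := by lia
    refine ⟨f, i, ?_⟩
    dsimp only [base]
    rw [if_neg hlt]
    constructor <;> lia

theorem exists_IHS_c0_m1_n1
    (m n c : ℕ) (hm : 0 < m) (hn : 0 < n) (hc : 0 < c)
    (hcmod : c % 4 = 0) (hmmod : m % 4 = 1) (hnmod : n % 4 = 1)
    (hm9 : 9 ≤ m) (hn9 : 9 ≤ n) :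
    ∃ A : Fin c → Matrix (Fin m) (Fin n) ℤ, IsIHS m n c A := by
  obtain ⟨k, rfl⟩ : ∃ k, c = 4 * k := ⟨c / 4, by lia⟩
  obtain ⟨a, rfl⟩ : ∃ a, m = 4 * a + 5 := ⟨(m - 5) / 4, by lia⟩
  obtain ⟨b, rfl⟩ : ∃ b, n = 4 * b + 5 := ⟨(n - 5) / 4, by lia⟩
  have h := fam_main k a b (by lia) (by lia) (by lia)
  apply Fam.toIHS
  have e1 : Fin (4 * k) ≃ Fin k × Fin 4 := Fintype.equivOfCardEq (by simp; ring)
  have e2 : Fin (4 * a + 5) ≃ Fin 5 ⊕ Fin 4 × Fin a := Fintype.equivOfCardEq (by simp; ring)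
  have e3 : Fin (4 * b + 5) ≃ Fin 5 ⊕ Fin 4 × Fin b := Fintype.equivOfCardEq (by simp; ring)
  have h' := h.reindex e1 e2 e3
  push_cast
  exact h'
end
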